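/- Let n be a natural number and p a prime with p ≥ n, and let λ_1 ≥ ⋯ ≥ λ_t be a partition of n. Let 𝓚 be a transversal for the isomorphism classes of nilpotent n-dimensional Lie algebras over ℤ/pℤ. For K ∈ 𝓚 let C(K,λ) be the set of (ℤ/pℤ)-linear endomorphisms σ of K such that σ^n = 0, the image of σ is contained in the center Z(K), σ(⁅x,y⁆) = ⁅σ(x), y⁆ for all x,y ∈ K, and the Jordan block sizes of σ are given by λ, i.e. dim ker(σ^i) = ∑_{j=1}^t min(λ_j, i) for all i ≥ 0. The group Aut_{Lie}(K) of Lie algebra automorphisms of K acts on C(K,λ) by conjugation. Then the number of isomorphism classes of groups P of order p^n of type (λ_1,…,λ_t) — meaning |{x ∈ P : x^{p^i}=1}| = p^{∑_j min(λ_j,i)} for all i — in which ⁅x,y⁆^p = 1 for all x,y ∈ P, equals the rational number ∑_{K ∈ 𝓚} ∑_{σ ∈ C(K,λ)} 1/|σ^{Aut_{Lie}(K)}|. -/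

import Mathlib

set_option synthInstance.maxHeartbeats 1000000

open scoped commutatorElement in
/-- Bundled groups `P` of order `p ^ n`, of type `(λ₁, …, λ_t)` (i.e. with
`|{x : x ^ (p ^ i) = 1}| = p ^ ∑ⱼ min (λⱼ) i` for all `i`), in which `⁅x, y⁆ ^ p = 1`. -/
def TypedGroup (p n t : ℕ) (lam : Fin t → ℕ) : Type 1 :=
  { q : Σ G : Type, Group G //
      letI := q.2
      Nat.card q.1 = p ^ n ∧
        (∀ i : ℕ, Nat.card {x : q.1 // x ^ p ^ i = 1} = p ^ (∑ j, min (lam j) i)) ∧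
        ∀ x y : q.1, ⁅x, y⁆ ^ p = 1 }

/-- Group isomorphism between two bundled groups. -/
def typedGroupIsoRel (p n t : ℕ) (lam : Fin t → ℕ)
    (q₁ q₂ : TypedGroup p n t lam) : Prop :=
  letI := q₁.1.2; letI := q₂.1.2
  Nonempty (q₁.1.1 ≃* q₂.1.1)

/-- For an `n`-dimensional Lie algebra `K` over `ℤ/pℤ` and a partition `λ` of `n`, the set
`C(K, λ)` of linear endomorphisms `σ` with `σ ^ n = 0`, image contained in the centre `Z(K)`,
`σ⁅x, y⁆ = ⁅σ x, y⁆`, and Jordan block sizes given by `λ`. -/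
def CSet (p n t : ℕ) (lam : Fin t → ℕ) (K : Type) [LieRing K] [LieAlgebra (ZMod p) K] :
    Set (Module.End (ZMod p) K) :=
  {σ | σ ^ n = 0 ∧ (∀ x y : K, ⁅σ x, y⁆ = 0) ∧ (∀ x y : K, σ ⁅x, y⁆ = ⁅σ x, y⁆) ∧
    ∀ i : ℕ, Module.finrank (ZMod p) (LinearMap.ker (σ ^ i)) = ∑ j, min (lam j) i}

/-- The orbit `σ^{Aut_Lie(K)}` of `σ` under conjugation by Lie algebra automorphisms of `K`. -/
def lieAutOrbit (p : ℕ) (K : Type) [LieRing K] [LieAlgebra (ZMod p) K]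
    (σ : Module.End (ZMod p) K) : Set (Module.End (ZMod p) K) :=
  {τ | ∃ α : K ≃ₗ⁅ZMod p⁆ K, ∀ x : K, τ x = α (σ (α.symm x))}

/-!
For `n ≤ p`, a group of order `p ^ n` has class less than `p`, so it is the group of a nilpotent Lie
ring `L` under the Lazard correspondence, whose product is the truncated Baker–Campbell–Hausdorff
series. That every such group arises follows by induction along cyclic extensions, since the
logarithm of the automorphism defining the extension is a derivation. Powers of group elements are
multiples in `L`, so the type of the group is the type of the additive group of `L`, and all
commutators have order dividing `p` if and only if `p • ⁅x, y⁆ = 0`. In that case multiplication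
by `p` is an endomorphism of `L` with central image which kills all brackets.

Expand the elements of `L` in digits with respect to a basis of its additive group and replace the
addition with carries by addition without carries. This turns `L` into an algebra `K` over `ℤ/pℤ`
and multiplication by `p` into a nilpotent endomorphism `σ` of `K`. Brackets only depend on the
arguments modulo the image of `p` and lie in its kernel. No carries occur in the quotient by the
image or in the kernel, so brackets are bilinear for both additions. Although the bijection is not
additive, isomorphisms of the Lie rings and isomorphisms of the pairs `(K, σ)` can be corrected into
one another. Hence isomorphism classes of groups correspond to the orbits of the groups `Aut K` on
the sets `C(K, λ)`, and each orbit contributes `1` to the sum.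
-/

namespace Lazard

open Finset

section LazardCorrespondence

attribute [local instance 100] LieRing.ofAssociativeRing

/-! ### The truncated exponential -/

section Scalars

/-- A natural number representing the inverse of `a` modulo `m`. -/
def natInv (m a : ℕ) : ℕ := ((a : ZMod m)⁻¹).val

lemma natInv_mul_modEq {m a : ℕ} [NeZero m] (h : a.Coprime m) : natInv m a * a ≡ 1 [MOD m] := by
  rw [← ZMod.natCast_eq_natCast_iff, natInv, Nat.cast_mul, ZMod.natCast_zmod_val, mul_comm,
    ZMod.coe_mul_inv_eq_one a h, Nat.cast_one]

lemma natInv_one_modEq {m : ℕ} [NeZero m] : natInv m 1 ≡ 1 [MOD m] := by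
  simpa using natInv_mul_modEq (Nat.coprime_one_left m)

/-- The coefficient identity behind `exp (a + b) = exp a * exp b`. -/
lemma natInv_factorial_mul_choose_modEq {m i j : ℕ} [NeZero m]
    (h : (i + j).factorial.Coprime m) :
    natInv m (i + j).factorial * (i + j).choose i ≡
      natInv m i.factorial * natInv m j.factorial [MOD m] := by
  have coprime_of_le : ∀ {k}, k ≤ i + j → k.factorial.Coprime m := fun hk =>
    h.of_dvd_left (Nat.factorial_dvd_factorial hk)
  have hi := natInv_mul_modEq (coprime_of_le (Nat.le_add_right i j))
  have hj := natInv_mul_modEq (coprime_of_le (Nat.le_add_left j i))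
  have hij := natInv_mul_modEq h
  have hchoose := Nat.add_choose_mul_factorial_mul_factorial i j
  rw [← Nat.choose_symm_add] at hchoose
  generalize natInv m (i + j).factorial = c at hij ⊢
  rw [← hchoose] at hij
  rw [← ZMod.natCast_eq_natCast_iff] at hi hj hij ⊢
  push_cast at hi hj hij ⊢
  linear_combination (natInv m i.factorial * natInv m j.factorial : ZMod m) * hij -
    (c * (i + j).choose i : ZMod m) * ((natInv m j.factorial * j.factorial : ZMod m) * hi + hj)

lemma nsmul_eq_nsmul_of_modEq {M : Type*} [AddGroup M] {m a b : ℕ} {x : M} (hx : m • x = 0)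
    (h : a ≡ b [MOD m]) : a • x = b • x :=
  nsmul_eq_nsmul_iff_modEq.2 (h.of_dvd (addOrderOf_dvd_of_nsmul_eq_zero hx))

end Scalars

section TruncExp

variable {p N : ℕ} {A M M' : Type*} [Ring A] [AddCommGroup M] [Module A M]

/-- The exponential series modulo `p ^ N`, truncated before degree `p` so that all denominators
are invertible. -/
def truncExp (p N : ℕ) (z : A) : A := ∑ k ∈ range p, natInv (p ^ N) k.factorial • z ^ k

lemma truncExp_smul (z : A) (m : M) :
    truncExp p N z • m = ∑ k ∈ range p, natInv (p ^ N) k.factorial • z ^ k • m := by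
  simp only [truncExp, sum_smul, smul_assoc]

lemma truncExp_smul_mem {S : AddSubgroup M} {z : A} (hz : ∀ x ∈ S, z • x ∈ S) {x : M}
    (hx : x ∈ S) : truncExp p N z • x ∈ S := by
  have pow_smul_mem : ∀ k : ℕ, z ^ k • x ∈ S := by
    intro k
    induction k with
    | zero => simpa using hx
    | succ k ih => rw [pow_succ', mul_smul]; exact hz _ ih
  rw [truncExp_smul]
  exact sum_mem fun k _ => nsmul_mem (pow_smul_mem k) _

lemma map_truncExp_smul [AddCommGroup M'] {A' : Type*} [Ring A'] [Module A' M'] (f : M →+ M')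
    {z : A} {z' : A'} (h : ∀ x, f (z • x) = z' • f x) (x : M) :
    f (truncExp p N z • x) = truncExp p N z' • f x := by
  have map_pow_smul : ∀ k : ℕ, f (z ^ k • x) = z' ^ k • f x := by
    intro k
    induction k with
    | zero => simp
    | succ k ih => rw [pow_succ', pow_succ', mul_smul, mul_smul, h, ih]
  simp only [truncExp_smul, map_sum, map_nsmul, map_pow_smul]

lemma sum_range_antidiagonal_eq_of_forall_le {B : Type*} [AddCommMonoid B] {n : ℕ} (f : ℕ → ℕ → B)
    (hf : ∀ i j, n ≤ i + j → f i j = 0) :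
    ∑ k ∈ range n, ∑ x ∈ antidiagonal k, f x.1 x.2 = ∑ i ∈ range n, ∑ j ∈ range n, f i j := by
  rw [← sum_product', sum_sigma']
  refine sum_bij_ne_zero (fun x _ _ => x.2) ?_ ?_ ?_ ?_
  · intro x hx _
    simp only [mem_sigma, mem_range, HasAntidiagonal.mem_antidiagonal, mem_product] at hx ⊢
    lia
  · rintro ⟨k, x⟩ hx _ ⟨l, y⟩ hy _ (rfl : x = y)
    simp only [mem_sigma, HasAntidiagonal.mem_antidiagonal] at hx hy
    obtain rfl := hx.2.symm.trans hy.2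
    rfl
  · intro x _ hx
    refine ⟨⟨x.1 + x.2, x⟩, ?_, hx, rfl⟩
    simpa using lt_of_not_ge fun h => hx (hf _ _ h)
  · exact fun _ _ _ => rfl

variable [Fact p.Prime]

lemma coprime_factorial_pow {k : ℕ} (hk : k < p) : k.factorial.Coprime (p ^ N) := by
  have hp : p.Prime := Fact.out
  refine ((hp.coprime_iff_not_dvd.2 fun h => ?_).symm).pow_right N
  exact hk.not_ge (hp.dvd_factorial.1 h)

lemma truncExp_smul_eq (z : A) {m : M} (hm : p ^ N • m = 0) :
    truncExp p N z • m = m + z • m +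
      ∑ k ∈ Ico 2 p, natInv (p ^ N) k.factorial • z ^ k • m := by
  have hp := (Fact.out : p.Prime).two_le
  have hzm : p ^ N • z • m = 0 := by rw [smul_comm, hm, smul_zero]
  rw [truncExp_smul, range_eq_Ico, ← sum_Ico_consecutive _ (Nat.zero_le 2) hp]
  simp [sum_range_succ, nsmul_eq_nsmul_of_modEq hm natInv_one_modEq,
    nsmul_eq_nsmul_of_modEq hzm natInv_one_modEq]

lemma truncExp_smul_sub_mem {S : AddSubgroup M} {z : A} {x : M} (hx : p ^ N • x = 0)
    (hzx : z • x ∈ S) (hz : ∀ y ∈ S, z • y ∈ S) : truncExp p N z • x - x ∈ S := by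
  have pow_smul_mem : ∀ k : ℕ, z ^ (k + 1) • x ∈ S := by
    intro k
    induction k with
    | zero => simpa using hzx
    | succ k ih => rw [pow_succ', mul_smul]; exact hz _ ih
  rw [truncExp_smul_eq z hx, add_assoc, add_sub_cancel_left]
  refine add_mem hzx (sum_mem fun k hk => nsmul_mem ?_ _)
  obtain ⟨l, rfl⟩ := Nat.exists_eq_add_of_le' (one_le_two.trans (mem_Ico.1 hk).1)
  exact pow_smul_mem l

lemma truncExp_smul_eq_add {z : A} {m : M} (hm : p ^ N • m = 0) (hz : z • z • m = 0) :
    truncExp p N z • m = m + z • m := by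
  rw [truncExp_smul_eq z hm, sum_eq_zero, add_zero]
  intro k hk
  obtain ⟨l, rfl⟩ := Nat.exists_eq_add_of_le' (mem_Ico.1 hk).1
  rw [pow_add, pow_two, mul_smul, mul_smul, hz, smul_zero, smul_zero]

lemma truncExp_zero_smul {m : M} (hm : p ^ N • m = 0) : truncExp p N (0 : A) • m = m := by
  simpa using truncExp_smul_eq_add (z := (0 : A)) hm (by simp)

lemma truncExp_add_smul {a b : A} (hab : Commute a b) {m : M} (hm : p ^ N • m = 0)
    (h : ∀ i j, p ≤ i + j → a ^ i • b ^ j • m = 0) :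
    truncExp p N (a + b) • m = truncExp p N a • truncExp p N b • m := by
  have htors : ∀ i j : ℕ, p ^ N • a ^ i • b ^ j • m = 0 := fun i j => by
    rw [smul_comm, smul_comm (p ^ N) (b ^ j), hm, smul_zero, smul_zero]
  obtain ⟨term, hterm⟩ : ∃ f : ℕ → ℕ → M, ∀ i j, f i j =
    (natInv (p ^ N) i.factorial * natInv (p ^ N) j.factorial) • a ^ i • b ^ j • m :=
    ⟨_, fun _ _ => rfl⟩
  calc truncExp p N (a + b) • m
      = ∑ k ∈ range p, ∑ x ∈ antidiagonal k, term x.1 x.2 := by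
        rw [truncExp_smul]
        refine sum_congr rfl fun k hk => ?_
        rw [hab.add_pow', sum_smul, smul_sum]
        refine sum_congr rfl fun x hx => ?_
        obtain rfl := HasAntidiagonal.mem_antidiagonal.1 hx
        rw [smul_assoc, ← mul_smul, mul_smul (a ^ x.1), hterm]
        exact nsmul_eq_nsmul_of_modEq (htors _ _)
          (natInv_factorial_mul_choose_modEq (coprime_factorial_pow (mem_range.1 hk)))
    _ = ∑ i ∈ range p, ∑ j ∈ range p, term i j :=
        sum_range_antidiagonal_eq_of_forall_le term fun i j hij => by
          rw [hterm, h i j hij, smul_zero]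
    _ = truncExp p N a • truncExp p N b • m := by
        rw [truncExp_smul, truncExp_smul]
        refine sum_congr rfl fun i _ => ?_
        rw [smul_sum, smul_sum]
        refine sum_congr rfl fun j _ => ?_
        rw [hterm, mul_smul, smul_comm (a ^ i) (natInv _ _)]

end TruncExp

section AdExp

lemma truncExp_mulLeft_apply {A : Type*} [Ring A] (p N : ℕ) (z a : A) :
    truncExp p N (LinearMap.mulLeft ℤ z) a = truncExp p N z * a := by
  simp [truncExp, LinearMap.sum_apply, sum_mul, mul_assoc]

lemma truncExp_mulRight_apply {A : Type*} [Ring A] (p N : ℕ) (z a : A) :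
    truncExp p N (LinearMap.mulRight ℤ z) a = a * truncExp p N z := by
  simp [truncExp, LinearMap.sum_apply, mul_sum, Nat.cast_comm, mul_assoc]

variable {p N : ℕ} {L L' : Type*} [LieRing L] [LieRing L']

/-- The truncated exponential of the inner derivation `ad z`. -/
def adExp (p N : ℕ) (z : L) : Module.End ℤ L := truncExp p N (LieAlgebra.ad ℤ L z)

lemma adExp_mem {S : AddSubgroup L} {z : L} (hz : ∀ x ∈ S, ⁅z, x⁆ ∈ S) {x : L} (hx : x ∈ S) :
    adExp p N z x ∈ S :=
  truncExp_smul_mem (z := LieAlgebra.ad ℤ L z) hz hx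

lemma map_adExp (f : L →ₗ⁅ℤ⁆ L') (z x : L) : f (adExp p N z x) = adExp p N (f z) (f x) :=
  map_truncExp_smul (z := LieAlgebra.ad ℤ L z) (z' := LieAlgebra.ad ℤ L' (f z))
    (f : L →ₗ[ℤ] L').toAddMonoidHom (fun y => f.map_lie z y) x

variable [Fact p.Prime]

lemma adExp_sub_mem {S : AddSubgroup L} {z x : L} (hx : p ^ N • x = 0) (hzx : ⁅z, x⁆ ∈ S)
    (hz : ∀ y ∈ S, ⁅z, y⁆ ∈ S) : adExp p N z x - x ∈ S :=
  truncExp_smul_sub_mem (z := LieAlgebra.ad ℤ L z) hx hzx hz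

lemma adExp_eq_add {z x : L} (hx : p ^ N • x = 0) (hz : ⁅z, ⁅z, x⁆⁆ = 0) :
    adExp p N z x = x + ⁅z, x⁆ :=
  truncExp_smul_eq_add (z := LieAlgebra.ad ℤ L z) hx hz

end AdExp

/-- A multiplicative filtration of length `p` on a ring of characteristic dividing `p ^ N`. -/
structure RingFiltration (p N : ℕ) (A : Type*) [Ring A] where
  F : ℕ → AddSubgroup A
  one_mem : 1 ∈ F 0
  mul_mem : ∀ {i j : ℕ} {a b : A}, a ∈ F i → b ∈ F j → a * b ∈ F (i + j)
  succ_le : ∀ i, F (i + 1) ≤ F i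
  eq_bot : F p = ⊥
  nsmul_eq_zero : ∀ a : A, p ^ N • a = 0

namespace RingFiltration

variable {p N : ℕ} {A : Type*} [Ring A] (Φ : RingFiltration p N A)

lemma antitone : Antitone Φ.F := antitone_nat_of_succ_le Φ.succ_le

lemma mem_of_le {i j : ℕ} (h : i ≤ j) {a : A} (ha : a ∈ Φ.F j) : a ∈ Φ.F i := Φ.antitone h ha

lemma eq_zero {i : ℕ} (h : p ≤ i) {a : A} (ha : a ∈ Φ.F i) : a = 0 := by
  simpa [Φ.eq_bot] using Φ.antitone h ha

lemma mul_mem_left {k : ℕ} {a b : A} (ha : a ∈ Φ.F 0) (hb : b ∈ Φ.F k) : a * b ∈ Φ.F k := by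
  simpa using Φ.mul_mem ha hb

lemma mul_mem_right {k : ℕ} {a b : A} (ha : a ∈ Φ.F k) (hb : b ∈ Φ.F 0) : a * b ∈ Φ.F k :=
  Φ.mul_mem ha hb

lemma mul_mem_succ_left {k : ℕ} {a b : A} (ha : a ∈ Φ.F 1) (hb : b ∈ Φ.F k) :
    a * b ∈ Φ.F (k + 1) :=
  add_comm 1 k ▸ Φ.mul_mem ha hb

lemma pow_mem {a : A} (ha : a ∈ Φ.F 1) (k : ℕ) : a ^ k ∈ Φ.F k := by
  induction k with
  | zero => simpa using Φ.one_mem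
  | succ k ih => rw [pow_succ]; exact Φ.mul_mem ih ha

lemma mem_zero_of_sub_one_mem {a : A} (ha : a - 1 ∈ Φ.F 1) : a ∈ Φ.F 0 := by
  simpa using add_mem (Φ.succ_le 0 ha) Φ.one_mem

lemma pow_sub_pow_mem {u v : A} {k : ℕ} (hu : u ∈ Φ.F 1) (hv : v ∈ Φ.F 1) (h : u - v ∈ Φ.F k)
    (j : ℕ) : u ^ (j + 1) - v ^ (j + 1) ∈ Φ.F (k + j) := by
  induction j with
  | zero => simpa using h
  | succ j ih =>
    have hsplit : u ^ (j + 1 + 1) - v ^ (j + 1 + 1) =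
        u ^ (j + 1) * (u - v) + (u ^ (j + 1) - v ^ (j + 1)) * v := by
      rw [pow_succ u (j + 1), pow_succ v (j + 1)]
      noncomm_ring
    rw [hsplit]
    refine add_mem ?_ (Φ.mul_mem (i := k + j) ih hv)
    rw [add_comm k]
    exact Φ.mul_mem (Φ.pow_mem hu _) h

section Exp

variable [Fact p.Prime]

include Φ in
lemma exp_zero : truncExp p N (0 : A) = 1 := by
  simpa using truncExp_zero_smul (A := A) (Φ.nsmul_eq_zero 1)

lemma exp_sub_one_mem {u : A} (hu : u ∈ Φ.F 1) : truncExp p N u - 1 ∈ Φ.F 1 := by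
  simpa using truncExp_smul_sub_mem (z := u) (Φ.nsmul_eq_zero 1) (by simpa using hu)
    fun y hy => Φ.succ_le 1 (Φ.mul_mem hu hy)

lemma exp_mem {u : A} (hu : u ∈ Φ.F 1) : truncExp p N u ∈ Φ.F 0 :=
  Φ.mem_zero_of_sub_one_mem (Φ.exp_sub_one_mem hu)

lemma exp_sub_exp_sub_mem {u v : A} {k : ℕ} (hu : u ∈ Φ.F 1) (hv : v ∈ Φ.F 1)
    (h : u - v ∈ Φ.F k) : truncExp p N u - truncExp p N v - (u - v) ∈ Φ.F (k + 1) := by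
  have exp_eq : ∀ w : A, truncExp p N w =
      1 + w + ∑ k ∈ Ico 2 p, natInv (p ^ N) k.factorial • w ^ k := fun w => by
    simpa using truncExp_smul_eq w (Φ.nsmul_eq_zero 1)
  have hsplit : truncExp p N u - truncExp p N v - (u - v) =
      ∑ k ∈ Ico 2 p, natInv (p ^ N) k.factorial • (u ^ k - v ^ k) := by
    simp only [exp_eq, smul_sub, sum_sub_distrib]
    abel
  rw [hsplit]
  refine sum_mem fun j hj => nsmul_mem ?_ _
  obtain ⟨l, rfl⟩ := Nat.exists_eq_add_of_le' (mem_Ico.1 hj).1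
  exact Φ.mem_of_le (by lia) (Φ.pow_sub_pow_mem hu hv h (l + 1))

lemma exp_injective {u v : A} (hu : u ∈ Φ.F 1) (hv : v ∈ Φ.F 1)
    (h : truncExp p N u = truncExp p N v) : u = v := by
  have sub_mem_F : ∀ k, u - v ∈ Φ.F (k + 1) := by
    intro k
    induction k with
    | zero => exact sub_mem hu hv
    | succ k ih =>
      have := Φ.exp_sub_exp_sub_mem hu hv ih
      rwa [h, sub_self, zero_sub, neg_mem_iff] at this
  exact sub_eq_zero.1 (Φ.eq_zero p.le_succ (sub_mem_F p))

lemma exp_add {a b : A} (ha : a ∈ Φ.F 1) (hb : b ∈ Φ.F 1) (hab : Commute a b) :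
    truncExp p N (a + b) = truncExp p N a * truncExp p N b := by
  simpa using truncExp_add_smul hab (Φ.nsmul_eq_zero 1) fun i j hij => by
    simpa using Φ.eq_zero hij (Φ.mul_mem (Φ.pow_mem ha i) (Φ.pow_mem hb j))

lemma exp_neg_mul {a : A} (ha : a ∈ Φ.F 1) : truncExp p N (-a) * truncExp p N a = 1 := by
  rw [← Φ.exp_add (neg_mem ha) ha (Commute.refl a).neg_left, neg_add_cancel, Φ.exp_zero]

lemma exp_mul_neg {a : A} (ha : a ∈ Φ.F 1) : truncExp p N a * truncExp p N (-a) = 1 := by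
  simpa using Φ.exp_neg_mul (neg_mem ha)

/-- The truncated exponential as a unit. -/
def expUnit {a : A} (ha : a ∈ Φ.F 1) : Aˣ :=
  ⟨truncExp p N a, truncExp p N (-a), Φ.exp_mul_neg ha, Φ.exp_neg_mul ha⟩

lemma exp_nsmul {a : A} (ha : a ∈ Φ.F 1) (k : ℕ) :
    truncExp p N (k • a) = truncExp p N a ^ k := by
  induction k with
  | zero => rw [zero_smul, Φ.exp_zero, pow_zero]
  | succ k ih =>
    rw [add_smul, one_smul, Φ.exp_add (nsmul_mem ha k) ha ((Commute.refl a).smul_left k), ih,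
      pow_succ]

lemma exp_mul_mul_exp_neg {z a : A} (hz : z ∈ Φ.F 1) (ha : a ∈ Φ.F 0) :
    truncExp p N z * a * truncExp p N (-z) = adExp p N z a := by
  have had : LieAlgebra.ad ℤ A z = LinearMap.mulLeft ℤ z + LinearMap.mulRight ℤ (-z) := by
    ext a
    simp [Ring.lie_def, sub_eq_add_neg]
  have hadd := truncExp_add_smul (a := LinearMap.mulLeft ℤ z) (b := LinearMap.mulRight ℤ (-z))
    (LinearMap.commute_mulLeft_right z (-z)) (Φ.nsmul_eq_zero a) fun i j hij => by
      simpa only [LinearMap.pow_mulLeft, LinearMap.pow_mulRight, Module.End.smul_def,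
        LinearMap.mulLeft_apply, LinearMap.mulRight_apply, mul_assoc] using
        Φ.eq_zero (i := i + 0 + j) hij
          (Φ.mul_mem (Φ.mul_mem (Φ.pow_mem hz i) ha) (Φ.pow_mem (neg_mem hz) j))
  rw [adExp, had]
  simpa [truncExp_mulLeft_apply, truncExp_mulRight_apply, mul_assoc] using hadd.symm

end Exp

/-- An additive subgroup `𝔫` of `F 1` closed under the bracket and stable under an Euler element
`ε`, i.e. one with `⁅ε, a⁆ ≡ k • a` for `a ∈ F k`. -/
structure IsEulerStable (ε : A) (𝔫 : AddSubgroup A) : Prop where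
  euler_mem : ε ∈ Φ.F 0
  euler_lie_sub_mem : ∀ {k : ℕ} {a : A}, a ∈ Φ.F k → ⁅ε, a⁆ - k • a ∈ Φ.F (k + 1)
  le : 𝔫 ≤ Φ.F 1
  lie_mem : ∀ {a b : A}, a ∈ 𝔫 → b ∈ 𝔫 → ⁅a, b⁆ ∈ 𝔫
  euler_lie_mem : ∀ {a : A}, a ∈ 𝔫 → ⁅ε, a⁆ ∈ 𝔫

namespace IsEulerStable

variable {Φ} {ε : A} {𝔫 : AddSubgroup A} (h : Φ.IsEulerStable ε 𝔫)

/-- The unipotent units normalising `𝔫` and fixing `ε` modulo `𝔫`. For such a unit `u`, the element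
`u * ε * u⁻¹ - ε` of `𝔫` plays the role of the logarithmic derivative of `u`. -/
def units (_ : Φ.IsEulerStable ε 𝔫) : Submonoid Aˣ where
  carrier := {u | (u : A) - 1 ∈ Φ.F 1 ∧ (↑u⁻¹ : A) ∈ Φ.F 0 ∧
    (u * ε * ↑u⁻¹ - ε : A) ∈ 𝔫 ∧ ∀ a ∈ 𝔫, (u * a * ↑u⁻¹ : A) ∈ 𝔫}
  one_mem' := by simp [zero_mem, Φ.one_mem]
  mul_mem' := by
    rintro u v ⟨hu, hu', huε, hun⟩ ⟨hv, hv', hvε, hvn⟩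
    refine ⟨?_, ?_, ?_, fun a ha => ?_⟩
    · have hsplit : (↑(u * v) : A) - 1 = u * (v - 1) + (u - 1) := by push_cast; noncomm_ring
      rw [hsplit]
      exact add_mem (Φ.mul_mem_left (Φ.mem_zero_of_sub_one_mem hu) hv) hu
    · rw [mul_inv_rev, Units.val_mul]
      exact Φ.mul_mem_left hv' hu'
    · have hsplit : (↑(u * v) * ε * ↑(u * v)⁻¹ - ε : A) =
          u * (v * ε * ↑v⁻¹ - ε) * ↑u⁻¹ + (u * ε * ↑u⁻¹ - ε) := by
        rw [mul_inv_rev]; push_cast; noncomm_ring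
      rw [hsplit]
      exact add_mem (hun _ hvε) huε
    · have hassoc : (↑(u * v) * a * ↑(u * v)⁻¹ : A) = u * (v * a * ↑v⁻¹) * ↑u⁻¹ := by
        rw [mul_inv_rev]; push_cast; noncomm_ring
      rw [hassoc]
      exact hun _ (hvn a ha)

include h in
lemma conj_sub_add_mem {u : Aˣ} {k : ℕ} (hk : 1 ≤ k) (hu : (u : A) - 1 ∈ Φ.F k)
    (hu' : (↑u⁻¹ : A) ∈ Φ.F 0) : (u * ε * ↑u⁻¹ - ε + k • (u - 1) : A) ∈ Φ.F (k + 1) := by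
  have hsplit : (u * ε * ↑u⁻¹ - ε + k • (u - 1) : A) =
      k • ((u - 1) * (u - 1) * ↑u⁻¹) - (⁅ε, (u : A) - 1⁆ - k • (u - 1)) * ↑u⁻¹ := by
    have h1 : ((u - 1) * (u - 1) * ↑u⁻¹ : A) = (u - 1) - (u - 1) * ↑u⁻¹ := by
      rw [mul_sub, sub_mul, mul_assoc (u - 1 : A), Units.mul_inv, mul_one]
    have h2 : (u * ε * ↑u⁻¹ - ε : A) = -(⁅ε, (u : A) - 1⁆ * ↑u⁻¹) := by
      rw [Ring.lie_def, mul_sub, sub_mul (u : A), mul_one, one_mul, sub_sub_sub_cancel_right,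
        sub_mul, mul_assoc ε, Units.mul_inv, mul_one, neg_sub]
    rw [h1, h2, smul_sub k (u - 1 : A), sub_mul ⁅ε, (u : A) - 1⁆, smul_mul_assoc]
    abel
  rw [hsplit]
  refine sub_mem (nsmul_mem (Φ.mem_of_le (by lia) (Φ.mul_mem_right (Φ.mul_mem hu hu) hu')) _)
    (Φ.mul_mem_right (h.euler_lie_sub_mem hu) hu')

variable [Fact p.Prime]

lemma expUnit_mem_units {z : A} (hz : z ∈ 𝔫) : Φ.expUnit (h.le hz) ∈ h.units := by
  have hz1 := h.le hz
  refine ⟨Φ.exp_sub_one_mem hz1, Φ.exp_mem (neg_mem hz1), ?_, fun a ha => ?_⟩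
  · change truncExp p N z * ε * truncExp p N (-z) - ε ∈ 𝔫
    rw [Φ.exp_mul_mul_exp_neg hz1 h.euler_mem]
    refine adExp_sub_mem (Φ.nsmul_eq_zero ε) ?_ fun y hy => h.lie_mem hz hy
    rw [← lie_skew]
    exact neg_mem (h.euler_lie_mem hz)
  · change truncExp p N z * a * truncExp p N (-z) ∈ 𝔫
    rw [Φ.exp_mul_mul_exp_neg hz1 (Φ.succ_le 0 (h.le ha))]
    exact adExp_mem (fun y hy => h.lie_mem hz hy) ha

/-- One step of the approximation of the logarithm of `g`: the correction to `z` is read off from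
the logarithmic derivative of `exp (-z) * g`. -/
lemma exists_exp_sub_mem_succ {g : Aˣ} (hg : g ∈ h.units) {k : ℕ} (hk : 1 ≤ k) (hkp : k < p) {z : A}
    (hz : z ∈ 𝔫) (hgz : (g : A) - truncExp p N z ∈ Φ.F k) :
    ∃ z' ∈ 𝔫, (g : A) - truncExp p N z' ∈ Φ.F (k + 1) := by
  set u : Aˣ := Φ.expUnit (h.le (neg_mem hz)) * g with hu
  obtain ⟨-, hu', huε, -⟩ : u ∈ h.units := h.units.mul_mem (h.expUnit_mem_units (neg_mem hz)) hg
  have hexp := Φ.exp_sub_one_mem (h.le hz)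
  have huk : (u : A) - 1 ∈ Φ.F k := by
    have hsplit : (u : A) - 1 = truncExp p N (-z) * (g - truncExp p N z) := by
      rw [mul_sub, Φ.exp_neg_mul (h.le hz)]; rfl
    rw [hsplit]
    exact Φ.mul_mem_left (Φ.exp_mem (neg_mem (h.le hz))) hgz
  set w : A := -(natInv (p ^ N) k • (u * ε * ↑u⁻¹ - ε))
  have hw : w ∈ 𝔫 := neg_mem (nsmul_mem huε _)
  have hwu : (u : A) - 1 - w ∈ Φ.F (k + 1) := by
    have hcop : k.Coprime (p ^ N) :=
      ((Nat.coprime_of_lt_prime (by lia) hkp Fact.out).symm).pow_right N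
    have hinv : natInv (p ^ N) k • k • ((u : A) - 1) = u - 1 := by
      rw [smul_smul, nsmul_eq_nsmul_of_modEq (Φ.nsmul_eq_zero _) (natInv_mul_modEq hcop), one_smul]
    have hmem := nsmul_mem (h.conj_sub_add_mem hk huk hu') (natInv (p ^ N) k)
    rw [smul_add, hinv] at hmem
    convert hmem using 1
    simp only [w]
    abel
  have hwk : w ∈ Φ.F k := by simpa using sub_mem huk (Φ.succ_le k hwu)
  refine ⟨z + w, add_mem hz hw, ?_⟩
  have hstep := Φ.exp_sub_exp_sub_mem (h.le (add_mem hz hw)) (h.le hz) (k := k) (by simpa using hwk)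
  have hg' : (g : A) = truncExp p N z * u := by
    rw [hu, Units.val_mul, ← mul_assoc]
    exact (by rw [Φ.exp_mul_neg (h.le hz), one_mul] : (g : A) = _ * _ * g)
  have hsplit : (g : A) - truncExp p N (z + w) = (truncExp p N z - 1) * (u - 1) +
      (u - 1 - w) - (truncExp p N (z + w) - truncExp p N z - (z + w - z)) := by
    rw [hg']
    noncomm_ring
  rw [hsplit]
  exact sub_mem (add_mem (Φ.mul_mem_succ_left hexp huk) hwu) hstep

lemma exists_eq_exp {g : Aˣ} (hg : g ∈ h.units) : ∃ z ∈ 𝔫, (g : A) = truncExp p N z := by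
  have approx : ∀ k, k < p → ∃ z ∈ 𝔫, (g : A) - truncExp p N z ∈ Φ.F (k + 1) := by
    intro k hk
    induction k with
    | zero => exact ⟨0, zero_mem _, by rw [Φ.exp_zero, zero_add]; exact hg.1⟩
    | succ k ih =>
      obtain ⟨z, hz, hgz⟩ := ih (by lia)
      exact h.exists_exp_sub_mem_succ hg (by lia) hk hz hgz
  have hp := (Fact.out : p.Prime).pos
  obtain ⟨z, hz, hgz⟩ := approx (p - 1) (by lia)
  exact ⟨z, hz, sub_eq_zero.1 (Φ.eq_zero (by lia) hgz)⟩

include h in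
theorem exists_exp_eq_exp_mul_exp {x y : A} (hx : x ∈ 𝔫) (hy : y ∈ 𝔫) :
    ∃ z ∈ 𝔫, truncExp p N x * truncExp p N y = truncExp p N z :=
  h.exists_eq_exp (h.units.mul_mem (h.expUnit_mem_units hx) (h.expUnit_mem_units hy))

end IsEulerStable

end RingFiltration

/-! ### The Baker–Campbell–Hausdorff element -/

theorem freeLieAlgebra_induction {R X : Type*} [CommRing R] {P : FreeLieAlgebra R X → Prop}
    (zero : P 0) (add : ∀ x y, P x → P y → P (x + y)) (smul : ∀ (r : R) x, P x → P (r • x))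
    (lie : ∀ x y, P x → P y → P ⁅x, y⁆) (of : ∀ i, P (FreeLieAlgebra.of R i))
    (x : FreeLieAlgebra R X) : P x := by
  let S : LieSubalgebra R (FreeLieAlgebra R X) :=
    { carrier := {x | P x}
      add_mem' := add _ _
      zero_mem' := zero
      smul_mem' := smul
      lie_mem' := lie _ _ }
  let f : FreeLieAlgebra R X →ₗ⁅R⁆ S := FreeLieAlgebra.lift R fun i => ⟨.of R i, of i⟩
  have hf : S.incl.comp f = LieHom.id := FreeLieAlgebra.hom_ext fun i => by simp [f]
  have hx : (f x : FreeLieAlgebra R X) = x := LieHom.congr_fun hf x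
  exact hx ▸ (f x).2

section Lift

variable {X L L' : Type*} [LieRing L] [LieRing L']

lemma map_freeLieAlgebra_lift (f : L →ₗ⁅ℤ⁆ L') (c : X → L) (h : FreeLieAlgebra ℤ X) :
    f (FreeLieAlgebra.lift ℤ c h) = FreeLieAlgebra.lift ℤ (fun i => f (c i)) h := by
  have hcomp : f.comp (FreeLieAlgebra.lift ℤ c) = FreeLieAlgebra.lift ℤ fun i => f (c i) :=
    FreeLieAlgebra.hom_ext fun i => by simp
  exact LieHom.congr_fun hcomp h

lemma freeLieAlgebra_lift_mem {S : AddSubgroup L} (hS : ∀ x ∈ S, ∀ y ∈ S, ⁅x, y⁆ ∈ S)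
    {c : X → L} (hc : ∀ i, c i ∈ S) (h : FreeLieAlgebra ℤ X) : FreeLieAlgebra.lift ℤ c h ∈ S := by
  induction h using freeLieAlgebra_induction with
  | zero => simp
  | add x y hx hy => rw [map_add]; exact add_mem hx hy
  | smul k x hx => rw [map_smul]; exact zsmul_mem hx k
  | lie x y hx hy => rw [LieHom.map_lie]; exact hS _ hx _ hy
  | of i => simpa using hc i

end Lift

/-- A filtration of length `p` on an abelian group killed by `p ^ N`. -/
structure ModuleFiltration (p N : ℕ) (M : Type*) [AddCommGroup M] where
  F : ℕ → AddSubgroup M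
  succ_le : ∀ i, F (i + 1) ≤ F i
  eq_top : F 0 = ⊤
  eq_bot : F p = ⊥
  nsmul_eq_zero : ∀ m : M, p ^ N • m = 0

namespace ModuleFiltration

variable {p N : ℕ} {M : Type*} [AddCommGroup M] (D : ModuleFiltration p N M)

/-- The filtration of the endomorphism ring by the degree by which the filtration is raised. -/
def endFiltration : RingFiltration p N (Module.End ℤ M) where
  F k :=
    { carrier := {a | ∀ i, ∀ m ∈ D.F i, a m ∈ D.F (i + k)}
      add_mem' := fun ha hb i m hm => add_mem (ha i m hm) (hb i m hm)
      zero_mem' := fun i _ _ => zero_mem _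
      neg_mem' := fun ha i m hm => neg_mem (ha i m hm) }
  one_mem := fun _ _ hm => hm
  mul_mem := fun {i j a b} ha hb k m hm => by
    rw [add_comm i, ← add_assoc]
    exact ha _ _ (hb k m hm)
  succ_le k a ha i m hm := D.succ_le _ (ha i m hm)
  eq_bot := by
    refine eq_bot_iff.2 fun a ha => AddSubgroup.mem_bot.2 (LinearMap.ext fun m => ?_)
    simpa [D.eq_bot] using ha 0 m (D.eq_top ▸ AddSubgroup.mem_top m)
  nsmul_eq_zero a := LinearMap.ext fun m => D.nsmul_eq_zero (a m)

variable {D} {ε : Module.End ℤ M}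

lemma mem_endFiltration_zero (hε : ∀ i, ∀ m ∈ D.F i, ε m - i • m ∈ D.F (i + 1)) :
    ε ∈ D.endFiltration.F 0 := fun i m hm => by
  simpa using add_mem (D.succ_le i (hε i m hm)) (nsmul_mem hm i)

lemma lie_sub_mem_endFiltration (hε : ∀ i, ∀ m ∈ D.F i, ε m - i • m ∈ D.F (i + 1)) {k : ℕ}
    {a : Module.End ℤ M} (ha : a ∈ D.endFiltration.F k) :
    ⁅ε, a⁆ - k • a ∈ D.endFiltration.F (k + 1) := fun i m hm => by
  have hsplit : (⁅ε, a⁆ - k • a) m = (ε (a m) - (i + k) • a m) - a (ε m - i • m) := by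
    simp only [Ring.lie_def, LinearMap.sub_apply, Module.End.mul_apply, LinearMap.smul_apply,
      map_sub, map_nsmul, add_smul]
    abel
  rw [hsplit]
  refine sub_mem (hε _ _ (ha i m hm)) ?_
  simpa [add_assoc, add_comm 1 k] using ha _ _ (hε i m hm)

end ModuleFiltration

section Words

variable {X : Type*} {p N : ℕ}

variable (X p N) in
/-- The free `ZMod (p ^ N)`-module on the words of length less than `p`: the truncated free
associative algebra, as a module over itself. -/
abbrev WordModule := {w : List X // w.length < p} →₀ ZMod (p ^ N)

variable (p N) in
/-- The multiple `r • w` of a word, which is zero in `WordModule` if `w` is too long. -/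
noncomputable def word (w : List X) : ZMod (p ^ N) →+ WordModule X p N :=
  if h : w.length < p then Finsupp.singleAddHom ⟨w, h⟩ else 0

lemma word_eq_zero {w : List X} (h : p ≤ w.length) : word p N w = 0 :=
  dif_neg h.not_gt

/-- The additive extension of a map given on multiples of words. -/
noncomputable def wordLift {M : Type*} [AddCommGroup M] (φ : List X → ZMod (p ^ N) →+ M) :
    WordModule X p N →ₗ[ℤ] M :=
  (Finsupp.liftAddHom fun w : {w : List X // w.length < p} => φ w.1).toIntLinearMap

lemma wordLift_word {M : Type*} [AddCommGroup M] {φ : List X → ZMod (p ^ N) →+ M}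
    (hφ : ∀ w, p ≤ w.length → φ w = 0) (w : List X) (r : ZMod (p ^ N)) :
    wordLift φ (word p N w r) = φ w r := by
  by_cases h : w.length < p
  · simp [word, wordLift, h]
  · simp [word_eq_zero (not_lt.1 h), hφ w (not_lt.1 h)]

lemma word_induction {P : WordModule X p N → Prop} (zero : P 0)
    (add : ∀ f g, P f → P g → P (f + g)) (word : ∀ w r, P (word p N w r)) (f : WordModule X p N) :
    P f := by
  refine Finsupp.induction_linear f zero add fun w r => ?_
  simpa [Lazard.word, w.2] using word w.1 r

/-- Left multiplication by the letter `s`. -/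
noncomputable def prepend (s : X) : Module.End ℤ (WordModule X p N) :=
  wordLift fun w => word p N (s :: w)

/-- The Euler operator, multiplying each word by its length. -/
noncomputable def wordEuler : Module.End ℤ (WordModule X p N) :=
  wordLift fun w => w.length • word p N w

lemma prepend_word (s : X) (w : List X) (r : ZMod (p ^ N)) :
    prepend s (word p N w r) = word p N (s :: w) r :=
  wordLift_word (fun w h => word_eq_zero (by simp; lia)) w r

lemma wordEuler_word (w : List X) (r : ZMod (p ^ N)) :
    wordEuler (word p N w r) = w.length • word p N w r :=
  wordLift_word (fun w h => by rw [word_eq_zero h, smul_zero]) w r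

lemma lie_wordEuler_prepend (s : X) :
    ⁅(wordEuler : Module.End ℤ (WordModule X p N)), (prepend s : Module.End ℤ (WordModule X p N))⁆ =
      prepend s := by
  refine LinearMap.ext fun f => ?_
  induction f using word_induction with
  | zero => simp
  | add f g hf hg => rw [map_add, map_add, hf, hg]
  | word w r => simp [Ring.lie_def, prepend_word, wordEuler_word, add_smul]

variable (X p N) in
/-- The filtration of `WordModule` by length. -/
noncomputable def wordFiltration : ModuleFiltration p N (WordModule X p N) where
  F i := AddSubgroup.closure {f | ∃ (w : List X) (r : ZMod (p ^ N)),
    i ≤ w.length ∧ word p N w r = f}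
  succ_le i := AddSubgroup.closure_mono <| by
    rintro _ ⟨w, r, hw, rfl⟩
    exact ⟨w, r, by lia, rfl⟩
  eq_top := by
    refine eq_top_iff.2 fun f _ => ?_
    induction f using word_induction with
    | zero => exact zero_mem _
    | add f g hf hg => exact add_mem (hf trivial) (hg trivial)
    | word w r => exact AddSubgroup.subset_closure ⟨w, r, Nat.zero_le _, rfl⟩
  eq_bot := by
    rw [eq_bot_iff, AddSubgroup.closure_le]
    rintro _ ⟨w, r, hw, rfl⟩
    simp [word_eq_zero hw]
  nsmul_eq_zero m := by
    ext w
    simp [nsmul_eq_mul]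

lemma word_mem {i : ℕ} {w : List X} (h : i ≤ w.length) (r : ZMod (p ^ N)) :
    word p N w r ∈ (wordFiltration X p N).F i :=
  AddSubgroup.subset_closure ⟨w, r, h, rfl⟩

lemma prepend_mem (s : X) : prepend s ∈ (wordFiltration X p N).endFiltration.F 1 := by
  intro i f hf
  induction hf using AddSubgroup.closure_induction with
  | mem f hf =>
    obtain ⟨w, r, hw, rfl⟩ := hf
    rw [prepend_word]
    exact word_mem (by simpa using hw) r
  | zero => simp [zero_mem]
  | add f g _ _ hf hg => rw [map_add]; exact add_mem hf hg
  | neg f _ hf => rw [map_neg]; exact neg_mem hf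

lemma wordEuler_sub_mem (i : ℕ) {f : WordModule X p N} (hf : f ∈ (wordFiltration X p N).F i) :
    wordEuler f - i • f ∈ (wordFiltration X p N).F (i + 1) := by
  induction hf using AddSubgroup.closure_induction with
  | mem f hf =>
    obtain ⟨w, r, hw, rfl⟩ := hf
    rw [wordEuler_word]
    rcases hw.eq_or_lt with rfl | hw
    · simp [zero_mem]
    · exact sub_mem (nsmul_mem (word_mem hw r) _) (nsmul_mem (word_mem hw r) _)
  | zero => simp [zero_mem]
  | add f g _ _ hf hg => rw [map_add, smul_add, add_sub_add_comm]; exact add_mem hf hg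
  | neg f _ hf => rw [map_neg, smul_neg, ← neg_sub']; exact neg_mem hf

lemma isEulerStable_range_lift_prepend :
    (wordFiltration X p N).endFiltration.IsEulerStable wordEuler
      (FreeLieAlgebra.lift ℤ (prepend : X → _)).range.toSubmodule.toAddSubgroup where
  euler_mem := ModuleFiltration.mem_endFiltration_zero fun i _ => wordEuler_sub_mem i
  euler_lie_sub_mem := ModuleFiltration.lie_sub_mem_endFiltration fun i _ => wordEuler_sub_mem i
  le := by
    rintro _ ⟨x, rfl⟩
    refine freeLieAlgebra_lift_mem (fun a ha b hb => ?_) prepend_mem x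
    exact sub_mem (RingFiltration.succ_le _ 1 (RingFiltration.mul_mem _ ha hb))
      (RingFiltration.succ_le _ 1 (RingFiltration.mul_mem _ hb ha))
  lie_mem := by
    rintro _ _ ⟨x, rfl⟩ ⟨y, rfl⟩
    exact ⟨⁅x, y⁆, LieHom.map_lie _ x y⟩
  euler_lie_mem := by
    rintro _ ⟨x, rfl⟩
    induction x using freeLieAlgebra_induction with
    | zero => exact ⟨0, by simp⟩
    | add x y hx hy => rw [map_add, lie_add]; exact add_mem hx hy
    | smul k x hx => rw [map_smul, lie_smul]; exact zsmul_mem hx k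
    | lie x y hx hy =>
      obtain ⟨a, ha⟩ := hx
      obtain ⟨b, hb⟩ := hy
      refine ⟨⁅a, y⁆ + ⁅x, b⁆, ?_⟩
      rw [LieHom.coe_toLinearMap] at ha hb ⊢
      rw [map_add, LieHom.map_lie, LieHom.map_lie, LieHom.map_lie, leibniz_lie, ha, hb]
    | of i => exact ⟨.of ℤ i, by simp [lie_wordEuler_prepend]⟩

end Words

section BCH

variable (p N : ℕ) [Fact p.Prime]

lemma exists_exp_lift_eq : ∃ h : FreeLieAlgebra ℤ (Fin 2),
    truncExp p N (prepend (p := p) (N := N) (0 : Fin 2)) * truncExp p N (prepend 1) =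
      truncExp p N (FreeLieAlgebra.lift ℤ prepend h) := by
  obtain ⟨_, ⟨h, rfl⟩, hh⟩ := isEulerStable_range_lift_prepend.exists_exp_eq_exp_mul_exp
    (p := p) (N := N) (x := prepend (0 : Fin 2)) (y := prepend 1)
    ⟨.of ℤ 0, by simp⟩ ⟨.of ℤ 1, by simp⟩
  exact ⟨h, hh⟩

/-- The truncated Baker–Campbell–Hausdorff series `log (exp x * exp y)`. -/
noncomputable def bch : FreeLieAlgebra ℤ (Fin 2) := (exists_exp_lift_eq p N).choose

lemma exp_prepend_mul_exp_prepend :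
    truncExp p N (prepend (p := p) (N := N) (0 : Fin 2)) * truncExp p N (prepend 1) =
      truncExp p N (FreeLieAlgebra.lift ℤ prepend (bch p N)) :=
  (exists_exp_lift_eq p N).choose_spec

variable {p N} {A : Type*} [Ring A] (Φ : RingFiltration p N A)

omit [Fact p.Prime] in
lemma RingFiltration.exists_wordModule_hom {X : Type*} {c : X → A} (hc : ∀ i, c i ∈ Φ.F 1) :
    ∃ T : WordModule X p N →ₗ[ℤ] A, T (word p N [] 1) = 1 ∧
      ∀ i f, T (prepend i f) = c i * T f := by
  have prod_mem : ∀ w : List X, (w.map c).prod ∈ Φ.F w.length := by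
    intro w
    induction w with
    | nil => simpa using Φ.one_mem
    | cons a w ih => exact Φ.mul_mem_succ_left (hc a) ih
  let φ (w : List X) : ZMod (p ^ N) →+ A :=
    ZMod.lift (p ^ N) ⟨zmultiplesHom A (w.map c).prod, by simp [← Φ.nsmul_eq_zero (w.map c).prod]⟩
  have φ_intCast : ∀ (w : List X) (k : ℤ), φ w (k : ZMod (p ^ N)) = k • (w.map c).prod :=
    fun w k => ZMod.lift_coe _ _ k
  have T_word : ∀ (w : List X) (k : ℤ), wordLift φ (word p N w k) = k • (w.map c).prod := by
    refine fun w k => (wordLift_word (fun w h => ?_) w _).trans (φ_intCast w k)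
    ext r
    rw [← ZMod.intCast_zmod_cast r, φ_intCast, Φ.eq_zero h (prod_mem w), smul_zero,
      AddMonoidHom.zero_apply]
  refine ⟨wordLift φ, by simpa using T_word [] 1, fun i f => ?_⟩
  induction f using word_induction with
  | zero => simp
  | add f g hf hg => rw [map_add, map_add, hf, hg, map_add, mul_add]
  | word w r =>
    rw [← ZMod.intCast_zmod_cast r, prepend_word, T_word, T_word, List.map_cons, List.prod_cons,
      mul_smul_comm]

theorem RingFiltration.exp_mul_exp {c : Fin 2 → A} (hc : ∀ i, c i ∈ Φ.F 1) :
    truncExp p N (c 0) * truncExp p N (c 1) =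
      truncExp p N (FreeLieAlgebra.lift ℤ c (bch p N)) := by
  obtain ⟨T, T_one, T_prepend⟩ := Φ.exists_wordModule_hom hc
  have T_lift : ∀ h f,
      T (FreeLieAlgebra.lift ℤ prepend h f) = FreeLieAlgebra.lift ℤ c h * T f := by
    intro h
    induction h using freeLieAlgebra_induction with
    | zero => simp
    | add x y hx hy => intro f; simp only [map_add, LinearMap.add_apply, hx, hy, add_mul]
    | smul k x hx => intro f; simp only [map_smul, LinearMap.smul_apply, hx, smul_mul_assoc]
    | lie x y hx hy =>
      intro f
      simp only [LieHom.map_lie, Ring.lie_def, LinearMap.sub_apply, Module.End.mul_apply, map_sub,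
        hx, hy, sub_mul, mul_assoc]
    | of i => simpa using T_prepend i
  have T_exp {a : Module.End ℤ (WordModule (Fin 2) p N)} {a' : A}
      (h : ∀ f, T (a f) = a' * T f) (f) : T (truncExp p N a f) = truncExp p N a' * T f :=
    map_truncExp_smul T.toAddMonoidHom (z := a) (z' := a') h f
  have hbch := congrArg (fun a => T (a (word p N [] 1))) (exp_prepend_mul_exp_prepend p N)
  simpa only [Module.End.mul_apply, T_exp (T_prepend _), T_exp (T_lift _), T_one, mul_one]
    using hbch

end BCH

/-! ### Lazard Lie rings -/

universe u

/-- A filtration showing that a Lie ring has nilpotency class less than `p` and exponent dividing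
`p ^ N`. -/
structure LieFiltration (p N : ℕ) (L : Type*) [LieRing L] where
  F : ℕ → AddSubgroup L
  eq_top : F 1 = ⊤
  succ_le : ∀ i, F (i + 1) ≤ F i
  lie_mem : ∀ {i j : ℕ} {a b : L}, a ∈ F i → b ∈ F j → ⁅a, b⁆ ∈ F (i + j)
  eq_bot : F p = ⊥
  nsmul_eq_zero : ∀ a : L, p ^ N • a = 0

namespace LieFiltration

variable {p N : ℕ} {L : Type u} [LieRing L] (Γ : LieFiltration p N L)

lemma antitone : Antitone Γ.F := antitone_nat_of_succ_le Γ.succ_le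

lemma mem_one (x : L) : x ∈ Γ.F 1 := Γ.eq_top ▸ AddSubgroup.mem_top x

lemma lie_mem_succ {i : ℕ} (x : L) {y : L} (hy : y ∈ Γ.F i) : ⁅x, y⁆ ∈ Γ.F (i + 1) :=
  add_comm 1 i ▸ Γ.lie_mem (Γ.mem_one x) hy

lemma eq_zero {i : ℕ} (h : p ≤ i) {x : L} (hx : x ∈ Γ.F i) : x = 0 := by
  simpa [Γ.eq_bot] using Γ.antitone h hx

section Representation

/-- The filtration of `L × ZMod (p ^ N)` whose positive parts lie in `L`. -/
def prodZMod (hp : p ≠ 0) : ModuleFiltration p N (L × ZMod (p ^ N)) where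
  F i := if i = 0 then ⊤ else (Γ.F i).prod ⊥
  succ_le i := by
    rcases i with _ | i
    · simp
    · simpa using AddSubgroup.prod_mono (Γ.succ_le (i + 1)) le_rfl
  eq_top := by simp
  eq_bot := by simp [hp, Γ.eq_bot]
  nsmul_eq_zero v := by
    ext
    · exact Γ.nsmul_eq_zero v.1
    · simp [nsmul_eq_mul]

include Γ in
/-- The adjoint action on `L`, extended to a semidirect product with a scalar acting by `δ`, is
faithful as soon as `δ` is injective. -/
lemma exists_injective_hom [Fact p.Prime] {δ : LieDerivation ℤ L L} (hδ : Function.Injective δ) :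
    ∃ (A : Type u) (_ : Ring A) (Φ : RingFiltration p N A) (ρ : L →ₗ⁅ℤ⁆ A),
      Function.Injective ρ ∧ ∀ x, ρ x ∈ Φ.F 1 := by
  let _ : Module (ZMod (p ^ N)) L := AddCommGroup.zmodModule Γ.nsmul_eq_zero
  have lie_zsmul : ∀ (r : ZMod (p ^ N)) (x y : L), ⁅x, r • y⁆ = r • ⁅x, y⁆ := fun r x y =>
    ZMod.map_smul (LieAlgebra.ad ℤ L x).toAddMonoidHom r y
  let act (x : L) : Module.End ℤ (L × ZMod (p ^ N)) :=
    (AddMonoidHom.mk' (fun v => (⁅x, v.1⁆ + v.2 • δ x, 0)) fun v w => by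
      simp [add_smul, add_add_add_comm]).toIntLinearMap
  have act_apply : ∀ x v, act x v = (⁅x, v.1⁆ + v.2 • δ x, 0) := fun _ _ => rfl
  let ρ : L →ₗ⁅ℤ⁆ Module.End ℤ (L × ZMod (p ^ N)) :=
    { (AddMonoidHom.mk' act fun x y => LinearMap.ext fun v => by
        simp [act_apply, smul_add, add_add_add_comm]).toIntLinearMap with
      map_lie' := fun {x y} => LinearMap.ext fun v => by
        change act ⁅x, y⁆ v = (act x * act y - act y * act x) v
        simp only [LinearMap.sub_apply, Module.End.mul_apply, act_apply, lie_add, lie_zsmul,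
          zero_smul, add_zero, Prod.mk_sub_mk, sub_zero, LieDerivation.apply_lie_eq_sub, smul_sub,
          lie_lie]
        congr 1
        abel }
  refine ⟨_, inferInstance, (Γ.prodZMod (Fact.out : p.Prime).ne_zero).endFiltration, ρ,
    fun x y hxy => hδ ?_, fun x => ?_⟩
  · change act x = act y at hxy
    simpa [act_apply] using congrArg Prod.fst (LinearMap.congr_fun hxy (0, 1))
  · intro i v hv
    change act x v ∈ _
    rcases i with _ | i
    · simp [prodZMod, act_apply, AddSubgroup.mem_prod, mem_one]
    · simp only [prodZMod, act_apply, Nat.succ_ne_zero, if_false, AddSubgroup.mem_prod,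
        AddSubgroup.mem_bot] at hv ⊢
      simpa [hv.2] using Γ.lie_mem_succ x hv.1

end Representation

end LieFiltration

section PolynomialLie

open scoped TensorProduct
open Polynomial

/-- The Lie ring `L[X]` of polynomials over a Lie ring. -/
def PolynomialLie (L : Type*) [LieRing L] := ℤ[X] ⊗[ℤ] L

namespace PolynomialLie

variable {L : Type*} [LieRing L]

noncomputable instance : LieRing (PolynomialLie L) :=
  LieAlgebra.ExtendScalars.instLieRing ℤ ℤ[X] L

/-- The element `s • x` of `L[X]`. -/
noncomputable def tmul (s : ℤ[X]) : L →+ PolynomialLie L :=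
  (TensorProduct.mk ℤ ℤ[X] L s).toAddMonoidHom

lemma tmul_zsmul (k : ℤ) (s : ℤ[X]) (x : L) : tmul (k • s) x = k • tmul s x := by
  rw [← map_zsmul]
  exact TensorProduct.smul_tmul k s x

lemma tmul_nsmul (k : ℕ) (s : ℤ[X]) (x : L) : tmul (k • s) x = k • tmul s x := by
  simpa using tmul_zsmul k s x

lemma lie_tmul (s s' : ℤ[X]) (x y : L) : ⁅tmul s x, tmul s' y⁆ = tmul (s * s') ⁅x, y⁆ :=
  LieAlgebra.ExtendScalars.bracket_tmul ℤ ℤ[X] L L s s' x y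

lemma induction {P : PolynomialLie L → Prop} (zero : P 0) (add : ∀ v w, P v → P w → P (v + w))
    (tmul : ∀ s x, P (tmul s x)) (v : PolynomialLie L) : P v :=
  TensorProduct.induction_on v zero tmul add

/-- The coefficientwise extension of an additive map on polynomials. -/
noncomputable def map (φ : ℤ[X] →ₗ[ℤ] ℤ[X]) : PolynomialLie L →ₗ[ℤ] PolynomialLie L :=
  (φ.rTensor L).toAddMonoidHom.toIntLinearMap

lemma map_tmul (φ : ℤ[X] →ₗ[ℤ] ℤ[X]) (s : ℤ[X]) (x : L) : map φ (tmul s x) = tmul (φ s) x :=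
  LinearMap.rTensor_tmul L φ x s

variable (L) in
/-- The Euler derivation `X d/dX`. -/
noncomputable def euler : LieDerivation ℤ (PolynomialLie L) (PolynomialLie L) where
  toLinearMap := map ((X : ℤ[X]) • derivative' : Derivation ℤ ℤ[X] ℤ[X])
  leibniz' := (Lie.Derivation.ofDerivation L ((X : ℤ[X]) • derivative')).leibniz'

lemma euler_tmul_X_pow (d : ℕ) (x : L) : euler L (tmul (X ^ d) x) = d • tmul (X ^ d) x := by
  have hd : X * derivative (X ^ d : ℤ[X]) = d • X ^ d := by
    rcases d with _ | d
    · simp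
    · rw [derivative_X_pow, Nat.add_sub_cancel, map_natCast, nsmul_eq_mul]
      ring
  rw [← tmul_nsmul, ← hd]
  exact map_tmul _ _ _

variable (L) in
/-- Evaluation at `X = 1`, as a linear map. -/
noncomputable def evalOneAux : PolynomialLie L →ₗ[ℤ] L :=
  ((TensorProduct.lid ℤ L).toLinearMap ∘ₗ
    (leval (1 : ℤ)).rTensor L).toAddMonoidHom.toIntLinearMap

lemma evalOneAux_tmul (s : ℤ[X]) (x : L) : evalOneAux L (tmul s x) = s.eval 1 • x := rfl

variable (L) in
/-- Evaluation at `X = 1`. -/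
noncomputable def evalOne : PolynomialLie L →ₗ⁅ℤ⁆ L where
  toLinearMap := evalOneAux L
  map_lie' {v w} := by
    change evalOneAux L ⁅v, w⁆ = ⁅evalOneAux L v, evalOneAux L w⁆
    induction v using PolynomialLie.induction with
    | zero => simp
    | add v v' hv hv' => simp only [add_lie, map_add, hv, hv']
    | tmul s x =>
      induction w using PolynomialLie.induction with
      | zero => simp
      | add w w' hw hw' => simp only [lie_add, map_add, hw, hw']
      | tmul s' y =>
        rw [lie_tmul, evalOneAux_tmul, evalOneAux_tmul, evalOneAux_tmul, eval_mul, smul_lie,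
          lie_smul, smul_smul]

lemma evalOne_tmul (s : ℤ[X]) (x : L) : evalOne L (tmul s x) = s.eval 1 • x := rfl

end PolynomialLie

namespace LieFiltration

open PolynomialLie

variable {p N : ℕ} {L : Type u} [LieRing L] (Γ : LieFiltration p N L)

/-- The span of the monomials `X ^ d • x` with `i ≤ d` and `x ∈ F d`. -/
noncomputable def reesFiltration (i : ℕ) : AddSubgroup (PolynomialLie L) :=
  .closure {v | ∃ d x, i ≤ d ∧ x ∈ Γ.F d ∧ tmul (X ^ d) x = v}

lemma tmul_mem_reesFiltration {i d : ℕ} {x : L} (h : i ≤ d) (hx : x ∈ Γ.F d) :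
    tmul (X ^ d) x ∈ Γ.reesFiltration i :=
  AddSubgroup.subset_closure ⟨d, x, h, hx, rfl⟩

lemma reesFiltration_antitone : Antitone Γ.reesFiltration := fun _ _ hij =>
  AddSubgroup.closure_mono fun _ ⟨d, x, h, hx, hv⟩ => ⟨d, x, hij.trans h, hx, hv⟩

lemma reesFiltration_eq_bot : Γ.reesFiltration p = ⊥ := by
  rw [reesFiltration, AddSubgroup.closure_eq_bot_iff]
  rintro _ ⟨d, x, hd, hx, rfl⟩
  simp [Γ.eq_zero hd hx]

lemma lie_mem_reesFiltration {i j : ℕ} {v w : PolynomialLie L} (hv : v ∈ Γ.reesFiltration i)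
    (hw : w ∈ Γ.reesFiltration j) : ⁅v, w⁆ ∈ Γ.reesFiltration (i + j) := by
  induction hv using AddSubgroup.closure_induction with
  | zero => simp
  | add v v' _ _ hv hv' => rw [add_lie]; exact add_mem hv hv'
  | neg v _ hv => rw [neg_lie]; exact neg_mem hv
  | mem v hv =>
    obtain ⟨d, x, hd, hx, rfl⟩ := hv
    induction hw using AddSubgroup.closure_induction with
    | zero => simp
    | add w w' _ _ hw hw' => rw [lie_add]; exact add_mem hw hw'
    | neg w _ hw => rw [lie_neg]; exact neg_mem hw
    | mem w hw =>
      obtain ⟨d', y, hd', hy, rfl⟩ := hw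
      rw [lie_tmul, ← pow_add]
      exact Γ.tmul_mem_reesFiltration (add_le_add hd hd') (Γ.lie_mem hx hy)

lemma euler_mem_reesFiltration {i : ℕ} {v : PolynomialLie L} (hv : v ∈ Γ.reesFiltration i) :
    euler L v ∈ Γ.reesFiltration i := by
  induction hv using AddSubgroup.closure_induction with
  | zero => simp
  | add v v' _ _ hv hv' => rw [map_add]; exact add_mem hv hv'
  | neg v _ hv => rw [map_neg]; exact neg_mem hv
  | mem v hv =>
    obtain ⟨d, x, hd, hx, rfl⟩ := hv
    rw [euler_tmul_X_pow]
    exact nsmul_mem (Γ.tmul_mem_reesFiltration hd hx) d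

include Γ in
lemma nsmul_polynomialLie (v : PolynomialLie L) : p ^ N • v = 0 := by
  induction v using PolynomialLie.induction with
  | zero => simp
  | add v w hv hw => rw [smul_add, hv, hw, add_zero]
  | tmul s x => rw [← map_nsmul, Γ.nsmul_eq_zero, map_zero]

lemma euler_injOn_reesFiltration [Fact p.Prime] :
    Set.InjOn (euler L) (Γ.reesFiltration 1 : Set (PolynomialLie L)) := by
  let inv : PolynomialLie L →ₗ[ℤ] PolynomialLie L :=
    map (lsum fun d => natInv (p ^ N) d • monomial d)
  have inv_tmul (d : ℕ) (x : L) : inv (tmul (X ^ d) x) = natInv (p ^ N) d • tmul (X ^ d) x := by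
    rw [← tmul_nsmul]
    simp [inv, map_tmul, lsum_apply, ← monomial_one_right_eq_X_pow, sum_monomial_index]
  refine Set.LeftInvOn.injOn (f₁' := inv) fun v hv => ?_
  induction hv using AddSubgroup.closure_induction with
  | zero => simp
  | add v w _ _ hv hw => rw [map_add, map_add, hv, hw]
  | neg v _ hv => rw [map_neg, map_neg, hv]
  | mem v hv =>
    obtain ⟨d, x, hd, hx, rfl⟩ := hv
    rcases lt_or_ge d p with hdp | hdp
    · have hcop : d.Coprime (p ^ N) :=
        (Nat.coprime_of_lt_prime (by lia) hdp Fact.out).symm.pow_right N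
      have : NeZero (p ^ N) := ⟨(pow_pos (Fact.out : p.Prime).pos N).ne'⟩
      rw [euler_tmul_X_pow, map_nsmul, inv_tmul, smul_smul, mul_comm,
        nsmul_eq_nsmul_of_modEq (Γ.nsmul_polynomialLie _) (natInv_mul_modEq hcop), one_smul]
    · simp [Γ.eq_zero hdp hx]

/-- The Rees algebra: polynomials without constant term whose coefficient of `X ^ d` is in
`F d`. -/
noncomputable def reesAlgebra : LieSubalgebra ℤ (PolynomialLie L) where
  __ := Γ.reesFiltration 1
  smul_mem' k _ hv := zsmul_mem (K := Γ.reesFiltration 1) hv k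
  lie_mem' {v w} (hv : v ∈ Γ.reesFiltration 1) (hw : w ∈ Γ.reesFiltration 1) :=
    show ⁅v, w⁆ ∈ Γ.reesFiltration 1 from
      Γ.reesFiltration_antitone (Nat.le_add_left 1 1) (Γ.lie_mem_reesFiltration hv hw)

/-- The filtration of the Rees algebra by the degree. -/
noncomputable def reesAlgebraFiltration : LieFiltration p N Γ.reesAlgebra where
  F i := (Γ.reesFiltration i).comap Γ.reesAlgebra.subtype.toAddMonoidHom
  eq_top := eq_top_iff.2 fun v _ => v.2
  succ_le i _ hv := Γ.reesFiltration_antitone i.le_succ hv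
  lie_mem hv hw := Γ.lie_mem_reesFiltration hv hw
  eq_bot := eq_bot_iff.2 fun _ hv => Subtype.ext <|
    AddSubgroup.mem_bot.1 (Γ.reesFiltration_eq_bot ▸ hv)
  nsmul_eq_zero v := Subtype.ext (Γ.nsmul_polynomialLie v)

/-- The restriction of the Euler derivation to the Rees algebra. -/
noncomputable def reesEuler : LieDerivation ℤ Γ.reesAlgebra Γ.reesAlgebra where
  toLinearMap := (euler L).toLinearMap.restrict fun _ hv => Γ.euler_mem_reesFiltration hv
  leibniz' v w := Subtype.ext ((euler L).apply_lie_eq_sub v w)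

lemma reesEuler_injective [Fact p.Prime] : Function.Injective Γ.reesEuler := fun v w hvw =>
  Subtype.ext (Γ.euler_injOn_reesFiltration v.2 w.2 (congrArg Subtype.val hvw))

include Γ in
/-- `L` itself need not embed into an associative ring of the same nilpotency degree, but it is a
quotient of its Rees algebra, which does. -/
theorem exists_cover [Fact p.Prime] :
    ∃ (T : Type u) (_ : LieRing T) (A : Type u) (_ : Ring A) (Φ : RingFiltration p N A)
      (ev : T →ₗ⁅ℤ⁆ L) (ρ : T →ₗ⁅ℤ⁆ A) (sec : L → T), Function.Injective ρ ∧
        (∀ v, ρ v ∈ Φ.F 1) ∧ (∀ x, ev (sec x) = x) ∧ ∀ x y, ⁅x, y⁆ = 0 → ⁅sec x, sec y⁆ = 0 := by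
  obtain ⟨A, _, Φ, ρ, hρ, hΦ⟩ := Γ.reesAlgebraFiltration.exists_injective_hom
    Γ.reesEuler_injective
  refine ⟨Γ.reesAlgebra, inferInstance, A, inferInstance, Φ,
    (evalOne L).comp Γ.reesAlgebra.incl, ρ,
    fun x => ⟨tmul (X ^ 1) x, Γ.tmul_mem_reesFiltration le_rfl (Γ.mem_one x)⟩, hρ, hΦ,
    fun x => ?_, fun x y h => Subtype.ext ?_⟩
  · change evalOne L (tmul (X ^ 1) x) = x
    simp [evalOne_tmul]
  · change ⁅tmul (X ^ 1) x, tmul (X ^ 1) y⁆ = 0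
    rw [lie_tmul, h, map_zero]

end LieFiltration

end PolynomialLie

/-- A Lie ring to which the Lazard correspondence for the prime `p` applies: it has nilpotency
class less than `p` and exponent dividing `p ^ N`. -/
class IsLazard (p N : ℕ) (L : Type*) [LieRing L] : Prop where
  nonempty_lieFiltration : Nonempty (LieFiltration p N L)

section IsLazard

variable {p N : ℕ} {L L' : Type*} [LieRing L] [LieRing L']

/-- The projection onto a quotient as a homomorphism of Lie rings; Mathlib's
`LieSubmodule.Quotient.mk'` is a homomorphism of Lie modules. -/
def lieQuotientMk (I : LieIdeal ℤ L) : L →ₗ⁅ℤ⁆ L ⧸ I where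
  toLinearMap := (LieSubmodule.Quotient.mk' I : L →ₗ[ℤ] L ⧸ I)
  map_lie' := LieSubmodule.Quotient.mk_bracket I _ _

lemma lieQuotientMk_surjective (I : LieIdeal ℤ L) : Function.Surjective (lieQuotientMk I) :=
  LieSubmodule.Quotient.surjective_mk' I

lemma lieQuotientMk_eq_zero {I : LieIdeal ℤ L} {x : L} : lieQuotientMk I x = 0 ↔ x ∈ I :=
  LieSubmodule.Quotient.mk_eq_zero (N := I)

lemma IsLazard.nsmul_eq_zero (p N : ℕ) [h : IsLazard p N L] (x : L) : p ^ N • x = 0 :=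
  h.nonempty_lieFiltration.some.nsmul_eq_zero x

lemma LieFiltration.lowerCentralSeries_le (Γ : LieFiltration p N L) (k : ℕ) :
    (LieModule.lowerCentralSeries ℤ L L k).toAddSubgroup ≤ Γ.F (k + 1) := by
  induction k with
  | zero => exact fun x _ => Γ.mem_one x
  | succ k ih =>
    let I : LieIdeal ℤ L :=
      { Γ.F (k + 1 + 1) with
        smul_mem' := fun c _ hx => zsmul_mem (K := Γ.F (k + 1 + 1)) hx c
        lie_mem := fun hx => Γ.succ_le _ (Γ.lie_mem_succ _ hx) }
    have hI : LieModule.lowerCentralSeries ℤ L L (k + 1) ≤ I := by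
      rw [LieModule.lowerCentralSeries_succ, LieSubmodule.lie_le_iff]
      exact fun x _ y hy => Γ.lie_mem_succ x (ih hy)
    exact hI

lemma IsLazard.isNilpotent (p N : ℕ) [h : IsLazard p N L] : LieRing.IsNilpotent L := by
  obtain ⟨Γ⟩ := h.nonempty_lieFiltration
  refine ⟨p, (LieSubmodule.eq_bot_iff _).2 fun x hx => ?_⟩
  exact Γ.eq_zero p.le_succ (Γ.lowerCentralSeries_le p hx)

/-- The filtration attached to a chain `D` with `⁅L, D i⁆ ≤ D (i + 1)`: to have
`⁅F i, F j⁆ ≤ F (i + j)`, let `F i` consist of the `x ∈ D (i - 1)` with `⁅x, D j⁆ ≤ D (j + i)` for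
all `j`. -/
def LieFiltration.ofChain (D : ℕ → AddSubgroup L) (zero_eq_top : D 0 = ⊤) (hD : Antitone D)
    (lie_mem : ∀ i, ∀ x : L, ∀ y ∈ D i, ⁅x, y⁆ ∈ D (i + 1)) (eq_bot : D (p - 1) = ⊥)
    (nsmul_eq_zero : ∀ x : L, p ^ N • x = 0) : LieFiltration p N L where
  F i :=
    { carrier := {x | x ∈ D (i - 1) ∧ ∀ j, ∀ y ∈ D j, ⁅x, y⁆ ∈ D (j + i)}
      add_mem' := fun ha hb => ⟨add_mem ha.1 hb.1, fun j y hy => by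
        rw [add_lie]; exact add_mem (ha.2 j y hy) (hb.2 j y hy)⟩
      zero_mem' := ⟨zero_mem _, fun j y _ => by rw [zero_lie]; exact zero_mem _⟩
      neg_mem' := fun ha => ⟨neg_mem ha.1, fun j y hy => by
        rw [neg_lie]; exact neg_mem (ha.2 j y hy)⟩ }
  eq_top := eq_top_iff.2 fun x _ =>
    ⟨zero_eq_top ▸ AddSubgroup.mem_top x, fun j y hy => lie_mem j x y hy⟩
  succ_le i _ hx := ⟨hD (Nat.sub_le_sub_right i.le_succ 1) hx.1,
    fun j y hy => hD (j + i).le_succ (hx.2 j y hy)⟩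
  lie_mem {i j a b} ha hb := by
    refine ⟨?_, fun k y hy => ?_⟩
    · rcases j with _ | j
      · exact hD (by lia) (ha.2 _ b hb.1)
      · exact hD (by lia) (ha.2 j b hb.1)
    · rw [lie_lie]
      refine sub_mem ?_ (add_assoc k i j ▸ hb.2 _ _ (ha.2 _ _ hy))
      rw [add_comm i j, ← add_assoc]
      exact ha.2 _ _ (hb.2 _ _ hy)
  eq_bot := eq_bot_iff.2 fun x hx => eq_bot ▸ hx.1
  nsmul_eq_zero

lemma IsLazard.of_surjective [h : IsLazard p N L] {f : L →ₗ⁅ℤ⁆ L'} (hf : Function.Surjective f) :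
    IsLazard p N L' := by
  obtain ⟨Γ⟩ := h.nonempty_lieFiltration
  let g : L →+ L' := (f : L →ₗ[ℤ] L').toAddMonoidHom
  refine ⟨⟨{
    F := fun i => (Γ.F i).map g
    eq_top := ?_
    succ_le := fun i => AddSubgroup.map_mono (Γ.succ_le i)
    lie_mem := ?_
    eq_bot := ?_
    nsmul_eq_zero := fun y => ?_ }⟩⟩
  · rw [Γ.eq_top, AddSubgroup.map_top_of_surjective g hf]
  · rintro i j _ _ ⟨a, ha, rfl⟩ ⟨b, hb, rfl⟩
    exact ⟨⁅a, b⁆, Γ.lie_mem ha hb, f.map_lie a b⟩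
  · rw [Γ.eq_bot, AddSubgroup.map_bot]
  · obtain ⟨x, rfl⟩ := hf y
    rw [← map_nsmul, Γ.nsmul_eq_zero, map_zero]

lemma IsLazard.of_injective [h : IsLazard p N L'] {f : L →ₗ⁅ℤ⁆ L'} (hf : Function.Injective f) :
    IsLazard p N L := by
  obtain ⟨Γ⟩ := h.nonempty_lieFiltration
  let g : L →+ L' := (f : L →ₗ[ℤ] L').toAddMonoidHom
  refine ⟨⟨{
    F := fun i => (Γ.F i).comap g
    eq_top := ?_
    succ_le := fun i => AddSubgroup.comap_mono (Γ.succ_le i)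
    lie_mem := ?_
    eq_bot := ?_
    nsmul_eq_zero := fun x => ?_ }⟩⟩
  · rw [Γ.eq_top, AddSubgroup.comap_top]
  · intro i j a b ha hb
    change f ⁅a, b⁆ ∈ Γ.F (i + j)
    rw [f.map_lie]
    exact Γ.lie_mem ha hb
  · rw [Γ.eq_bot, AddMonoidHom.comap_bot, (AddMonoidHom.ker_eq_bot_iff g).2 hf]
  · apply hf
    rw [map_nsmul, Γ.nsmul_eq_zero, map_zero]

instance IsLazard.prod [h : IsLazard p N L] [h' : IsLazard p N L'] : IsLazard p N (L × L') := by
  obtain ⟨Γ⟩ := h.nonempty_lieFiltration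
  obtain ⟨Γ'⟩ := h'.nonempty_lieFiltration
  exact ⟨⟨{
    F := fun i => (Γ.F i).prod (Γ'.F i)
    eq_top := by rw [Γ.eq_top, Γ'.eq_top, AddSubgroup.top_prod_top]
    succ_le := fun i => AddSubgroup.prod_mono (Γ.succ_le i) (Γ'.succ_le i)
    lie_mem := fun ha hb => ⟨Γ.lie_mem ha.1 hb.1, Γ'.lie_mem ha.2 hb.2⟩
    eq_bot := by rw [Γ.eq_bot, Γ'.eq_bot, AddSubgroup.bot_prod_bot]
    nsmul_eq_zero := fun x => Prod.ext (Γ.nsmul_eq_zero x.1) (Γ'.nsmul_eq_zero x.2) }⟩⟩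

instance IsLazard.quotient [IsLazard p N L] (I : LieIdeal ℤ L) : IsLazard p N (L ⧸ I) :=
  .of_surjective (lieQuotientMk_surjective I)

instance IsLazard.lieSubalgebra [IsLazard p N L] (S : LieSubalgebra ℤ L) : IsLazard p N S :=
  .of_injective (f := S.incl) Subtype.val_injective

end IsLazard

/-! ### The Lazard group -/

section BchMul

variable {p N : ℕ} [Fact p.Prime] {L L' : Type*} [LieRing L] [LieRing L']

/-- The Baker–Campbell–Hausdorff product. -/
noncomputable def bchMul (p N : ℕ) [Fact p.Prime] (x y : L) : L :=
  FreeLieAlgebra.lift ℤ ![x, y] (bch p N)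

lemma map_bchMul (f : L →ₗ⁅ℤ⁆ L') (x y : L) : f (bchMul p N x y) = bchMul p N (f x) (f y) := by
  rw [bchMul, map_freeLieAlgebra_lift, bchMul]
  congr 2
  funext i
  fin_cases i <;> rfl

lemma RingFiltration.exp_bchMul {A : Type*} [Ring A] (Φ : RingFiltration p N A)
    (ρ : L →ₗ⁅ℤ⁆ A) (hρ : ∀ x, ρ x ∈ Φ.F 1) (x y : L) :
    truncExp p N (ρ (bchMul p N x y)) = truncExp p N (ρ x) * truncExp p N (ρ y) := by
  rw [map_bchMul, bchMul, ← Φ.exp_mul_exp]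
  · rfl
  · intro i
    fin_cases i <;> exact hρ _

lemma RingFiltration.exp_adExp {A : Type*} [Ring A] (Φ : RingFiltration p N A) {a b : A}
    (ha : a ∈ Φ.F 1) (hb : b ∈ Φ.F 1) :
    truncExp p N (adExp p N a b) = truncExp p N a * truncExp p N b * truncExp p N (-a) := by
  have conj_pow : ∀ k, (truncExp p N a * b * truncExp p N (-a)) ^ k =
      truncExp p N a * b ^ k * truncExp p N (-a) := Units.conj_pow (Φ.expUnit ha) b
  rw [← Φ.exp_mul_mul_exp_neg ha (Φ.succ_le 0 hb)]
  generalize truncExp p N a = u, truncExp p N (-a) = v at conj_pow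
  simp only [truncExp, conj_pow, mul_sum, sum_mul, mul_smul_comm, smul_mul_assoc]

variable [h : IsLazard p N L]

lemma bchMul_assoc (x y z : L) :
    bchMul p N (bchMul p N x y) z = bchMul p N x (bchMul p N y z) := by
  obtain ⟨T, _, A, _, Φ, ev, ρ, sec, hinj, hρ, hsec, -⟩ :=
    h.nonempty_lieFiltration.some.exists_cover
  rw [← hsec x, ← hsec y, ← hsec z]
  simp only [← map_bchMul]
  refine congrArg ev (hinj (Φ.exp_injective (hρ _) (hρ _) ?_))
  simp only [Φ.exp_bchMul ρ hρ, mul_assoc]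

lemma bchMul_eq_add {x y : L} (hxy : ⁅x, y⁆ = 0) : bchMul p N x y = x + y := by
  obtain ⟨T, _, A, _, Φ, ev, ρ, sec, hinj, hρ, hsec, hcomm⟩ :=
    h.nonempty_lieFiltration.some.exists_cover
  have hcomm' : Commute (ρ (sec x)) (ρ (sec y)) := by
    rw [commute_iff_lie_eq, ← ρ.map_lie, hcomm x y hxy, map_zero]
  rw [← hsec x, ← hsec y, ← map_bchMul, ← map_add]
  refine congrArg ev (hinj (Φ.exp_injective (hρ _) (hρ _) ?_))
  rw [Φ.exp_bchMul ρ hρ, map_add, Φ.exp_add (hρ _) (hρ _) hcomm']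

lemma bchMul_conj (x y : L) : bchMul p N (bchMul p N x y) (-x) = adExp p N x y := by
  obtain ⟨T, _, A, _, Φ, ev, ρ, sec, hinj, hρ, hsec, -⟩ :=
    h.nonempty_lieFiltration.some.exists_cover
  rw [← hsec x, ← hsec y, ← map_adExp, ← map_neg, ← map_bchMul, ← map_bchMul]
  refine congrArg ev (hinj (Φ.exp_injective (hρ _) (hρ _) ?_))
  simp only [map_adExp, Φ.exp_adExp (hρ _) (hρ _), Φ.exp_bchMul ρ hρ, map_neg]

lemma bchMul_sub_add_mem (I : LieIdeal ℤ L) {x y : L} (hxy : ⁅x, y⁆ ∈ I) :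
    bchMul p N x y - (x + y) ∈ I := by
  have hI : ⁅lieQuotientMk I x, lieQuotientMk I y⁆ = 0 := by
    rwa [← LieHom.map_lie, lieQuotientMk_eq_zero]
  rw [← lieQuotientMk_eq_zero, map_sub, map_bchMul, bchMul_eq_add hI, map_add, sub_self]

lemma adExp_sub_add_mem (I : LieIdeal ℤ L) {x y : L} (hxy : ⁅x, ⁅x, y⁆⁆ ∈ I) :
    adExp p N x y - (y + ⁅x, y⁆) ∈ I := by
  have hI : ⁅lieQuotientMk I x, ⁅lieQuotientMk I x, lieQuotientMk I y⁆⁆ = 0 := by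
    rwa [← LieHom.map_lie, ← LieHom.map_lie, lieQuotientMk_eq_zero]
  rw [← lieQuotientMk_eq_zero, map_sub, map_adExp,
    adExp_eq_add (IsLazard.nsmul_eq_zero p N _) hI, map_add, LieHom.map_lie, sub_self]

end BchMul

/-- The group on the underlying set of `L` given by the Baker–Campbell–Hausdorff product, presented
as a multiplicative copy of `L` via `exp` and `log`. -/
@[ext]
structure LazardGroup (p N : ℕ) (L : Type*) where
  exp ::
  log : L

namespace LazardGroup

variable {p N : ℕ} {L L' : Type*}

/-- The exponential as a bijection. -/
def expEquiv : L ≃ LazardGroup p N L := ⟨exp, log, fun _ => rfl, fun _ => rfl⟩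

instance [Finite L] : Finite (LazardGroup p N L) := .of_equiv L expEquiv

lemma exp_log (a : LazardGroup p N L) : exp a.log = a := rfl

variable [LieRing L] [LieRing L'] [Fact p.Prime] [IsLazard p N L] [IsLazard p N L']

noncomputable instance : Group (LazardGroup p N L) where
  mul a b := exp (bchMul p N a.log b.log)
  one := exp 0
  inv a := exp (-a.log)
  mul_assoc a b c := LazardGroup.ext (bchMul_assoc a.log b.log c.log)
  one_mul a := LazardGroup.ext <| by
    change bchMul p N 0 a.log = a.log
    rw [bchMul_eq_add (zero_lie _), zero_add]
  mul_one a := LazardGroup.ext <| by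
    change bchMul p N a.log 0 = a.log
    rw [bchMul_eq_add (lie_zero _), add_zero]
  inv_mul_cancel a := LazardGroup.ext <| by
    change bchMul p N (-a.log) a.log = 0
    rw [bchMul_eq_add (by simp), neg_add_cancel]

lemma exp_zero : exp (0 : L) = (1 : LazardGroup p N L) := rfl

lemma log_one : (1 : LazardGroup p N L).log = 0 := rfl

lemma log_inv (a : LazardGroup p N L) : a⁻¹.log = -a.log := rfl

lemma exp_bchMul (x y : L) : (exp (bchMul p N x y) : LazardGroup p N L) = exp x * exp y := rfl

lemma log_mul_of_lie_eq_zero {a b : LazardGroup p N L} (h : ⁅a.log, b.log⁆ = 0) :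
    (a * b).log = a.log + b.log :=
  bchMul_eq_add h

lemma log_pow (a : LazardGroup p N L) (k : ℕ) : (a ^ k).log = k • a.log := by
  induction k with
  | zero => rw [pow_zero, log_one, zero_smul]
  | succ k ih =>
    rw [pow_succ, log_mul_of_lie_eq_zero (by simp [ih]), ih, add_smul, one_smul]

lemma exp_zsmul (k : ℤ) (x : L) : (exp (k • x) : LazardGroup p N L) = exp x ^ k := by
  ext
  cases k with
  | ofNat k => simp [log_pow]
  | negSucc k => simp [zpow_negSucc, log_inv, log_pow]

lemma log_conj (a b : LazardGroup p N L) : (a * b * a⁻¹).log = adExp p N a.log b.log :=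
  bchMul_conj a.log b.log

lemma exp_adExp (x y : L) :
    (exp (adExp p N x y) : LazardGroup p N L) = exp x * exp y * (exp x)⁻¹ :=
  LazardGroup.ext (log_conj (exp x) (exp y)).symm

lemma isPGroup : IsPGroup p (LazardGroup p N L) := fun a =>
  ⟨N, LazardGroup.ext <| by rw [log_pow, IsLazard.nsmul_eq_zero, log_one]⟩

/-- The group homomorphism induced by a homomorphism of Lie rings. -/
noncomputable def map (f : L →ₗ⁅ℤ⁆ L') : LazardGroup p N L →* LazardGroup p N L' where
  toFun a := exp (f a.log)
  map_one' := congrArg exp (map_zero f)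
  map_mul' a b := congrArg exp (map_bchMul f a.log b.log)

lemma log_map (f : L →ₗ⁅ℤ⁆ L') (a : LazardGroup p N L) : (map f a).log = f a.log := rfl

section CommGroup

variable {A : Type*} [CommGroup A] (χ : LazardGroup p N L →* A)

/-- The elements `u` of `L` such that translation by `u` does not change `χ`. -/
def periods : AddSubgroup L where
  carrier := {u | ∀ x, χ (exp (x + u)) = χ (exp x)}
  zero_mem' x := by rw [add_zero]
  add_mem' hu hv x := by rw [← add_assoc, hv, hu]
  neg_mem' {u} hu x := by rw [← hu, neg_add_cancel_right]

variable {χ}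

lemma map_exp_add {I : LieIdeal ℤ L} (hI : I.toAddSubgroup ≤ periods χ) {x y : L}
    (hxy : ⁅x, y⁆ ∈ I) : χ (exp (x + y)) = χ (exp x) * χ (exp y) := by
  have h := hI (bchMul_sub_add_mem (p := p) (N := N) I hxy) (x + y)
  rw [add_sub_cancel] at h
  rw [← h, exp_bchMul, map_mul]

lemma lie_mem_periods {I : LieIdeal ℤ L} (hI : I.toAddSubgroup ≤ periods χ) {x y : L}
    (hxy : ∀ z : L, ⁅z, ⁅x, y⁆⁆ ∈ I) : ⁅x, y⁆ ∈ periods χ := by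
  have hconj : χ (exp (adExp p N x y)) = χ (exp y) := by
    rw [exp_adExp, map_mul, map_mul, map_inv, mul_inv_cancel_comm]
  have hlie : χ (exp ⁅x, y⁆) = 1 := by
    have h := hI (adExp_sub_add_mem (p := p) (N := N) I (hxy x)) (y + ⁅x, y⁆)
    rw [add_sub_cancel, hconj, map_exp_add hI (hxy y)] at h
    exact left_eq_mul.1 h
  intro z
  rw [map_exp_add hI (hxy z), hlie, mul_one]

variable (χ) in
lemma lowerCentralSeries_le_periods :
    (LieModule.lowerCentralSeries ℤ L L 1).toAddSubgroup ≤ periods χ := by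
  have descend : ∀ k, (LieModule.lowerCentralSeries ℤ L L (k + 1)).toAddSubgroup ≤ periods χ →
      (LieModule.lowerCentralSeries ℤ L L 1).toAddSubgroup ≤ periods χ := by
    intro k
    induction k with
    | zero => exact id
    | succ k ih =>
      intro h
      refine ih ?_
      have hspan : Submodule.span ℤ {z : L | ∃ x ∈ (⊤ : LieIdeal ℤ L),
          ∃ y ∈ LieModule.lowerCentralSeries ℤ L L k, ⁅x, y⁆ = z} ≤
          (periods χ).toIntSubmodule := by
        refine Submodule.span_le.2 ?_
        rintro _ ⟨x, hx, y, hy, rfl⟩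
        refine lie_mem_periods h fun z => ?_
        rw [LieModule.lowerCentralSeries_succ, LieModule.lowerCentralSeries_succ]
        exact LieSubmodule.lie_mem_lie (LieSubmodule.mem_top z) (LieSubmodule.lie_mem_lie hx hy)
      rw [← LieSubmodule.lieIdeal_oper_eq_linear_span',
        ← LieModule.lowerCentralSeries_succ] at hspan
      exact hspan
  obtain ⟨K, hK⟩ := (IsLazard.isNilpotent (L := L) p N).nilpotent_int
  refine descend K fun x hx => ?_
  have hx0 : x ∈ LieModule.lowerCentralSeries ℤ L L K :=
    LieModule.antitone_lowerCentralSeries ℤ L L K.le_succ hx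
  rw [hK, LieSubmodule.mem_bot] at hx0
  exact hx0 ▸ zero_mem _

variable (χ) in
theorem map_exp_add_eq_mul (x y : L) : χ (exp (x + y)) = χ (exp x) * χ (exp y) :=
  map_exp_add (lowerCentralSeries_le_periods χ)
    (LieSubmodule.lie_mem_lie (LieSubmodule.mem_top x) (LieSubmodule.mem_top y))

variable (χ) in
theorem map_exp_lie_eq_one (x y : L) : χ (exp ⁅x, y⁆) = 1 := by
  have h := lowerCentralSeries_le_periods χ
    (LieSubmodule.lie_mem_lie (LieSubmodule.mem_top x) (LieSubmodule.mem_top y)) 0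
  rwa [zero_add, exp_zero, map_one] at h

end CommGroup

end LazardGroup

/-! ### The Lazard correspondence -/

lemma commutator_le_frattini {G : Type*} [Group G] [Group.IsNilpotent G] :
    commutator G ≤ frattini G := by
  refine le_iInf₂ fun H hH => ?_
  have : H.Normal :=
    Subgroup.NormalizerCondition.normal_of_coatom H Group.normalizerCondition_of_isNilpotent hH
  have : Nontrivial (G ⧸ H) := QuotientGroup.nontrivial_iff.2 hH.1
  by_contra hle
  have sup_eq_top : H ⊔ commutator G = ⊤ :=
    hH.2 _ (lt_of_le_of_ne le_sup_left fun h => hle (h ▸ le_sup_right))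
  refine (Group.IsSolvable.commutator_lt_top_of_nontrivial (G ⧸ H)).ne ?_
  have map_eq := congrArg (Subgroup.map (QuotientGroup.mk' H)) sup_eq_top
  rwa [Subgroup.map_sup, QuotientGroup.map_mk'_self, bot_sup_eq, commutator,
    Subgroup.map_commutator,
    Subgroup.map_top_of_surjective _ (QuotientGroup.mk'_surjective H)] at map_eq

lemma eq_top_of_map_abelianization_eq_top {G : Type*} [Group G] [Finite G] [Group.IsNilpotent G]
    {S : Subgroup G} (h : S.map Abelianization.of = ⊤) : S = ⊤ := by
  refine frattini_nongenerating (top_unique ?_)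
  rw [← Subgroup.comap_top Abelianization.of, ← h, Subgroup.comap_map_eq, Abelianization.ker_of]
  exact sup_le_sup_left commutator_le_frattini S

namespace LazardGroup

variable {p N : ℕ} {L L' : Type*} [LieRing L] [LieRing L'] [Fact p.Prime] [IsLazard p N L]
  [IsLazard p N L'] [Finite L] [Finite L']

lemma comap_map_incl_lieSpan_eq_top (S : Subgroup (LazardGroup p N L)) :
    S.comap (map (LieSubalgebra.lieSpan ℤ L {x : L | exp x ∈ S}).incl) = ⊤ := by
  set U := LieSubalgebra.lieSpan ℤ L {x : L | exp x ∈ S}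
  set χ := Abelianization.of (G := LazardGroup p N U)
  have : Group.IsNilpotent (LazardGroup p N U) := (isPGroup (p := p)).isNilpotent
  suffices h : ∀ x (hx : x ∈ U), χ (exp ⟨x, hx⟩) ∈ (S.comap (map U.incl)).map χ by
    refine eq_top_of_map_abelianization_eq_top (top_unique fun a _ => ?_)
    obtain ⟨u, rfl⟩ := QuotientGroup.mk_surjective a
    exact h u.log u.log.2
  intro x hx
  induction hx using LieSubalgebra.lieSpan_induction with
  | mem x hx => exact Subgroup.mem_map_of_mem χ hx
  | zero => exact one_mem _
  | add x y hx hy ihx ihy =>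
    have h := map_exp_add_eq_mul χ ⟨x, hx⟩ ⟨y, hy⟩
    exact h ▸ mul_mem ihx ihy
  | smul k x hx ihx =>
    have h := congrArg χ (exp_zsmul (p := p) (N := N) k (⟨x, hx⟩ : U))
    rw [map_zpow] at h
    exact h ▸ zpow_mem ihx k
  | lie x y hx hy =>
    have h := map_exp_lie_eq_one χ ⟨x, hx⟩ ⟨y, hy⟩
    exact h ▸ one_mem _

lemma exp_mem_of_mem_lieSpan {S : Subgroup (LazardGroup p N L)} {x : L}
    (hx : x ∈ LieSubalgebra.lieSpan ℤ L {x : L | exp x ∈ S}) : exp x ∈ S := by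
  have h : (exp ⟨x, hx⟩ : LazardGroup p N _) ∈ S.comap (map (LieSubalgebra.incl _)) :=
    comap_map_incl_lieSpan_eq_top S ▸ Subgroup.mem_top _
  exact h

/-- The logarithm of a subgroup, as a Lie subring. -/
noncomputable def logSubalgebra (S : Subgroup (LazardGroup p N L)) : LieSubalgebra ℤ L where
  carrier := {x | exp x ∈ S}
  add_mem' hx hy := exp_mem_of_mem_lieSpan <|
    add_mem (LieSubalgebra.subset_lieSpan hx) (LieSubalgebra.subset_lieSpan hy)
  zero_mem' := one_mem S
  smul_mem' k _ hx := exp_mem_of_mem_lieSpan <|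
    LieSubalgebra.smul_mem _ k (LieSubalgebra.subset_lieSpan hx)
  lie_mem' hx hy := exp_mem_of_mem_lieSpan <|
    LieSubalgebra.lie_mem _ (LieSubalgebra.subset_lieSpan hx) (LieSubalgebra.subset_lieSpan hy)

/-- The graph of a group homomorphism between Lazard groups. -/
noncomputable def logGraph (φ : LazardGroup p N L →* LazardGroup p N L') :
    LieSubalgebra ℤ (L × L') :=
  logSubalgebra ((φ.comp (map (LieHom.fst ℤ L L'))).eqLocus (map (LieHom.snd ℤ L L')))

lemma mem_logGraph {φ : LazardGroup p N L →* LazardGroup p N L'} {u : L × L'} :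
    u ∈ logGraph φ ↔ (φ (exp u.1)).log = u.2 :=
  LazardGroup.ext_iff

/-- A group homomorphism between Lazard groups, as a homomorphism of Lie rings. -/
noncomputable def toLieHom (φ : LazardGroup p N L →* LazardGroup p N L') :
    L →ₗ⁅ℤ⁆ L' :=
  have mem_graph : ∀ x : L, (x, (φ (exp x)).log) ∈ logGraph φ := fun _ => mem_logGraph.2 rfl
  { (AddMonoidHom.mk' (fun x => (φ (exp x)).log) fun x y =>
      mem_logGraph.1 (add_mem (mem_graph x) (mem_graph y))).toIntLinearMap with
    map_lie' := fun {x y} => mem_logGraph.1 ((logGraph φ).lie_mem (mem_graph x) (mem_graph y)) }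

lemma nonempty_mulEquiv_iff :
    Nonempty (LazardGroup p N L ≃* LazardGroup p N L') ↔ Nonempty (L ≃ₗ⁅ℤ⁆ L') := by
  constructor
  · rintro ⟨φ⟩
    exact ⟨{ toLieHom φ.toMonoidHom with
      invFun := toLieHom φ.symm.toMonoidHom
      left_inv := fun x => congrArg log (φ.symm_apply_apply (exp x))
      right_inv := fun y => congrArg log (φ.apply_symm_apply (exp y)) }⟩
  · rintro ⟨f⟩
    exact ⟨{ map (p := p) (N := N) f.toLieHom with
      invFun := map f.symm.toLieHom
      left_inv := fun a => congrArg exp (f.symm_apply_apply a.log)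
      right_inv := fun b => congrArg exp (f.apply_symm_apply b.log) }⟩

omit [Finite L]

lemma commute_iff {a b : LazardGroup p N L} : Commute a b ↔ ⁅a.log, b.log⁆ = 0 := by
  constructor
  · intro hab
    have lie_mem : ∀ k, ⁅a.log, b.log⁆ ∈ LieModule.lowerCentralSeries ℤ L L k := by
      intro k
      induction k with
      | zero => exact LieSubmodule.mem_top _
      | succ k ih =>
        have h := adExp_sub_add_mem (p := p) (N := N)
          (LieModule.lowerCentralSeries ℤ L L (k + 1)) (x := a.log) (y := b.log) <| by
            rw [LieModule.lowerCentralSeries_succ]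
            exact LieSubmodule.lie_mem_lie (LieSubmodule.mem_top _) ih
        rw [← log_conj, hab.eq, mul_inv_cancel_right, sub_add_cancel_left] at h
        exact neg_mem_iff.1 h
    obtain ⟨k, hk⟩ := (IsLazard.isNilpotent (L := L) p N).nilpotent_int
    simpa [hk] using lie_mem k
  · intro h
    ext
    rw [log_mul_of_lie_eq_zero h, log_mul_of_lie_eq_zero (by rw [← lie_skew, h, neg_zero]),
      add_comm]

lemma map_lieQuotientMk_eq_one {I : LieIdeal ℤ L} {a : LazardGroup p N L} :
    map (p := p) (N := N) (lieQuotientMk I) a = 1 ↔ a.log ∈ I :=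
  LazardGroup.ext_iff.trans lieQuotientMk_eq_zero

lemma log_sub_mem {I : LieIdeal ℤ L} {a b : LazardGroup p N L} (h : (a * b⁻¹).log ∈ I) :
    a.log - b.log ∈ I := by
  rw [← map_lieQuotientMk_eq_one (p := p) (N := N), map_mul, map_inv, mul_inv_eq_one] at h
  rw [← lieQuotientMk_eq_zero, map_sub, sub_eq_zero]
  exact congrArg log h

open scoped commutatorElement

lemma log_commutator_mem_iff {I : LieIdeal ℤ L} {a b : LazardGroup p N L} :
    ⁅a, b⁆.log ∈ I ↔ ⁅a.log, b.log⁆ ∈ I := by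
  rw [← map_lieQuotientMk_eq_one (p := p) (N := N), map_commutatorElement,
    commutatorElement_eq_one_iff_commute, commute_iff, log_map, log_map, ← LieHom.map_lie,
    lieQuotientMk_eq_zero]

lemma commutator_pow_eq_one_iff :
    (∀ a b : LazardGroup p N L, ⁅a, b⁆ ^ p = 1) ↔ ∀ x y : L, p • ⁅x, y⁆ = 0 := by
  let Ω : LieIdeal ℤ L :=
    { (nsmulAddMonoidHom p : L →+ L).ker with
      smul_mem' := fun c _ hx => zsmul_mem (K := (nsmulAddMonoidHom p : L →+ L).ker) hx c
      lie_mem := fun {x y} (hy : p • y = 0) => show p • ⁅x, y⁆ = 0 by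
        rw [← lie_nsmul, hy, lie_zero] }
  have pow_eq_one_iff : ∀ a : LazardGroup p N L, a ^ p = 1 ↔ a.log ∈ Ω := fun a => by
    rw [LazardGroup.ext_iff, log_pow, log_one]
    rfl
  simp only [pow_eq_one_iff, log_commutator_mem_iff]
  exact ⟨fun h x y => h (exp x) (exp y), fun h a b => h a.log b.log⟩

end LazardGroup

/-! ### Chains of subgroups -/

section Chain

variable {A : Type*} [AddCommGroup A] {p : ℕ}

lemma card_dvd_pow_sub_one_of_lt (hp : p.Prime) {H K : AddSubgroup A} {r : ℕ} (h : H < K)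
    (hK : Nat.card K ∣ p ^ r) : Nat.card H ∣ p ^ (r - 1) := by
  have : Finite K := Nat.finite_of_card_ne_zero (ne_zero_of_dvd_ne_zero (by simp [hp.ne_zero]) hK)
  obtain ⟨b, hb, hKb⟩ := (Nat.dvd_prime_pow hp).1 hK
  obtain ⟨a, ha, hHa⟩ := (Nat.dvd_prime_pow hp).1 (hKb ▸ AddSubgroup.card_dvd_of_le h.le)
  have hab : a ≠ b := fun hab =>
    h.ne (AddSubgroup.eq_of_le_of_card_ge h.le (by rw [hHa, hKb, hab]))
  exact hHa ▸ pow_dvd_pow p (by lia)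

lemma card_dvd_pow_sub (hp : p.Prime) {D : ℕ → AddSubgroup A} (hD : Antitone D)
    (eq_bot : ∀ k, D (k + 1) = D k → D k = ⊥) {i r : ℕ} (hi : Nat.card (D i) ∣ p ^ r) (k : ℕ) :
    Nat.card (D (i + k)) ∣ p ^ (r - k) := by
  induction k with
  | zero => exact hi
  | succ k ih =>
    by_cases h : D (i + k + 1) = D (i + k)
    · rw [← add_assoc, h, eq_bot _ h, AddSubgroup.card_bot]
      exact one_dvd _
    · exact card_dvd_pow_sub_one_of_lt hp ((hD (i + k).le_succ).lt_of_ne h) ih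

end Chain

section RelCentralSeries

variable {L : Type*} [LieRing L]

/-- The fastest descending series of `L` whose factors are centralised by `L` and fixed by `α`.
For `α = id` this is the lower central series. -/
def relCentralSeries (α : L → L) : ℕ → AddSubgroup L
  | 0 => ⊤
  | k + 1 => .closure ({z | ∃ x : L, ∃ y ∈ relCentralSeries α k, ⁅x, y⁆ = z} ∪
      {z | ∃ y ∈ relCentralSeries α k, α y - y = z})

variable {α : L → L}

lemma lie_mem_relCentralSeries {k : ℕ} (x : L) {y : L} (hy : y ∈ relCentralSeries α k) :
    ⁅x, y⁆ ∈ relCentralSeries α (k + 1) :=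
  AddSubgroup.subset_closure (.inl ⟨x, y, hy, rfl⟩)

lemma sub_mem_relCentralSeries {k : ℕ} {y : L} (hy : y ∈ relCentralSeries α k) :
    α y - y ∈ relCentralSeries α (k + 1) :=
  AddSubgroup.subset_closure (.inr ⟨y, hy, rfl⟩)

lemma relCentralSeries_antitone (α : L → L) : Antitone (relCentralSeries α) := by
  refine antitone_nat_of_succ_le fun k => ?_
  induction k with
  | zero => exact le_top
  | succ k ih =>
    refine AddSubgroup.closure_mono (Set.union_subset_union ?_ ?_)
    · exact fun _ ⟨x, y, hy, h⟩ => ⟨x, y, ih hy, h⟩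
    · exact fun _ ⟨y, hy, h⟩ => ⟨y, ih hy, h⟩

lemma relCentralSeries_le {D : ℕ → AddSubgroup L} (zero_eq_top : D 0 = ⊤)
    (lie_mem : ∀ i, ∀ x : L, ∀ y ∈ D i, ⁅x, y⁆ ∈ D (i + 1))
    (sub_mem : ∀ i, ∀ y ∈ D i, α y - y ∈ D (i + 1)) (k : ℕ) : relCentralSeries α k ≤ D k := by
  induction k with
  | zero => exact zero_eq_top.ge
  | succ k ih =>
    rw [relCentralSeries, AddSubgroup.closure_le]
    rintro _ (⟨x, y, hy, rfl⟩ | ⟨y, hy, rfl⟩)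
    · exact lie_mem k x y (ih hy)
    · exact sub_mem k y (ih hy)

lemma relCentralSeries_eq_bot_of_succ_eq {K : ℕ} (hK : relCentralSeries α K = ⊥) (k : ℕ)
    (h : relCentralSeries α (k + 1) = relCentralSeries α k) : relCentralSeries α k = ⊥ := by
  have stationary : ∀ j, relCentralSeries α (k + j) = relCentralSeries α k := by
    intro j
    induction j with
    | zero => rfl
    | succ j ih => rw [← add_assoc, relCentralSeries, ih, ← relCentralSeries, h]
  rw [← stationary K, eq_bot_iff, ← hK]
  exact relCentralSeries_antitone α (Nat.le_add_left K k)

lemma relCentralSeries_two_eq_one [IsAddCyclic (L ⧸ relCentralSeries (id : L → L) 1)] :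
    relCentralSeries (id : L → L) 2 = relCentralSeries id 1 := by
  refine (relCentralSeries_antitone _ one_le_two).antisymm ?_
  obtain ⟨g, hg⟩ := IsAddCyclic.exists_generator (α := L ⧸ relCentralSeries (id : L → L) 1)
  obtain ⟨x, rfl⟩ := QuotientAddGroup.mk_surjective g
  have exists_eq_zsmul_add :
      ∀ z : L, ∃ k : ℤ, ∃ d ∈ relCentralSeries (id : L → L) 1, k • x + d = z := by
    intro z
    obtain ⟨k, hk⟩ := AddSubgroup.mem_zmultiples_iff.1 (hg (z : L ⧸ relCentralSeries id 1))
    refine ⟨k, z - k • x, ?_, add_sub_cancel _ _⟩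
    rw [← QuotientAddGroup.eq_zero_iff, QuotientAddGroup.mk_sub, QuotientAddGroup.mk_zsmul, hk,
      sub_self]
  refine (AddSubgroup.closure_le _).2 ?_
  rintro _ (⟨u, v, -, rfl⟩ | ⟨y, -, rfl⟩)
  · obtain ⟨k, d, hd, rfl⟩ := exists_eq_zsmul_add u
    obtain ⟨l, d', hd', rfl⟩ := exists_eq_zsmul_add v
    have hlie : ⁅k • x + d, l • x + d'⁆ = ⁅k • x + d, d'⁆ - ⁅l • x, d⁆ := by
      rw [lie_add, add_lie _ _ (l • x), lie_zsmul, zsmul_lie, lie_self, smul_zero, smul_zero,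
        zero_add, ← lie_skew d]
      abel
    rw [hlie]
    exact sub_mem (lie_mem_relCentralSeries _ hd') (lie_mem_relCentralSeries _ hd)
  · simp

lemma exists_relCentralSeries_id_eq_bot [LieRing.IsNilpotent L] :
    ∃ K, relCentralSeries (id : L → L) K = ⊥ := by
  obtain ⟨K, hK⟩ := LieModule.IsNilpotent.nilpotent_int (L := L) (M := L)
  refine ⟨K, eq_bot_iff.2 fun x hx => ?_⟩
  have hle := relCentralSeries_le (α := id)
    (D := fun k => (LieModule.lowerCentralSeries ℤ L L k).toAddSubgroup) rfl
    (fun i x y hy => by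
      rw [LieModule.lowerCentralSeries_succ]
      exact LieSubmodule.lie_mem_lie (LieSubmodule.mem_top x) hy)
    (fun i y _ => by simp) K
  have hx' : x ∈ LieModule.lowerCentralSeries ℤ L L K := hle hx
  rwa [hK] at hx'

variable {p : ℕ} [Fact p.Prime]

lemma card_relCentralSeries_id_one_dvd [LieRing.IsNilpotent L] {m : ℕ}
    (hc : Nat.card L = p ^ m) :
    Nat.card (relCentralSeries (id : L → L) 1) ∣ p ^ (m - 2) := by
  have hp : p.Prime := Fact.out
  obtain ⟨K, hK⟩ := exists_relCentralSeries_id_eq_bot (L := L)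
  obtain ⟨a, ha, hcard⟩ := (Nat.dvd_prime_pow hp).1
    (hc ▸ AddSubgroup.card_addSubgroup_dvd_card (relCentralSeries (id : L → L) 1))
  have hmul := AddSubgroup.card_eq_card_quotient_mul_card_addSubgroup
    (relCentralSeries (id : L → L) 1)
  rw [hc, hcard] at hmul
  rcases Nat.lt_or_ge (a + 1) m with ham | ham
  · exact hcard ▸ pow_dvd_pow p (by lia)
  suffices h : relCentralSeries (id : L → L) 1 = ⊥ by simp [h]
  have : IsAddCyclic (L ⧸ relCentralSeries (id : L → L) 1) := by
    have hq : Nat.card (L ⧸ relCentralSeries (id : L → L) 1) = p ^ (m - a) := by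
      rw [← Nat.sub_add_cancel ha, pow_add] at hmul
      exact (Nat.eq_of_mul_eq_mul_right (pow_pos hp.pos a) hmul).symm
    rcases Nat.le_one_iff_eq_zero_or_eq_one.1 (by lia : m - a ≤ 1) with h | h
    · rw [h, pow_zero, Nat.card_eq_one_iff_unique] at hq
      have := hq.1
      infer_instance
    · exact isAddCyclic_of_prime_card (hq.trans (by rw [h, pow_one]))
  exact relCentralSeries_eq_bot_of_succ_eq hK 1 relCentralSeries_two_eq_one

theorem isLazard_of_card_eq [LieRing.IsNilpotent L] {N m : ℕ} (hc : Nat.card L = p ^ m)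
    (hmp : m ≤ p) (hmN : m ≤ N) : IsLazard p N L := by
  have hp : p.Prime := Fact.out
  have : Finite L := Nat.finite_of_card_ne_zero (by simp [hc, hp.ne_zero])
  obtain ⟨K, hK⟩ := exists_relCentralSeries_id_eq_bot (L := L)
  have hcard := card_dvd_pow_sub hp (relCentralSeries_antitone id)
    (relCentralSeries_eq_bot_of_succ_eq hK) (card_relCentralSeries_id_one_dvd hc) (p - 2)
  rw [show 1 + (p - 2) = p - 1 by have := hp.two_le; lia, show m - 2 - (p - 2) = 0 by lia,
    pow_zero, Nat.dvd_one, AddSubgroup.card_eq_one] at hcard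
  exact ⟨⟨.ofChain (relCentralSeries id) rfl (relCentralSeries_antitone id)
    (fun _ x _ hy => lie_mem_relCentralSeries x hy) hcard fun x => by
      rw [← Nat.add_sub_cancel' hmN, pow_add, mul_comm, mul_smul, ← hc, card_nsmul_eq_zero',
        smul_zero]⟩⟩

end RelCentralSeries

/-! ### Logarithms in finite filtered rings -/

namespace RingFiltration

variable {p N : ℕ} {A : Type*} [Ring A] (Φ : RingFiltration p N A)

/-- The elements of positive degree. -/
def positivePart : NonUnitalSubring A where
  __ := Φ.F 1
  mul_mem' ha hb := Φ.mem_of_le one_le_two (Φ.mul_mem ha hb)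

variable [Fact p.Prime] [Finite A] {B : NonUnitalSubring A}

lemma exists_exp_eq (hB : B ≤ Φ.positivePart) {u : A} (hu : u - 1 ∈ B) :
    ∃ a ∈ B, truncExp p N a = u := by
  have exp_sub_one_mem : ∀ a ∈ B, truncExp p N a - 1 ∈ B := fun a ha => by
    have h := truncExp_smul_sub_mem (S := B.toAddSubgroup) (z := a) (Φ.nsmul_eq_zero 1)
      (by simpa using ha) fun y hy => B.mul_mem ha hy
    rwa [smul_eq_mul, mul_one] at h
  let f : B → B := fun a => ⟨truncExp p N a.1 - 1, exp_sub_one_mem a a.2⟩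
  have f_injective : Function.Injective f := fun a b hab => Subtype.ext <|
    Φ.exp_injective (hB a.2) (hB b.2) (sub_left_injective (congrArg Subtype.val hab))
  obtain ⟨a, ha⟩ := Finite.surjective_of_injective f_injective ⟨u - 1, hu⟩
  exact ⟨a, a.2, sub_left_injective (congrArg Subtype.val ha)⟩

lemma mem_of_exp_sub_one_mem (hB : B ≤ Φ.positivePart) {a : A} (ha : a ∈ Φ.F 1)
    (h : truncExp p N a - 1 ∈ B) : a ∈ B := by
  obtain ⟨b, hb, hba⟩ := Φ.exists_exp_eq hB h
  exact Φ.exp_injective (hB hb) ha hba ▸ hb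

end RingFiltration

instance {M : Type*} [AddCommGroup M] [Finite M] : Finite (Module.End ℤ M) :=
  .of_injective (fun f : Module.End ℤ M => (f : M → M)) DFunLike.coe_injective

namespace ModuleFiltration

variable {p N : ℕ} {M M' : Type*} [AddCommGroup M] [AddCommGroup M']

/-- The product filtration. -/
def prod (D : ModuleFiltration p N M) (D' : ModuleFiltration p N M') :
    ModuleFiltration p N (M × M') where
  F i := (D.F i).prod (D'.F i)
  succ_le i := AddSubgroup.prod_mono (D.succ_le i) (D'.succ_le i)
  eq_top := by rw [D.eq_top, D'.eq_top, AddSubgroup.top_prod_top]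
  eq_bot := by rw [D.eq_bot, D'.eq_bot, AddSubgroup.bot_prod_bot]
  nsmul_eq_zero m := Prod.ext (D.nsmul_eq_zero m.1) (D'.nsmul_eq_zero m.2)

variable (D : ModuleFiltration p N M) [Fact p.Prime] [Finite M] {a : Module.End ℤ M}

/-- The logarithm of `u` is a polynomial in `u - 1` without constant term. -/
lemma apply_mem_of_exp_sub_mem (ha : a ∈ D.endFiltration.F 1) {S T : AddSubgroup M} (hTS : T ≤ S)
    (h : ∀ y ∈ S, truncExp p N a y - y ∈ T) {y : M} (hy : y ∈ S) : a y ∈ T := by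
  let B : NonUnitalSubring (Module.End ℤ M) :=
    { carrier := {b | b ∈ D.endFiltration.F 1 ∧ ∀ y ∈ S, b y ∈ T}
      add_mem' := fun ha hb =>
        ⟨add_mem ha.1 hb.1, fun y hy => add_mem (ha.2 y hy) (hb.2 y hy)⟩
      zero_mem' := ⟨zero_mem _, fun _ _ => zero_mem _⟩
      neg_mem' := fun ha => ⟨neg_mem ha.1, fun y hy => neg_mem (ha.2 y hy)⟩
      mul_mem' := fun ha hb => ⟨D.endFiltration.positivePart.mul_mem ha.1 hb.1,
        fun y hy => ha.2 _ (hTS (hb.2 y hy))⟩ }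
  have hB : B ≤ D.endFiltration.positivePart :=
    fun b (hb : b ∈ D.endFiltration.F 1 ∧ ∀ y ∈ S, b y ∈ T) => hb.1
  have haB : a ∈ B := D.endFiltration.mem_of_exp_sub_one_mem hB ha
    ⟨D.endFiltration.exp_sub_one_mem ha, h⟩
  exact haB.2 y hy

lemma apply_eq_zero_of_exp_eq_self (ha : a ∈ D.endFiltration.F 1) {z : M}
    (h : truncExp p N a z = z) : a z = 0 := by
  refine D.apply_mem_of_exp_sub_mem ha (S := .zmultiples z) (T := ⊥) bot_le ?_
    (AddSubgroup.mem_zmultiples z)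
  rintro _ ⟨k, rfl⟩
  change truncExp p N a (k • z) - k • z = 0
  rw [map_zsmul, h, sub_self]

end ModuleFiltration

namespace LieFiltration

variable {p N : ℕ} {L : Type*} [LieRing L] (Γ : LieFiltration p N L)

/-- The underlying filtration of the abelian group `L`. -/
def toModuleFiltration : ModuleFiltration p N L where
  F := Γ.F
  succ_le := Γ.succ_le
  eq_top := top_unique (Γ.eq_top.ge.trans (Γ.succ_le 0))
  eq_bot := Γ.eq_bot
  nsmul_eq_zero := Γ.nsmul_eq_zero

/-- The filtration of the ring of endomorphisms of the abelian group `L`. -/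
abbrev endFiltration : RingFiltration p N (Module.End ℤ L) := Γ.toModuleFiltration.endFiltration

lemma ad_mem {i : ℕ} {x : L} (hx : x ∈ Γ.F i) : LieAlgebra.ad ℤ L x ∈ Γ.endFiltration.F i :=
  fun j _ hy => add_comm i j ▸ Γ.lie_mem hx hy

end LieFiltration

namespace LazardGroup

variable {p N : ℕ} {L : Type*} [LieRing L] [Fact p.Prime] [IsLazard p N L] [Finite L]

/-- The logarithm of a normal subgroup, as a Lie ideal. -/
noncomputable def logIdeal (S : Subgroup (LazardGroup p N L)) [hS : S.Normal] : LieIdeal ℤ L where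
  __ := (logSubalgebra S).toSubmodule
  lie_mem {x y} hy := by
    obtain ⟨Γ⟩ := IsLazard.nonempty_lieFiltration (p := p) (N := N) (L := L)
    refine Γ.toModuleFiltration.apply_mem_of_exp_sub_mem (a := LieAlgebra.ad ℤ L x)
      (S := (logSubalgebra S).toSubmodule.toAddSubgroup) (Γ.ad_mem (Γ.mem_one x)) le_rfl
      (fun z hz => ?_) hy
    refine sub_mem (?_ : exp (adExp p N x z) ∈ S) hz
    rw [exp_adExp]
    exact hS.conj_mem _ hz _

lemma mem_logIdeal {S : Subgroup (LazardGroup p N L)} [S.Normal] {x : L} :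
    x ∈ logIdeal S ↔ exp x ∈ S := Iff.rfl

end LazardGroup

/-! ### Filtrations adapted to an automorphism -/

section Stable

variable {p N : ℕ} {L : Type*} [LieRing L]

lemma exists_mem_relCentralSeries_apply_eq [Finite L] {α : L →ₗ⁅ℤ⁆ L} (hα : Function.Surjective α)
    {j : ℕ} {y : L} (hy : y ∈ relCentralSeries α j) : ∃ y' ∈ relCentralSeries α j, α y' = y := by
  have apply_mem : ∀ z ∈ relCentralSeries α j, α z ∈ relCentralSeries α j := fun z hz => by
    rw [← sub_add_cancel (α z) z]
    exact add_mem (relCentralSeries_antitone α j.le_succ (sub_mem_relCentralSeries hz)) hz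
  let r : relCentralSeries α j → relCentralSeries α j := fun z => ⟨α z, apply_mem z z.2⟩
  have r_injective : Function.Injective r := fun a b hab => Subtype.ext <|
    Finite.injective_iff_surjective.2 hα (congrArg Subtype.val hab)
  obtain ⟨y', hy'⟩ := Finite.surjective_of_injective r_injective ⟨y, hy⟩
  exact ⟨y', y'.2, congrArg Subtype.val hy'⟩

lemma apply_sub_mem_ofChain [Finite L] {α : L →ₗ⁅ℤ⁆ L} (hα : Function.Surjective α)
    (eq_bot : relCentralSeries α (p - 1) = ⊥) (nsmul_eq_zero : ∀ x : L, p ^ N • x = 0) {i : ℕ}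
    {x : L} (hx : x ∈ (LieFiltration.ofChain (relCentralSeries α) rfl (relCentralSeries_antitone α)
      (fun _ z _ hy => lie_mem_relCentralSeries z hy) eq_bot nsmul_eq_zero).F i) :
    α x - x ∈ (LieFiltration.ofChain (relCentralSeries α) rfl (relCentralSeries_antitone α)
      (fun _ z _ hy => lie_mem_relCentralSeries z hy) eq_bot nsmul_eq_zero).F (i + 1) := by
  refine ⟨?_, fun j y hy => ?_⟩
  · rcases i with _ | i
    · exact AddSubgroup.mem_top _
    · exact sub_mem_relCentralSeries hx.1
  · obtain ⟨y', hy', rfl⟩ := exists_mem_relCentralSeries_apply_eq hα hy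
    have hlie : ⁅α x - x, α y'⁆ = (α ⁅x, y'⁆ - ⁅x, y'⁆) - ⁅x, α y' - y'⁆ := by
      rw [sub_lie, lie_sub, LieHom.map_lie]
      abel
    rw [hlie]
    refine sub_mem (sub_mem_relCentralSeries (hx.2 j y' hy')) ?_
    have h := hx.2 _ _ (sub_mem_relCentralSeries hy')
    rwa [add_right_comm] at h

open LazardGroup
open scoped commutatorElement

variable [Fact p.Prime] [IsLazard p N L]

lemma relCentralSeries_le_logIdeal [Finite L] {G : Type*} [Group G] {f : LazardGroup p N L →* G}
    {g : G} {α : L →ₗ⁅ℤ⁆ L} (hg : ∀ x, g * f (exp x) * g⁻¹ = f (exp (α x))) (k : ℕ) :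
    relCentralSeries α k ≤
      (logIdeal (((⊤ : Subgroup G).lowerCentralSeries k).comap f)).toAddSubgroup := by
  have commutator_mem : ∀ i (h y : G), y ∈ (⊤ : Subgroup G).lowerCentralSeries i →
      ⁅h, y⁆ ∈ (⊤ : Subgroup G).lowerCentralSeries (i + 1) := fun i h y hy => by
    rw [← commutatorElement_inv]
    exact inv_mem (Subgroup.commutator_mem_commutator hy (Subgroup.mem_top h))
  refine relCentralSeries_le (D := fun i =>
    (logIdeal (((⊤ : Subgroup G).lowerCentralSeries i).comap f)).toAddSubgroup) ?_ ?_ ?_ k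
  · exact eq_top_iff.2 fun x _ => Subgroup.mem_top (f (exp x))
  · refine fun i x y hy => (log_commutator_mem_iff (p := p) (N := N) (a := exp x)
      (b := exp y)).1 (mem_logIdeal.2 ?_)
    rw [exp_log, Subgroup.mem_comap, map_commutatorElement]
    exact commutator_mem i _ _ hy
  · refine fun i y hy => log_sub_mem (p := p) (N := N) (a := exp (α y)) (b := exp y)
      (mem_logIdeal.2 ?_)
    rw [exp_log, Subgroup.mem_comap, map_mul, map_inv, ← hg]
    exact commutator_mem i _ _ hy

theorem exists_lieFiltration_apply_sub_mem {m : ℕ} (hc : Nat.card L = p ^ m) (hm : m < p)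
    {G : Type*} [Group G] [Group.IsNilpotent G] {f : LazardGroup p N L →* G}
    (hf : Function.Injective f) {g : G} {α : L →ₗ⁅ℤ⁆ L} (hα : Function.Surjective α)
    (hg : ∀ x, g * f (exp x) * g⁻¹ = f (exp (α x))) :
    ∃ Γ : LieFiltration p N L, ∀ i, ∀ x ∈ Γ.F i, α x - x ∈ Γ.F (i + 1) := by
  have hp : p.Prime := Fact.out
  have : Finite L := Nat.finite_of_card_ne_zero (by simp [hc, hp.ne_zero])
  obtain ⟨K, hK⟩ := Subgroup.nilpotent_iff_lowerCentralSeries.1 ‹Group.IsNilpotent G›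
  have eq_bot : relCentralSeries α K = ⊥ := eq_bot_iff.2 fun x hx => by
    have hx' : f (exp x) ∈ (⊤ : Subgroup G).lowerCentralSeries K :=
      relCentralSeries_le_logIdeal hg K hx
    rw [hK, Subgroup.mem_bot, ← map_one f] at hx'
    exact congrArg log (hf hx')
  have hcard := card_dvd_pow_sub hp (relCentralSeries_antitone α)
    (relCentralSeries_eq_bot_of_succ_eq eq_bot) (i := 0) (r := m)
    (hc ▸ AddSubgroup.card_addSubgroup_dvd_card _) (p - 1)
  rw [zero_add, Nat.sub_eq_zero_of_le (Nat.le_sub_one_of_lt hm), pow_zero, Nat.dvd_one,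
    AddSubgroup.card_eq_one] at hcard
  exact ⟨_, fun i x hx => apply_sub_mem_ofChain hα hcard (IsLazard.nsmul_eq_zero p N) hx⟩

end Stable

/-! ### The logarithm of an automorphism is a derivation -/

section Derivation

variable {p N : ℕ}

namespace RingFiltration

variable {A : Type*} [Ring A] (Φ : RingFiltration p N A) {z : A}

/-- The filtration of the subgroup of elements of degree at least `0`. -/
def toModuleFiltration : ModuleFiltration p N (Φ.F 0) where
  F i := (Φ.F i).addSubgroupOf (Φ.F 0)
  succ_le i _ ha := Φ.succ_le i ha
  eq_top := AddSubgroup.addSubgroupOf_self _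
  eq_bot := by rw [Φ.eq_bot, AddSubgroup.bot_addSubgroupOf]
  nsmul_eq_zero a := Subtype.ext (Φ.nsmul_eq_zero a)

lemma lie_mem_succ {i : ℕ} {a : A} (hz : z ∈ Φ.F 1) (ha : a ∈ Φ.F i) : ⁅z, a⁆ ∈ Φ.F (i + 1) :=
  sub_mem (Φ.mul_mem_succ_left hz ha) (Φ.mul_mem ha hz)

/-- The restriction of `ad z` to the subgroup of elements of degree at least `0`. -/
def adRestrict (hz : z ∈ Φ.F 1) : Module.End ℤ (Φ.F 0) :=
  (((LieAlgebra.ad ℤ A z).toAddMonoidHom.comp (Φ.F 0).subtype).codRestrict (Φ.F 0) fun a =>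
    Φ.succ_le 0 (Φ.lie_mem_succ hz a.2)).toIntLinearMap

end RingFiltration

variable {L : Type*} [LieRing L] [Finite L] [Fact p.Prime]

/-- Apply `apply_mem_of_exp_sub_mem` to the graph of `ad`, on which `(δ, ad δ)` acts. -/
lemma LieFiltration.leibniz_of_exp (Γ : LieFiltration p N L) {δ : Module.End ℤ L}
    (hδ : δ ∈ Γ.endFiltration.F 1)
    (h : ∀ x y : L, truncExp p N δ ⁅x, y⁆ = ⁅truncExp p N δ x, truncExp p N δ y⁆) (x y : L) :
    δ ⁅x, y⁆ = ⁅x, δ y⁆ - ⁅y, δ x⁆ := by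
  set Φ := Γ.endFiltration
  let D := Γ.toModuleFiltration.prod Φ.toModuleFiltration
  let d : Module.End ℤ (L × Φ.F 0) := LinearMap.prodMap δ (Φ.adRestrict hδ)
  have hd : d ∈ D.endFiltration.F 1 := fun i v hv =>
    ⟨hδ i v.1 hv.1, Φ.lie_mem_succ hδ (AddSubgroup.mem_addSubgroupOf.1 hv.2)⟩
  let graph : AddSubgroup (L × Φ.F 0) :=
    ((Φ.F 0).subtype.comp (AddMonoidHom.snd L (Φ.F 0))).eqLocus
      ((LieAlgebra.ad ℤ L).toLinearMap.toAddMonoidHom.comp (AddMonoidHom.fst L (Φ.F 0)))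
  have exp_fst : ∀ v, (truncExp p N d v).1 = truncExp p N δ v.1 :=
    map_truncExp_smul (z := d) (z' := δ) (AddMonoidHom.fst L (Φ.F 0)) fun _ => rfl
  have exp_snd : ∀ v, ((truncExp p N d v).2 : Module.End ℤ L) = adExp p N δ v.2 :=
    map_truncExp_smul (z := d) (z' := LieAlgebra.ad ℤ (Module.End ℤ L) δ)
      ((Φ.F 0).subtype.comp (AddMonoidHom.snd L (Φ.F 0))) fun _ => rfl
  have exp_mem : ∀ v ∈ graph, truncExp p N d v ∈ graph := by
    intro v hv
    have hv : (v.2 : Module.End ℤ L) = LieAlgebra.ad ℤ L v.1 := hv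
    have comm : truncExp p N δ * LieAlgebra.ad ℤ L v.1 =
        LieAlgebra.ad ℤ L (truncExp p N δ v.1) * truncExp p N δ :=
      LinearMap.ext fun y => h v.1 y
    change ((truncExp p N d v).2 : Module.End ℤ L) = LieAlgebra.ad ℤ L (truncExp p N d v).1
    rw [exp_fst, exp_snd, ← Φ.exp_mul_mul_exp_neg hδ v.2.2, hv, comm, mul_assoc, Φ.exp_mul_neg hδ,
      mul_one]
  have had : LieAlgebra.ad ℤ L x ∈ Φ.F 0 := Φ.succ_le 0 (Γ.ad_mem (Γ.mem_one x))
  have hmem := D.apply_mem_of_exp_sub_mem hd (S := graph) le_rfl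
    (fun v hv => sub_mem (exp_mem v hv) hv) (y := (x, ⟨LieAlgebra.ad ℤ L x, had⟩)) rfl
  have hlie : δ ⁅x, y⁆ - ⁅x, δ y⁆ = ⁅δ x, y⁆ := LinearMap.congr_fun hmem y
  rw [← lie_skew y, ← hlie]
  abel

end Derivation

/-! ### Cyclic extensions -/

/-- `G` is an extension of `M` by a cyclic group of order `p`, generated over `f : M →* G` by an
element `g` which induces the automorphism `a` of `M` and whose `p`-th power is `w`. -/
structure IsCyclicExtension {M G : Type*} [Group M] [Group G] (p : ℕ) (a : MulAut M) (w : M)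
    (f : M →* G) (g : G) : Prop where
  injective : Function.Injective f
  conj : ∀ x, g * f x * g⁻¹ = f (a x)
  pow : g ^ p = f w
  exists_eq : ∀ h, ∃ x, ∃ k : ℤ, h = f x * g ^ k
  dvd : ∀ (k : ℤ) x, g ^ k = f x → (p : ℤ) ∣ k

namespace IsCyclicExtension

variable {M G G' : Type*} [Group M] [Group G] [Group G'] {p : ℕ} {a : MulAut M} {w : M}
  {f : M →* G} {g : G} {f' : M →* G'} {g' : G'}

/-- The presentation of a cyclic extension as a quotient of the semidirect product of `M` with an
infinite cyclic group. -/
def lift (h : IsCyclicExtension p a w f g) :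
    M ⋊[zpowersHom (MulAut M) a] Multiplicative ℤ →* G :=
  SemidirectProduct.lift f (zpowersHom G g) fun k => MonoidHom.ext fun x => by
    have conj_apply : ∀ x, MulAut.conj g (f x) = f (a x) := h.conj
    change f ((a ^ k.toAdd) x) = MulAut.conj (g ^ k.toAdd) (f x)
    generalize k.toAdd = k
    rw [map_zpow]
    induction k generalizing x with
    | zero => rfl
    | succ k ih =>
      rw [zpow_add_one, zpow_add_one, MulAut.mul_apply, MulAut.mul_apply, conj_apply, ih]
    | pred k ih =>
      have inv_apply : (MulAut.conj g)⁻¹ (f x) = f (a⁻¹ x) :=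
        (MulAut.conj g).symm_apply_eq.2 (by rw [conj_apply, MulAut.apply_inv_self])
      rw [zpow_sub_one, zpow_sub_one, MulAut.mul_apply, MulAut.mul_apply, inv_apply, ih]

lemma lift_apply (h : IsCyclicExtension p a w f g)
    (x : M ⋊[zpowersHom (MulAut M) a] Multiplicative ℤ) :
    h.lift x = f x.left * g ^ x.right.toAdd := rfl

lemma lift_surjective (h : IsCyclicExtension p a w f g) : Function.Surjective h.lift := fun y => by
  obtain ⟨x, k, rfl⟩ := h.exists_eq y
  exact ⟨⟨x, .ofAdd k⟩, rfl⟩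

lemma mem_ker_lift (h : IsCyclicExtension p a w f g)
    {x : M ⋊[zpowersHom (MulAut M) a] Multiplicative ℤ} :
    x ∈ h.lift.ker ↔ ∃ c : ℤ, x.right.toAdd = p * c ∧ x.left * w ^ c = 1 := by
  have zpow_eq : ∀ c : ℤ, f x.left * g ^ ((p : ℤ) * c) = 1 ↔ x.left * w ^ c = 1 := fun c => by
    rw [zpow_mul, zpow_natCast, h.pow, ← map_zpow, ← map_mul, ← map_one f, h.injective.eq_iff]
  rw [MonoidHom.mem_ker, h.lift_apply]
  constructor
  · intro hx
    obtain ⟨c, hc⟩ := h.dvd x.right.toAdd x.left⁻¹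
      (by rw [map_inv]; exact (inv_eq_of_mul_eq_one_right hx).symm)
    exact ⟨c, hc, (zpow_eq c).1 (hc ▸ hx)⟩
  · rintro ⟨c, hc, hx⟩
    rw [hc, zpow_eq, hx]

theorem nonempty_mulEquiv (h : IsCyclicExtension p a w f g) (h' : IsCyclicExtension p a w f' g') :
    Nonempty (G ≃* G') := by
  have ker_eq : h.lift.ker = h'.lift.ker := by
    ext x
    rw [h.mem_ker_lift, h'.mem_ker_lift]
  exact ⟨(QuotientGroup.quotientKerEquivOfSurjective _ h.lift_surjective).symm.trans <|
    (QuotientGroup.quotientMulEquivOfEq ker_eq).trans <|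
      QuotientGroup.quotientKerEquivOfSurjective _ h'.lift_surjective⟩

end IsCyclicExtension

/-- The analogue of `IsCyclicExtension` for Lie rings: `E` is generated over `i : L →ₗ⁅ℤ⁆ E` by an
element `e` which induces the derivation `δ` of `L` and satisfies `p • e = i w`. -/
structure IsCyclicLieExtension {L E : Type*} [LieRing L] [LieRing E] (p : ℕ) (δ : Module.End ℤ L)
    (w : L) (i : L →ₗ⁅ℤ⁆ E) (e : E) : Prop where
  injective : Function.Injective i
  lie : ∀ x, ⁅e, i x⁆ = i (δ x)
  nsmul : p • e = i w
  exists_eq : ∀ z, ∃ x, ∃ k : ℤ, z = i x + k • e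
  dvd : ∀ (k : ℤ) x, k • e = i x → (p : ℤ) ∣ k

namespace IsCyclicLieExtension

variable {L E : Type*} [LieRing L] [LieRing E] {p N : ℕ} {δ : Module.End ℤ L} {w : L}
  {i : L →ₗ⁅ℤ⁆ E} {e : E}

lemma lie_add_zsmul (h : IsCyclicLieExtension p δ w i e) (x y : L) (k l : ℤ) :
    ⁅i x + k • e, i y + l • e⁆ = i (⁅x, y⁆ + k • δ y - l • δ x) := by
  rw [map_sub, map_add, LieHom.map_lie, map_zsmul, map_zsmul, ← h.lie, ← h.lie, add_lie, lie_add,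
    lie_add, zsmul_lie, zsmul_lie, lie_zsmul, lie_zsmul, lie_self, ← lie_skew e (i x)]
  module

lemma lie_mem_map (h : IsCyclicLieExtension p δ w i e) (Γ : LieFiltration p N L)
    (hδ : δ ∈ Γ.endFiltration.F 1) {j : ℕ} {y : L} (hy : y ∈ Γ.F j) (z : E) :
    ⁅z, i y⁆ ∈ (Γ.F (j + 1)).map (i : L →ₗ[ℤ] E).toAddMonoidHom := by
  obtain ⟨x, k, rfl⟩ := h.exists_eq z
  have hlie := h.lie_add_zsmul x y k 0
  rw [zero_smul, zero_smul, add_zero, sub_zero] at hlie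
  rw [hlie]
  exact AddSubgroup.mem_map_of_mem _ (add_mem (Γ.lie_mem_succ x hy) (zsmul_mem (hδ j y hy) k))

lemma pow_nsmul_eq_zero (h : IsCyclicLieExtension p δ w i e) (hL : ∀ x : L, p ^ N • x = 0) {m : ℕ}
    (hm : m < N) (hw : p ^ m • w = 0) (z : E) : p ^ N • z = 0 := by
  obtain ⟨x, k, rfl⟩ := h.exists_eq z
  have he : p ^ N • e = 0 := by
    rw [← Nat.sub_add_cancel hm, pow_add, mul_smul, pow_succ, mul_smul, h.nsmul, ← map_nsmul, hw,
      map_zero, smul_zero]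
  rw [smul_add, ← map_nsmul, hL, map_zero, smul_comm, he, smul_zero, add_zero]

lemma isLazard (h : IsCyclicLieExtension p δ w i e) (hp : 2 ≤ p) (Γ : LieFiltration p N L)
    (hδ : δ ∈ Γ.endFiltration.F 1) (hE : ∀ z : E, p ^ N • z = 0) : IsLazard p N E := by
  let i' : L →+ E := (i : L →ₗ[ℤ] E).toAddMonoidHom
  let D : ℕ → AddSubgroup E
    | 0 => ⊤
    | j + 1 => (Γ.F (j + 2)).map i'
  have D_succ_le : ∀ j, D (j + 1) ≤ D j
    | 0 => le_top
    | j + 1 => AddSubgroup.map_mono (Γ.succ_le (j + 2))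
  have lie_mem : ∀ j, ∀ z : E, ∀ y ∈ D j, ⁅z, y⁆ ∈ D (j + 1)
    | 0, z, y, _ => by
      obtain ⟨x, k, rfl⟩ := h.exists_eq z
      obtain ⟨y, l, rfl⟩ := h.exists_eq y
      rw [h.lie_add_zsmul]
      exact AddSubgroup.mem_map_of_mem _ (sub_mem (add_mem (Γ.lie_mem_succ x (Γ.mem_one y))
        (zsmul_mem (hδ 1 y (Γ.mem_one y)) k)) (zsmul_mem (hδ 1 x (Γ.mem_one x)) l))
    | j + 1, z, _, ⟨y, hy, rfl⟩ => h.lie_mem_map Γ hδ hy z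
  have eq_bot : D (p - 1) = ⊥ := by
    obtain ⟨r, rfl⟩ := Nat.exists_eq_add_of_le' hp
    change (Γ.F (r + 2)).map i' = ⊥
    rw [Γ.eq_bot, AddSubgroup.map_bot]
  exact ⟨⟨.ofChain D rfl (antitone_nat_of_succ_le D_succ_le) lie_mem eq_bot hE⟩⟩

open LazardGroup

variable [Fact p.Prime] [IsLazard p N L] [IsLazard p N E]

lemma exists_eq_map_mul_zpow (h : IsCyclicLieExtension p δ w i e) (b : LazardGroup p N E) :
    ∃ x, ∃ k : ℤ, b = map i x * exp e ^ k := by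
  have lie_mem : ∀ z z' : E, ⁅z, z'⁆ ∈ i.range := fun z z' => by
    obtain ⟨x, k, rfl⟩ := h.exists_eq z
    obtain ⟨y, l, rfl⟩ := h.exists_eq z'
    exact ⟨_, (h.lie_add_zsmul x y k l).symm⟩
  let I : LieIdeal ℤ E := { i.range.toSubmodule with lie_mem := fun _ => lie_mem _ _ }
  obtain ⟨x, k, hb⟩ := h.exists_eq b.log
  have hmem := bchMul_sub_add_mem (p := p) (N := N) I (lie_mem b.log (-(k • e)))
  have hlog : b.log + -(k • e) = i x := by rw [hb, add_neg_cancel_right]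
  obtain ⟨y, hy⟩ : bchMul p N b.log (-(k • e)) ∈ i.range := by
    have h := add_mem hmem (⟨x, rfl⟩ : i x ∈ I)
    rwa [hlog, sub_add_cancel] at h
  refine ⟨exp y, k, mul_inv_eq_iff_eq_mul.1 (LazardGroup.ext ?_)⟩
  rw [← exp_zsmul]
  exact hy.symm

theorem isCyclicExtension (h : IsCyclicLieExtension p δ w i e) {a : MulAut (LazardGroup p N L)}
    (ha : ∀ x : L, a (exp x) = exp (truncExp p N δ x)) :
    IsCyclicExtension p a (exp w) (map i : LazardGroup p N L →* LazardGroup p N E) (exp e) where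
  injective x y hxy := LazardGroup.ext (h.injective (congrArg log hxy))
  conj x := by
    have hexp : i (truncExp p N δ x.log) = adExp p N e (i x.log) :=
      map_truncExp_smul (z := δ) (z' := LieAlgebra.ad ℤ E e) (i : L →ₗ[ℤ] E).toAddMonoidHom
        (fun y => (h.lie y).symm) x.log
    ext
    rw [log_conj, log_map, log_map, ← exp_log x, ha, hexp]
  pow := LazardGroup.ext (by rw [log_pow, log_map, h.nsmul])
  exists_eq := h.exists_eq_map_mul_zpow
  dvd k x hx := by
    rw [← exp_zsmul] at hx
    exact h.dvd k x.log (congrArg log hx)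

end IsCyclicLieExtension

/-! ### Existence of cyclic extensions of Lie rings -/

section Root

variable {L : Type*} [LieRing L]

/-- The action of the abelian Lie ring `ℤ` on `L` in which `1` acts by `δ`. -/
def zsmulDerivation (δ : LieDerivation ℤ L L) : ℤ →ₗ⁅ℤ⁆ LieDerivation ℤ L L where
  toLinearMap := LinearMap.toSpanSingleton ℤ _ δ
  map_lie' {k l} := by
    change ⁅k, l⁆ • δ = ⁅k • δ, l • δ⁆
    rw [(Commute.all k l).lie_eq, zero_smul, lie_zsmul, zsmul_lie, lie_self, smul_zero, smul_zero]

variable {δ : LieDerivation ℤ L L}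

lemma lie_mk (x y : L) (k l : ℤ) :
    ⁅(⟨x, k⟩ : L ⋊⁅zsmulDerivation δ⁆ ℤ), (⟨y, l⟩ : L ⋊⁅zsmulDerivation δ⁆ ℤ)⁆ =
      ⟨⁅x, y⁆ + k • δ y - l • δ x, 0⟩ := by
  rw [LieAlgebra.SemiDirectSum.lie_eq_mk, (Commute.all k l).lie_eq]
  rfl

lemma zsmul_mk (c : ℤ) (x : L) (k : ℤ) :
    c • (⟨x, k⟩ : L ⋊⁅zsmulDerivation δ⁆ ℤ) = ⟨c • x, c * k⟩ := rfl

variable {p : ℕ} {w : L}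

variable (p) in
lemma lie_mk_eq_zero (hw : δ w = 0) (hp : ∀ x, p • δ x = ⁅w, x⁆)
    (u : L ⋊⁅zsmulDerivation δ⁆ ℤ) : ⁅u, (⟨-w, p⟩ : L ⋊⁅zsmulDerivation δ⁆ ℤ)⁆ = 0 := by
  obtain ⟨x, k⟩ := u
  rw [lie_mk, map_neg, hw, natCast_zsmul, hp, lie_neg, lie_skew, neg_zero, smul_zero, add_zero,
    sub_self]
  rfl

/-- The ideal whose quotient makes `w` divisible by `p`, generated by the central element
`(-w, p)`. -/
def rootIdeal (hw : δ w = 0) (hp : ∀ x, p • δ x = ⁅w, x⁆) :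
    LieIdeal ℤ (L ⋊⁅zsmulDerivation δ⁆ ℤ) where
  __ := (AddSubgroup.zmultiples (⟨-w, p⟩ : L ⋊⁅zsmulDerivation δ⁆ ℤ)).toIntSubmodule
  lie_mem {u v} hv := by
    obtain ⟨c, rfl⟩ := hv
    change ⁅u, c • (⟨-w, p⟩ : L ⋊⁅zsmulDerivation δ⁆ ℤ)⁆ ∈ AddSubgroup.zmultiples _
    rw [lie_zsmul, lie_mk_eq_zero p hw hp, smul_zero]
    exact zero_mem _

lemma mk_mem_rootIdeal {hw : δ w = 0} {hp : ∀ x, p • δ x = ⁅w, x⁆} {x : L} {k : ℤ} :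
    ⟨x, k⟩ ∈ rootIdeal hw hp ↔ ∃ c : ℤ, -(c • w) = x ∧ c * p = k := by
  refine AddSubgroup.mem_zmultiples_iff.trans (exists_congr fun c => ?_)
  rw [zsmul_mk, LieAlgebra.SemiDirectSum.mk.injEq, smul_neg]

theorem exists_isCyclicLieExtension (hp0 : p ≠ 0) (hw : δ w = 0) (hp : ∀ x, p • δ x = ⁅w, x⁆) :
    ∃ I : LieIdeal ℤ (L ⋊⁅zsmulDerivation δ⁆ ℤ), IsCyclicLieExtension p (δ : L →ₗ[ℤ] L) w
      ((lieQuotientMk I).comp (LieAlgebra.SemiDirectSum.inl _)) (lieQuotientMk I ⟨0, 1⟩) := by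
  set π := lieQuotientMk (rootIdeal hw hp)
  have π_mk : ∀ x (k : ℤ), π ⟨x, k⟩ = π ⟨x, 0⟩ + k • π ⟨0, 1⟩ := fun x k => by
    rw [← map_zsmul, ← map_add, zsmul_mk, LieAlgebra.SemiDirectSum.add_eq_mk, smul_zero, mul_one,
      add_zero, zero_add]
  have π_eq_iff : ∀ x y k l, π ⟨x, k⟩ = π ⟨y, l⟩ ↔
      ∃ c : ℤ, -(c • w) = x - y ∧ c * p = k - l := fun x y k l => by
    rw [← sub_eq_zero, ← map_sub, lieQuotientMk_eq_zero, LieAlgebra.SemiDirectSum.sub_eq_mk,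
      mk_mem_rootIdeal]
  refine ⟨rootIdeal hw hp, fun x y hxy => ?_, fun x => ?_, ?_, fun z => ?_, fun k x hx => ?_⟩
  · obtain ⟨c, hc, hcp⟩ := (π_eq_iff x y 0 0).1 hxy
    rw [sub_zero, mul_eq_zero_iff_right (Nat.cast_ne_zero.2 hp0)] at hcp
    rwa [hcp, zero_smul, neg_zero, eq_comm, sub_eq_zero] at hc
  · change ⁅π ⟨0, 1⟩, π ⟨x, 0⟩⁆ = π ⟨δ x, 0⟩
    rw [← LieHom.map_lie, lie_mk, zero_lie, one_smul, zero_smul, zero_add, sub_zero]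
  · change p • π ⟨0, 1⟩ = π ⟨w, 0⟩
    rw [← natCast_zsmul, ← map_zsmul, zsmul_mk, π_eq_iff]
    exact ⟨1, by simp, by simp⟩
  · obtain ⟨⟨x, k⟩, rfl⟩ := lieQuotientMk_surjective _ z
    exact ⟨x, k, π_mk x k⟩
  · have hx : k • π ⟨0, 1⟩ = π ⟨x, 0⟩ := hx
    rw [← map_zsmul, zsmul_mk, π_eq_iff] at hx
    obtain ⟨c, -, hc⟩ := hx
    exact ⟨c, by rw [mul_one, sub_zero] at hc; rw [← hc, mul_comm]⟩

end Root

/-! ### Groups of order `p ^ m` with `m ≤ p` are Lazard groups -/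

lemma isCyclicExtension_of_index_eq {p : ℕ} [Fact p.Prime] {G H : Type*} [Group G] [Group H]
    {M : Subgroup G} [hM : M.Normal] (index_eq : M.index = p) {g : G} (hg : g ∉ M) (ε : M ≃* H) :
    ∃ w, IsCyclicExtension p ((ε.symm.trans (MulAut.conjNormal g)).trans ε) w
      (M.subtype.comp ε.symm.toMonoidHom) g := by
  have mk_ne_one : (g : G ⧸ M) ≠ 1 := by rwa [Ne, QuotientGroup.eq_one_iff]
  have mem_zpowers : ∀ h : G ⧸ M, h ∈ Subgroup.zpowers (g : G ⧸ M) := fun _ =>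
    mem_zpowers_of_prime_card index_eq mk_ne_one
  have orderOf_eq : orderOf (g : G ⧸ M) = p :=
    (orderOf_eq_card_of_forall_mem_zpowers mem_zpowers).trans index_eq
  have pow_mem : g ^ p ∈ M := by
    rw [← QuotientGroup.eq_one_iff, QuotientGroup.mk_pow, ← orderOf_eq, pow_orderOf_eq_one]
  refine ⟨ε ⟨g ^ p, pow_mem⟩, Subtype.val_injective.comp ε.symm.injective, fun x => by simp,
    by simp, fun h => ?_, fun k x hx => ?_⟩
  · obtain ⟨k, hk⟩ := mem_zpowers h
    have hmem : h * (g ^ k)⁻¹ ∈ M := by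
      rw [← QuotientGroup.eq_one_iff, QuotientGroup.mk_mul, QuotientGroup.mk_inv,
        QuotientGroup.mk_zpow, mul_inv_eq_one]
      exact hk.symm
    exact ⟨ε ⟨_, hmem⟩, k, by simp⟩
  · rw [← orderOf_eq, orderOf_dvd_iff_zpow_eq_one, ← QuotientGroup.mk_zpow,
      QuotientGroup.eq_one_iff, hx]
    exact (ε.symm x).2

section Step

open LazardGroup

variable {p N m : ℕ} [Fact p.Prime] {L : Type u} [LieRing L] [IsLazard p N L] {G : Type*} [Group G]
  {a : MulAut (LazardGroup p N L)} {w : LazardGroup p N L} {f : LazardGroup p N L →* G} {g : G}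

lemma IsCyclicExtension.nsmul_eq_ad [Finite L] (h : IsCyclicExtension p a w f g)
    {Γ : LieFiltration p N L} {δ : Module.End ℤ L} (hδ : δ ∈ Γ.endFiltration.F 1)
    (ha : ∀ x : L, a (exp x) = exp (truncExp p N δ x)) : p • δ = LieAlgebra.ad ℤ L w.log := by
  have conj_pow : ∀ (k : ℕ) x,
      f (exp ((truncExp p N δ ^ k) x)) = g ^ k * f (exp x) * (g ^ k)⁻¹ := by
    intro k
    induction k with
    | zero => simp
    | succ k ih =>
      intro x
      rw [pow_succ, Module.End.mul_apply, ih, ← ha, ← h.conj]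
      group
  refine Γ.endFiltration.exp_injective (nsmul_mem hδ p) (Γ.ad_mem (Γ.mem_one _)) ?_
  rw [Γ.endFiltration.exp_nsmul hδ]
  refine LinearMap.ext fun x => congrArg log (h.injective ?_)
  change f (exp _) = f (exp (adExp p N w.log x))
  rw [conj_pow, exp_adExp, map_mul, map_mul, map_inv, h.pow, exp_log]

/-- The derivation is the logarithm of the automorphism `a`. -/
theorem IsCyclicExtension.exists_lieDerivation [Group.IsNilpotent G]
    (h : IsCyclicExtension p a w f g) (hc : Nat.card L = p ^ m) (hm : m < p) :
    ∃ (Γ : LieFiltration p N L) (δ : LieDerivation ℤ L L),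
      (δ : L →ₗ[ℤ] L) ∈ Γ.endFiltration.F 1 ∧
      (∀ x : L, a (exp x) = exp (truncExp p N (δ : Module.End ℤ L) x)) ∧
      δ w.log = 0 ∧ ∀ x, p • δ x = ⁅w.log, x⁆ := by
  have hp : p.Prime := Fact.out
  have : Finite L := Nat.finite_of_card_ne_zero (by simp [hc, hp.ne_zero])
  let α := toLieHom a.toMonoidHom
  have α_surjective : Function.Surjective α := fun y =>
    ⟨(a.symm (exp y)).log, congrArg log (a.apply_symm_apply (exp y))⟩
  obtain ⟨Γ, hΓ⟩ := exists_lieFiltration_apply_sub_mem hc hm h.injective α_surjective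
    fun x => h.conj (exp x)
  have hα : (α : L →ₗ[ℤ] L) - 1 ∈ Γ.endFiltration.F 1 := hΓ
  obtain ⟨δ, hδ, hexp⟩ := Γ.endFiltration.exists_exp_eq le_rfl hα
  have leibniz := Γ.leibniz_of_exp hδ (hexp ▸ α.map_lie)
  have ha : ∀ x, a (exp x) = exp (truncExp p N δ x) := fun _ => hexp ▸ rfl
  have a_w : a w = w := h.injective <| by
    rw [← h.conj, ← h.pow, ← pow_succ', pow_succ, mul_inv_cancel_right]
  exact ⟨Γ, ⟨δ, leibniz⟩, hδ, ha, Γ.toModuleFiltration.apply_eq_zero_of_exp_eq_self hδ <|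
    congrArg log ((ha w.log).symm.trans a_w), LinearMap.congr_fun (h.nsmul_eq_ad hδ ha)⟩

lemma IsCyclicExtension.exists_lieRing [Group.IsNilpotent G] (h : IsCyclicExtension p a w f g)
    (hc : Nat.card L = p ^ m) (hm : m < p) (hN : m < N) :
    ∃ (E : Type u) (_ : LieRing E) (_ : IsLazard p N E), Nonempty (G ≃* LazardGroup p N E) := by
  have hp : p.Prime := Fact.out
  obtain ⟨Γ, δ, hδ, ha, hw, hpδ⟩ := h.exists_lieDerivation hc hm
  obtain ⟨I, hI⟩ := exists_isCyclicLieExtension hp.ne_zero hw hpδ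
  have := hI.isLazard hp.two_le Γ hδ
    (hI.pow_nsmul_eq_zero (IsLazard.nsmul_eq_zero p N) hN (hc ▸ card_nsmul_eq_zero'))
  exact ⟨_, _, this, h.nonempty_mulEquiv (hI.isCyclicExtension ha)⟩

variable (p N) in
theorem exists_mulEquiv_lazardGroup (hm : m ≤ p) (hN : m ≤ N) {G : Type*} [Group G]
    (hG : Nat.card G = p ^ m) :
    ∃ (E : Type) (_ : LieRing E) (_ : IsLazard p N E), Nonempty (G ≃* LazardGroup p N E) := by
  have hp : p.Prime := Fact.out
  induction m generalizing G with
  | zero =>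
    let trivialLieRing : LieRing Unit :=
      { bracket := fun _ _ => 0
        add_lie := fun _ _ _ => rfl
        lie_add := fun _ _ _ => rfl
        lie_self := fun _ => rfl
        leibniz_lie := fun _ _ _ => rfl }
    let D : LieFiltration p N Unit := .ofChain ⊤ rfl (fun _ _ _ => le_rfl)
      (fun _ _ _ _ => AddSubgroup.mem_top _) (Subsingleton.elim _ _) fun _ => rfl
    have : IsLazard p N Unit := ⟨⟨D⟩⟩
    let _ : Unique (LazardGroup p N Unit) := expEquiv.symm.unique
    have : Subsingleton G := (Nat.card_eq_one_iff_unique.1 (hG.trans (pow_zero p))).1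
    let _ : Unique G := ⟨⟨1⟩, fun _ => Subsingleton.elim _ _⟩
    exact ⟨Unit, _, ‹_›, ⟨.ofUnique⟩⟩
  | succ m ih =>
    have : Finite G := Nat.finite_of_card_ne_zero (by simp [hG, hp.ne_zero])
    have : Group.IsNilpotent G := (IsPGroup.of_card hG).isNilpotent
    obtain ⟨M, hM⟩ := Sylow.exists_subgroup_card_pow_prime (G := G) p (hG ▸ pow_dvd_pow p m.le_succ)
    have index_eq : M.index = p := Nat.eq_of_mul_eq_mul_left (pow_pos hp.pos m) <| by
      rw [← hM, M.card_mul_index, hM, ← pow_succ, hG]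
    have : M.Normal := Subgroup.normal_of_index_eq_minFac_card <| by
      rw [index_eq, hG, hp.pow_minFac m.succ_ne_zero]
    obtain ⟨g, -, hg⟩ := SetLike.exists_of_lt (lt_top_iff_ne_top.2
      fun h : M = ⊤ => hp.ne_one (by rw [← index_eq, h, Subgroup.index_top]))
    obtain ⟨L, _, _, ⟨ε⟩⟩ := ih (m.le_succ.trans hm) (m.le_succ.trans hN) hM
    obtain ⟨w, hw⟩ := isCyclicExtension_of_index_eq index_eq hg ε
    have card_L : Nat.card L = p ^ m := by
      rw [← hM, Nat.card_congr (ε.toEquiv.trans expEquiv.symm)]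
    exact hw.exists_lieRing card_L hm hN

end Step

/-! ### Digit expansions with respect to a nilpotent operator -/

section DigitArrays

variable {J : Type*} {p : ℕ} {lam : J → ℕ} {d : J → ℕ → ℕ}

variable (p lam) in
/-- The arrays of base-`p` digits indexed by the cells of the Young diagram with rows `lam`,
extended by zero. -/
def digitArrays : Set (J → ℕ → ℕ) :=
  {d | (∀ j i, d j i < p) ∧ ∀ j i, lam j ≤ i → d j i = 0}

theorem zero_mem_digitArrays (hp : 0 < p) : 0 ∈ digitArrays p lam :=
  ⟨fun _ _ => hp, fun _ _ _ => rfl⟩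

theorem update_mem_digitArrays [DecidableEq J] (hd : d ∈ digitArrays p lam) {j : J} {i k : ℕ}
    (hi : i < lam j) (hk : k < p) :
    Function.update d j (Function.update (d j) i k) ∈ digitArrays p lam := by
  constructor
  · intro j' i'
    rcases eq_or_ne j' j with rfl | hj
    · rcases eq_or_ne i' i with rfl | hi' <;> simp [*, hd.1]
    · simp [hj, hd.1]
  · intro j' i' h
    rcases eq_or_ne j' j with rfl | hj
    · rw [Function.update_self, Function.update_of_ne (hi.trans_le h).ne', hd.2 _ _ h]
    · rw [Function.update_of_ne hj, hd.2 _ _ h]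

variable (lam) in
/-- The digits of `π x` in terms of those of `x`: each row is shifted by one cell. -/
def shiftDigits (d : J → ℕ → ℕ) : J → ℕ → ℕ :=
  fun j i => if i = 0 ∨ lam j ≤ i then 0 else d j (i - 1)

theorem shiftDigits_mem_digitArrays (hp : 0 < p) (hd : d ∈ digitArrays p lam) :
    shiftDigits lam d ∈ digitArrays p lam := by
  refine ⟨fun j i => ?_, fun j i h => if_pos (.inr h)⟩
  rw [shiftDigits]
  split_ifs
  exacts [hp, hd.1 _ _]

variable (p lam) in
theorem card_digitArrays [Fintype J] (hp : 0 < p) :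
    Nat.card (digitArrays p lam) = p ^ ∑ j, lam j := by
  let e : digitArrays p lam ≃ ((j : J) → Fin (lam j) → Fin p) :=
    { toFun d j i := ⟨d.1 j i, d.2.1 j i⟩
      invFun f :=
        ⟨fun j i => if h : i < lam j then f j ⟨i, h⟩ else 0,
          fun j i => by
            dsimp only
            split_ifs with h
            exacts [(f j _).2, hp],
          fun j i h => dif_neg h.not_gt⟩
      left_inv d := by
        ext j i
        dsimp only
        split_ifs with h
        exacts [rfl, (d.2.2 j i (le_of_not_gt h)).symm]
      right_inv f := by simp }
  simp [Nat.card_congr e, Nat.card_pi, prod_pow_eq_pow_sum]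

end DigitArrays

section DigitSum

variable {J : Type*} [Fintype J] {p c : ℕ} {lam : J → ℕ}
variable {R A : Type*} [Ring R] [AddCommGroup A] [Module R A] {π : Module.End R A} {a : J → A}
variable {S B : Type*} [Ring S] [AddCommGroup B] [Module S B] {ϖ : Module.End S B}

variable (lam π a) in
/-- The element `∑ dⱼᵢ πⁱ(aⱼ)`, the sum running over the cells of the Young diagram with
rows `lam`. -/
def digitSum : (J → ℕ → ℕ) →+ A where
  toFun d := ∑ j, ∑ i ∈ range (lam j), d j i • (π ^ i) (a j)
  map_zero' := by simp
  map_add' d e := by simp only [← sum_add_distrib, Pi.add_apply, add_smul]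

theorem digitSum_apply (d : J → ℕ → ℕ) :
    digitSum lam π a d = ∑ j, ∑ i ∈ range (lam j), d j i • (π ^ i) (a j) := rfl

theorem digitSum_single [DecidableEq J] {j : J} {i : ℕ} (hi : i < lam j) (k : ℕ) :
    digitSum lam π a (Pi.single j (Pi.single i k)) = k • (π ^ i) (a j) := by
  rw [digitSum_apply, sum_eq_single j, sum_eq_single i]
  · simp
  · intro i' _ h
    simp [h]
  · simp [hi]
  · intro j' _ h
    simp [h]
  · simp

theorem pow_apply_mem_mrange_digitSum {j : J} {i : ℕ} (hi : i < lam j) :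
    (π ^ i) (a j) ∈ AddMonoidHom.mrange (digitSum lam π a) := by
  classical
  exact ⟨_, (digitSum_single hi 1).trans (one_nsmul _)⟩

theorem digitSum_update [DecidableEq J] (d : J → ℕ → ℕ) {j : J} {i : ℕ} (hi : i < lam j) (k : ℕ) :
    digitSum lam π a (Function.update d j (Function.update (d j) i k)) + d j i • (π ^ i) (a j) =
      digitSum lam π a d + k • (π ^ i) (a j) := by
  rw [← digitSum_single hi, ← digitSum_single hi, ← map_add, ← map_add]
  congr 1
  ext j' i'
  rcases eq_or_ne j' j with rfl | hj
  · rcases eq_or_ne i' i with rfl | hi <;> simp [add_comm, *]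
  · simp [hj]

theorem map_pow_apply_of_semiconj {f : A →+ B} (hf : ∀ x, f (π x) = ϖ (f x)) (i : ℕ) (x : A) :
    f ((π ^ i) x) = (ϖ ^ i) (f x) := by
  simpa [Module.End.pow_apply] using (Function.Semiconj.iterate_right hf i).eq x

theorem map_digitSum {f : A →+ B} (hf : ∀ x, f (π x) = ϖ (f x)) (d : J → ℕ → ℕ) :
    f (digitSum lam π a d) = digitSum lam ϖ (f ∘ a) d := by
  simp_rw [digitSum_apply, map_sum, map_nsmul, map_pow_apply_of_semiconj hf, Function.comp_apply]

theorem digitSum_shiftDigits (ha : ∀ j, (π ^ lam j) (a j) = 0) (d : J → ℕ → ℕ) :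
    digitSum lam π a (shiftDigits lam d) = π (digitSum lam π a d) := by
  simp_rw [digitSum_apply, map_sum, map_nsmul, ← Module.End.mul_apply, ← pow_succ']
  refine sum_congr rfl fun j _ => ?_
  rcases hl : lam j with _ | l
  · simp
  · rw [sum_range_succ', sum_range_succ, ← hl, ha]
    simp only [shiftDigits, true_or, if_true, zero_smul, smul_zero]
    congr 1
    refine sum_congr rfl fun i hi => ?_
    rw [if_neg (by rw [mem_range] at hi; omega), Nat.add_sub_cancel]

variable (p lam π a) in
/-- The elements that can be added to any digit expansion. -/
def digitAddable : AddSubmonoid A where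
  carrier := {x | ∀ d ∈ digitArrays p lam, ∃ d' ∈ digitArrays p lam,
    digitSum lam π a d' = digitSum lam π a d + x}
  zero_mem' d hd := ⟨d, hd, by simp⟩
  add_mem' := by
    intro x y hx hy d hd
    obtain ⟨d', hd', h'⟩ := hx d hd
    obtain ⟨d'', hd'', h''⟩ := hy d' hd'
    exact ⟨d'', hd'', by rw [h'', h', add_assoc]⟩

/-- Induction on the distance to the end of the row: adding `πⁱ(aⱼ)` either increases a digit by
one, or replaces it by zero and carries `p πⁱ(aⱼ) = c πⁱ⁺¹(aⱼ)`. -/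
theorem pow_apply_mem_digitAddable (hp : 0 < p) (hπ : ∀ x, p • x = c • π x)
    (ha : ∀ j, (π ^ lam j) (a j) = 0) (j : J) (i : ℕ) :
    (π ^ i) (a j) ∈ digitAddable p lam π a := by
  classical
  induction hk : lam j - i generalizing i with
  | zero =>
    rw [Module.End.pow_map_zero_of_le (Nat.sub_eq_zero_iff_le.1 hk) (ha j)]
    exact zero_mem _
  | succ k ih =>
    intro d hd
    have hi : i < lam j := by omega
    rcases Nat.lt_or_ge (d j i + 1) p with hlt | hge
    · refine ⟨_, update_mem_digitArrays hd hi hlt, ?_⟩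
      have := digitSum_update (π := π) (a := a) d hi (d j i + 1)
      rwa [succ_nsmul', ← add_assoc, add_right_cancel_iff] at this
    · have hdp : d j i + 1 = p := hge.antisymm' (hd.1 j i)
      obtain ⟨d', hd', h'⟩ := nsmul_mem (ih (i + 1) (by omega)) c _
        (update_mem_digitArrays hd hi hp)
      refine ⟨d', hd', ?_⟩
      have := digitSum_update (π := π) (a := a) d hi 0
      rw [h', pow_succ', Module.End.mul_apply, ← hπ, ← hdp, succ_nsmul, ← add_assoc, this,
        zero_nsmul, add_zero]

theorem exists_digitArray_digitSum_eq (hp : 0 < p) (hπ : ∀ x, p • x = c • π x)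
    (ha : ∀ j, (π ^ lam j) (a j) = 0) (n : J → ℕ → ℕ) :
    ∃ d ∈ digitArrays p lam, digitSum lam π a d = digitSum lam π a n := by
  have : digitSum lam π a n ∈ digitAddable p lam π a := sum_mem fun j _ => sum_mem fun i _ =>
    nsmul_mem (pow_apply_mem_digitAddable hp hπ ha j i) _
  simpa using this 0 (zero_mem_digitArrays hp)

end DigitSum

section IsDigitBasis

variable {J : Type*} [Fintype J] {p c : ℕ} {lam : J → ℕ} {d : J → ℕ → ℕ}
variable {R A : Type*} [Ring R] [AddCommGroup A] [Module R A] {π : Module.End R A} {a : J → A}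
variable {S B : Type*} [Ring S] [AddCommGroup B] [Module S B] {ϖ : Module.End S B} {b : J → B}

variable (p c lam π a) in
/-- Every element of `A` has a unique digit expansion `∑ dⱼᵢ πⁱ(aⱼ)`, with carries governed by
`p = c π`. For `c = 1` this is a basis of an abelian `p`-group with cyclic factors of order
`p ^ lam j`, for `c = 0` a Jordan basis of a nilpotent operator over `ZMod p`. -/
structure IsDigitBasis : Prop where
  nsmul_eq (x : A) : p • x = c • π x
  pow_apply_eq_zero (j : J) : (π ^ lam j) (a j) = 0
  bijOn : Set.BijOn (digitSum lam π a) (digitArrays p lam) Set.univ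

namespace IsDigitBasis

theorem of_surjective (hp : 0 < p) (hπ : ∀ x, p • x = c • π x)
    (ha : ∀ j, (π ^ lam j) (a j) = 0) (hA : Nat.card A = p ^ ∑ j, lam j)
    (hs : Function.Surjective (digitSum lam π a)) : IsDigitBasis p c lam π a := by
  have surjOn (x : A) : ∃ d ∈ digitArrays p lam, digitSum lam π a d = x := by
    obtain ⟨n, rfl⟩ := hs x
    exact exists_digitArray_digitSum_eq hp hπ ha n
  have : Finite (digitArrays p lam) :=
    Nat.finite_of_card_ne_zero (by rw [card_digitArrays p lam hp]; exact (pow_pos hp _).ne')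
  have bijective : Function.Bijective fun d : digitArrays p lam => digitSum lam π a d :=
    Function.Surjective.bijective_of_nat_card_le
      (fun x => let ⟨d, hd, h⟩ := surjOn x; ⟨⟨d, hd⟩, h⟩) (by rw [hA, card_digitArrays p lam hp])
  exact ⟨hπ, ha, fun _ _ => trivial, fun d hd e he h =>
    congrArg Subtype.val (bijective.1 (a₁ := ⟨d, hd⟩) (a₂ := ⟨e, he⟩) h), fun x _ => surjOn x⟩

theorem exists_digitSum_eq (h : IsDigitBasis p c lam π a) (x : A) :
    ∃ d ∈ digitArrays p lam, digitSum lam π a d = x :=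
  h.bijOn.surjOn trivial

theorem digitSum_surjective (h : IsDigitBasis p c lam π a) :
    Function.Surjective (digitSum lam π a) :=
  fun x => (h.exists_digitSum_eq x).imp fun _ => And.right

/-- Normalising the digits of `(x, y) : A × B` normalises those of `x` and `y` simultaneously, so
equal expansions in `A` remain equal in `B`. -/
theorem exists_addMonoidHom (h : IsDigitBasis p c lam π a) (hp : 0 < p)
    (hϖ : ∀ x, p • x = c • ϖ x) (hb : ∀ j, (ϖ ^ lam j) (b j) = 0) :
    ∃ F : A →+ B, ∀ d, F (digitSum lam π a d) = digitSum lam ϖ b d := by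
  let πϖ : Module.End ℤ (A × B) :=
    (π.toAddMonoidHom.prodMap ϖ.toAddMonoidHom).toIntLinearMap
  let ab (j : J) : A × B := (a j, b j)
  have digitSum_fst (d : J → ℕ → ℕ) : (digitSum lam πϖ ab d).1 = digitSum lam π a d :=
    map_digitSum (f := .fst A B) (fun _ => rfl) d
  have digitSum_snd (d : J → ℕ → ℕ) : (digitSum lam πϖ ab d).2 = digitSum lam ϖ b d :=
    map_digitSum (f := .snd A B) (fun _ => rfl) d
  have ann (j : J) : (πϖ ^ lam j) (ab j) = 0 := Prod.ext
    ((map_pow_apply_of_semiconj (π := πϖ) (ϖ := π) (f := .fst A B) (fun _ => rfl) _ _).trans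
      (h.pow_apply_eq_zero j))
    ((map_pow_apply_of_semiconj (π := πϖ) (ϖ := ϖ) (f := .snd A B) (fun _ => rfl) _ _).trans (hb j))
  choose dig dig_mem digitSum_dig using h.exists_digitSum_eq
  have key (n : J → ℕ → ℕ) : digitSum lam ϖ b (dig (digitSum lam π a n)) = digitSum lam ϖ b n := by
    obtain ⟨d, hd, hdn⟩ := exists_digitArray_digitSum_eq hp
      (fun x : A × B => Prod.ext (h.nsmul_eq x.1) (hϖ x.2)) ann n
    have dig_eq : dig (digitSum lam π a n) = d := h.bijOn.injOn (dig_mem _) hd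
      (by rw [digitSum_dig, ← digitSum_fst, ← digitSum_fst, hdn])
    rw [dig_eq, ← digitSum_snd, ← digitSum_snd, hdn]
  refine ⟨AddMonoidHom.mk' (fun x => digitSum lam ϖ b (dig x)) fun x y => ?_, key⟩
  have := key (dig x + dig y)
  rwa [map_add, map_add, digitSum_dig, digitSum_dig] at this

theorem digit_eq_zero (h : IsDigitBasis p c lam π a) (hp : 0 < p) (hd : d ∈ digitArrays p lam)
    (h0 : π (digitSum lam π a d) = 0) {j : J} {i : ℕ} (hi : i + 1 ≠ lam j) : d j i = 0 := by
  rcases Nat.lt_or_ge i (lam j) with hl | hl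
  · rw [← digitSum_shiftDigits h.pow_apply_eq_zero, ← map_zero (digitSum lam π a)] at h0
    have := h.bijOn.injOn (shiftDigits_mem_digitArrays hp hd) (zero_mem_digitArrays hp) h0
    have := congrFun (congrFun this j) (i + 1)
    rwa [shiftDigits, if_neg (by omega)] at this
  · exact hd.2 j i hl

theorem digitSum_mod (h : IsDigitBasis p c lam π a) (hd : ∀ j i, i + 1 ≠ lam j → d j i = 0) :
    digitSum lam π a (fun j i => d j i % p) = digitSum lam π a d := by
  refine sum_congr rfl fun j _ => sum_congr rfl fun i _ => ?_
  by_cases hi : i + 1 = lam j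
  · conv_rhs => rw [← Nat.mod_add_div' (d j i) p]
    rw [add_smul, mul_smul, h.nsmul_eq, ← Module.End.mul_apply, ← pow_succ', hi,
      h.pow_apply_eq_zero, smul_zero, smul_zero, add_zero]
  · simp only [hd j i hi, Nat.zero_mod]

theorem pow_apply_eq_zero_of_sum_le (h : IsDigitBasis p c lam π a) (x : A) :
    (π ^ ∑ j, lam j) x = 0 := by
  obtain ⟨d, -, rfl⟩ := h.exists_digitSum_eq x
  rw [← LinearMap.mem_ker]
  refine sum_mem fun j _ => sum_mem fun i _ => nsmul_mem ?_ _
  rw [LinearMap.mem_ker, ← Module.End.mul_apply, ← pow_add]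
  refine Module.End.pow_map_zero_of_le (le_add_right ?_) (h.pow_apply_eq_zero j)
  exact single_le_sum (fun j _ => Nat.zero_le (lam j)) (mem_univ j)

end IsDigitBasis

end IsDigitBasis

/-! ### Existence of digit bases -/

section RestrictRange

variable {R A : Type*} [Ring R] [AddCommGroup A] [Module R A]

/-- The endomorphism induced by `π` on its own range. -/
def restrictRange (π : Module.End R A) : Module.End R (LinearMap.range π) :=
  π.restrict fun x _ => LinearMap.mem_range_self π x

theorem coe_restrictRange_pow_apply (π : Module.End R A) (i : ℕ) (x : LinearMap.range π) :
    ((restrictRange π ^ i) x : A) = (π ^ i) x :=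
  map_pow_apply_of_semiconj (f := (LinearMap.range π).subtype.toAddMonoidHom) (fun _ => rfl) i x

theorem natCard_comap_of_surjective {B : Type*} [AddCommGroup B] [Module R B] {f : A →ₗ[R] B}
    (hf : Function.Surjective f) (N : Submodule R B) :
    Nat.card (N.comap f) = Nat.card N * Nat.card (LinearMap.ker f) := by
  have hker : LinearMap.ker (f.submoduleComap N) = (LinearMap.ker f).comap (N.comap f).subtype := by
    ext x
    simp [LinearMap.mem_ker, Subtype.ext_iff]
  rw [Submodule.card_eq_card_quotient_mul_card (LinearMap.ker (f.submoduleComap N)),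
    Nat.card_congr ((f.submoduleComap N).quotKerEquivOfSurjective
      (LinearMap.submoduleComap_surjective_of_surjective f N hf)).toEquiv, hker,
    Nat.card_congr (Submodule.comapSubtypeEquivOfLe (LinearMap.ker_le_comap f)).toEquiv, mul_comm]

theorem natCard_ker_pow_succ (π : Module.End R A) (i : ℕ) :
    Nat.card (LinearMap.ker (π ^ (i + 1))) =
      Nat.card (LinearMap.ker (restrictRange π ^ i)) * Nat.card (LinearMap.ker π) := by
  have hcomap : LinearMap.ker (π ^ (i + 1)) =
      (LinearMap.ker (restrictRange π ^ i)).comap π.rangeRestrict := by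
    ext x
    rw [LinearMap.mem_ker, Submodule.mem_comap, LinearMap.mem_ker, Subtype.ext_iff,
      coe_restrictRange_pow_apply, pow_succ]
    rfl
  rw [hcomap, natCard_comap_of_surjective π.surjective_rangeRestrict, π.ker_rangeRestrict]

end RestrictRange

theorem exists_sup_closure_range_eq_top {p : ℕ} [Fact p.Prime] {S : Type*} [AddCommGroup S]
    [Module (ZMod p) S] [Finite S] (U : Submodule (ZMod p) S) {X : Type*} [Fintype X]
    (hX : Nat.card S = Nat.card U * p ^ Fintype.card X) :
    ∃ c : X → S, U.toAddSubmonoid ⊔ AddSubmonoid.closure (Set.range c) = ⊤ := by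
  obtain ⟨C, hC⟩ := U.exists_isCompl
  have hcard : Module.finrank (ZMod p) C = Fintype.card X := by
    have hSC := Nat.card_congr (Submodule.prodEquivOfIsCompl _ C hC).toEquiv
    rw [Nat.card_prod, hX] at hSC
    have hCX := Nat.eq_of_mul_eq_mul_left (Nat.card_pos (α := U)) hSC
    rw [Module.natCard_eq_pow_finrank (K := ZMod p), Nat.card_zmod] at hCX
    exact Nat.pow_right_injective (Fact.out : p.Prime).two_le hCX
  let b := (Module.finBasisOfFinrankEq (ZMod p) C hcard).reindex (Fintype.equivFin X).symm
  refine ⟨fun x => b x, eq_top_iff.2 fun x _ => ?_⟩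
  obtain ⟨y, hy, z, hz, rfl⟩ := Submodule.mem_sup.1 (hC.sup_eq_top ▸ Submodule.mem_top (x := x))
  refine AddSubmonoid.add_mem_sup hy ?_
  have hz_sum : z = ∑ x, (b.repr ⟨z, hz⟩ x).val • (b x : S) := by
    have sum_repr := congrArg C.subtype (b.sum_repr ⟨z, hz⟩)
    simp_rw [map_sum, map_smul] at sum_repr
    simpa [← Nat.cast_smul_eq_nsmul (ZMod p)] using sum_repr.symm
  rw [hz_sum]
  exact sum_mem fun x _ => nsmul_mem (AddSubmonoid.subset_closure (Set.mem_range_self x)) _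

section Existence

variable {J : Type*} [Fintype J] {p c : ℕ} {lam : J → ℕ}
variable {R A : Type*} [Ring R] [AddCommGroup A] [Module R A] {π : Module.End R A} {a : J → A}

theorem exists_generators_ker [Fact p.Prime] [Finite A] (hπ : ∀ x, p • x = c • π x)
    (h : Nat.card (LinearMap.ker π) = p ^ ∑ j, min (lam j) 1)
    (h' : Nat.card (LinearMap.ker (restrictRange π)) = p ^ ∑ j, min (lam j - 1) 1) :
    ∃ e : {j // lam j = 1} → LinearMap.ker π,
      ((LinearMap.range π).comap (LinearMap.ker π).subtype).toAddSubmonoid ⊔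
        AddSubmonoid.closure (Set.range e) = ⊤ := by
  have nsmul_eq_zero (x : LinearMap.ker π) : p • x = 0 :=
    Subtype.ext ((hπ x).trans (by rw [LinearMap.mem_ker.1 x.2, smul_zero]; rfl))
  have card_comap : Nat.card ((LinearMap.range π).comap (LinearMap.ker π).subtype) =
      Nat.card (LinearMap.ker (restrictRange π)) := Nat.card_congr
    { toFun x := ⟨⟨x.1.1, x.2⟩, Subtype.ext x.1.2⟩
      invFun x := ⟨⟨x.1.1, congrArg Subtype.val x.2⟩, x.1.2⟩ }
  let _ : Module (ZMod p) (LinearMap.ker π) := AddCommGroup.zmodModule nsmul_eq_zero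
  refine exists_sup_closure_range_eq_top (AddSubgroup.toZModSubmodule p
    ((LinearMap.range π).comap (LinearMap.ker π).subtype).toAddSubgroup) ?_
  have min_add (j : J) : min (lam j) 1 = min (lam j - 1) 1 + if lam j = 1 then 1 else 0 := by
    split_ifs <;> omega
  refine (h.trans ?_).trans (congrArg (· * _) (card_comap.trans h').symm)
  rw [← pow_add, Fintype.card_subtype, card_filter, ← sum_add_distrib]
  simp_rw [min_add]

theorem exists_map_digitSum_eq {b : J → LinearMap.range π}
    (hb : Function.Surjective (digitSum (fun j => lam j - 1) (restrictRange π) b))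
    (ha : ∀ j, π (a j) = b j) (x : A) : ∃ d, π (digitSum lam π a d) = π x := by
  obtain ⟨m, hm⟩ := hb ⟨π x, x, rfl⟩
  have hm' : π (digitSum (fun j => lam j - 1) π a m) = π x := by
    have coe_digitSum := map_digitSum (lam := fun j => lam j - 1) (π := restrictRange π)
      (ϖ := π) (a := b) (f := (LinearMap.range π).subtype.toAddMonoidHom) (fun _ => rfl) m
    rw [hm] at coe_digitSum
    rw [show π x = _ from coe_digitSum]
    exact (map_digitSum (f := π.toAddMonoidHom) (fun _ => rfl) m).trans
      (congrArg (fun b => digitSum _ π b m) (funext ha))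
  have mem_mrange : digitSum (fun j => lam j - 1) π a m ∈ AddMonoidHom.mrange (digitSum lam π a) :=
    sum_mem fun j _ => sum_mem fun i hi =>
      nsmul_mem (pow_apply_mem_mrange_digitSum ((mem_range.1 hi).trans_le (Nat.sub_le _ _))) _
  obtain ⟨d, hd⟩ := mem_mrange
  exact ⟨d, by rw [hd, hm']⟩

theorem digitSum_surjective_of_generators
    (hd : ∀ x, ∃ d, π (digitSum lam π a d) = π x) (ha : ∀ j, (π ^ lam j) (a j) = 0)
    {e : {j // lam j = 1} → LinearMap.ker π}
    (he : ((LinearMap.range π).comap (LinearMap.ker π).subtype).toAddSubmonoid ⊔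
      AddSubmonoid.closure (Set.range e) = ⊤) (hae : ∀ j, a j.1 = e j) :
    Function.Surjective (digitSum lam π a) := by
  have ker_le : (⊤ : AddSubmonoid (LinearMap.ker π)) ≤
      (AddMonoidHom.mrange (digitSum lam π a)).comap (LinearMap.ker π).subtype.toAddMonoidHom := by
    rw [← he, sup_le_iff, AddSubmonoid.closure_le]
    refine ⟨?_, ?_⟩
    · rintro ⟨_, _⟩ ⟨x, rfl⟩
      obtain ⟨d, hd⟩ := hd x
      exact ⟨shiftDigits lam d, (digitSum_shiftDigits ha d).trans hd⟩
    · rintro _ ⟨j, rfl⟩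
      have : (π ^ 0) (a j.1) ∈ AddMonoidHom.mrange (digitSum lam π a) :=
        pow_apply_mem_mrange_digitSum (by rw [j.2]; exact one_pos)
      rwa [pow_zero, Module.End.one_apply, hae] at this
  intro x
  obtain ⟨d, hd⟩ := hd x
  obtain ⟨d', hd'⟩ := ker_le (x := ⟨x - digitSum lam π a d, by
    rw [LinearMap.mem_ker, map_sub, hd, sub_self]⟩) trivial
  exact ⟨d' + d, by rw [map_add, hd']; exact sub_add_cancel _ _⟩

/-- Lift the basis of the range, and fill the rows of length one with elements which generate
`ker π` modulo the range. -/
theorem exists_isDigitBasis_of_restrictRange [Fact p.Prime] [Finite A]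
    (hπ : ∀ x, p • x = c • π x) {b : J → LinearMap.range π}
    (hb : IsDigitBasis p c (fun j => lam j - 1) (restrictRange π) b)
    (h : Nat.card (LinearMap.ker π) = p ^ ∑ j, min (lam j) 1)
    (h' : Nat.card (LinearMap.ker (restrictRange π)) = p ^ ∑ j, min (lam j - 1) 1)
    (hA : Nat.card A = p ^ ∑ j, lam j) : ∃ a, IsDigitBasis p c lam π a := by
  obtain ⟨e, he⟩ := exists_generators_ker hπ h h'
  choose lift lift_eq using fun j => (b j).2
  let a (j : J) : A := if hj : lam j = 1 then e ⟨j, hj⟩ else if lam j = 0 then 0 else lift j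
  have b_eq_zero (j : J) (hj : lam j ≤ 1) : b j = 0 := by
    simpa [Nat.sub_eq_zero_of_le hj] using hb.pow_apply_eq_zero j
  have map_a (j : J) : π (a j) = b j := by
    dsimp only [a]
    split_ifs with h1 h0
    · rw [b_eq_zero j h1.le, LinearMap.mem_ker.1 (e ⟨j, h1⟩).2, ZeroMemClass.coe_zero]
    · rw [b_eq_zero j (by omega), map_zero, ZeroMemClass.coe_zero]
    · exact lift_eq j
  have ann (j : J) : (π ^ lam j) (a j) = 0 := by
    rcases hl : lam j with _ | l
    · simp [a, hl]
    · rw [pow_succ, Module.End.mul_apply, map_a, ← coe_restrictRange_pow_apply]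
      simpa [hl] using congrArg Subtype.val (hb.pow_apply_eq_zero j)
  exact ⟨a, .of_surjective (Fact.out : p.Prime).pos hπ ann hA
    (digitSum_surjective_of_generators (exists_map_digitSum_eq hb.digitSum_surjective map_a) ann he
      fun j => dif_pos j.2)⟩

theorem natCard_ker_restrictRange_pow (hp : 0 < p)
    (h : ∀ i, Nat.card (LinearMap.ker (π ^ i)) = p ^ ∑ j, min (lam j) i) (i : ℕ) :
    Nat.card (LinearMap.ker (restrictRange π ^ i)) = p ^ ∑ j, min (lam j - 1) i := by
  have hsucc := natCard_ker_pow_succ π i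
  have h1 := h 1
  rw [pow_one] at h1
  have min_succ (j : J) : min (lam j) (i + 1) = min (lam j - 1) i + min (lam j) 1 := by omega
  rw [h, h1] at hsucc
  simp_rw [min_succ, sum_add_distrib, pow_add] at hsucc
  exact (Nat.eq_of_mul_eq_mul_right (pow_pos hp _) hsucc).symm

theorem natCard_eq_pow_sum {n : ℕ} (hn : ∀ x, (π ^ n) x = 0)
    (h : ∀ i, Nat.card (LinearMap.ker (π ^ i)) = p ^ ∑ j, min (lam j) i) :
    Nat.card A = p ^ ∑ j, lam j := by
  have ker_eq_top : LinearMap.ker (π ^ (n + ∑ j, lam j)) = ⊤ := LinearMap.ker_eq_top.2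
    (LinearMap.ext fun x => Module.End.pow_map_zero_of_le (Nat.le_add_right _ _) (hn x))
  have hcard := h (n + ∑ j, lam j)
  rw [ker_eq_top, Nat.card_congr Submodule.topEquiv.toEquiv] at hcard
  rw [hcard]
  congr 1
  refine sum_congr rfl fun j _ => min_eq_left (le_add_left ?_)
  exact single_le_sum (fun j _ => Nat.zero_le (lam j)) (mem_univ j)

theorem exists_isDigitBasis [Fact p.Prime] {n : ℕ} (hπ : ∀ x, p • x = c • π x)
    (hn : ∀ x, (π ^ n) x = 0)
    (h : ∀ i, Nat.card (LinearMap.ker (π ^ i)) = p ^ ∑ j, min (lam j) i) :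
    ∃ a, IsDigitBasis p c lam π a := by
  have hp := (Fact.out : p.Prime).pos
  induction n generalizing A lam with
  | zero =>
    have : Subsingleton A := ⟨fun x y => (hn x).trans (hn y).symm⟩
    exact ⟨0, .of_surjective hp hπ (fun _ => Subsingleton.elim _ _) (natCard_eq_pow_sum hn h)
      fun x => ⟨0, Subsingleton.elim _ _⟩⟩
  | succ n ih =>
    have hA := natCard_eq_pow_sum hn h
    have : Finite A := Nat.finite_of_card_ne_zero (by rw [hA]; exact (pow_pos hp _).ne')
    have h' := natCard_ker_restrictRange_pow hp h
    obtain ⟨b, hb⟩ := ih (π := restrictRange π) (fun x => Subtype.ext (hπ x))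
      (by
        rintro ⟨_, x, rfl⟩
        exact Subtype.ext ((coe_restrictRange_pow_apply π n _).trans (hn x))) h'
    exact exists_isDigitBasis_of_restrictRange hπ hb (by simpa using h 1) (by simpa using h' 1) hA

end Existence

/-! ### Twists -/

section IsTwist

variable {R A : Type*} [Ring R] [AddCommGroup A] [Module R A] {π : Module.End R A}
variable {S B : Type*} [Ring S] [AddCommGroup B] [Module S B] {ϖ : Module.End S B}
variable {T C : Type*} [Ring T] [AddCommGroup C] [Module T C] {ρ : Module.End T C}

variable (π ϖ) in
/-- A bijection intertwining `π` and `ϖ` that is additive on `ker π` and additive modulo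
`range ϖ`. This much additivity suffices to transport a Lie bracket that takes values in `ker π`
and vanishes on `range π`. -/
structure IsTwist (E : A ≃ B) : Prop where
  map_apply (x : A) : E (π x) = ϖ (E x)
  map_add_of_ker {x y : A} (hx : π x = 0) (hy : π y = 0) : E (x + y) = E x + E y
  map_add_smodEq (x y : A) : E (x + y) ≡ E x + E y [SMOD LinearMap.range ϖ]

namespace IsTwist

variable {E : A ≃ B}

theorem of_addEquiv (f : A ≃+ B) (hf : ∀ x, f (π x) = ϖ (f x)) : IsTwist π ϖ f.toEquiv where
  map_apply := hf
  map_add_of_ker _ _ := map_add f _ _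
  map_add_smodEq x y := congrArg _ (map_add f x y)

theorem map_zero (h : IsTwist π ϖ E) : E 0 = 0 := by
  have := h.map_add_of_ker (_root_.map_zero π) (_root_.map_zero π)
  rwa [add_zero, left_eq_add] at this

theorem map_eq_zero_iff (h : IsTwist π ϖ E) {x : A} : E x = 0 ↔ x = 0 := by
  rw [← h.map_zero, E.injective.eq_iff]

theorem map_pow_apply (h : IsTwist π ϖ E) (i : ℕ) (x : A) : E ((π ^ i) x) = (ϖ ^ i) (E x) := by
  simpa [Module.End.pow_apply] using (Function.Semiconj.iterate_right h.map_apply i).eq x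

theorem natCard_ker_pow (h : IsTwist π ϖ E) (i : ℕ) :
    Nat.card (LinearMap.ker (π ^ i)) = Nat.card (LinearMap.ker (ϖ ^ i)) :=
  Nat.card_congr <| E.subtypeEquiv fun x => by
    rw [LinearMap.mem_ker, LinearMap.mem_ker, ← h.map_pow_apply, h.map_eq_zero_iff]

theorem mem_range_iff (h : IsTwist π ϖ E) {x : A} :
    E x ∈ LinearMap.range ϖ ↔ x ∈ LinearMap.range π := by
  refine E.surjective.exists.trans (exists_congr fun y => ?_)
  rw [← h.map_apply, E.injective.eq_iff]

theorem smodEq_iff (h : IsTwist π ϖ E) {x y : A} :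
    E x ≡ E y [SMOD LinearMap.range ϖ] ↔ x ≡ y [SMOD LinearMap.range π] := by
  have map_sub_add := h.map_add_smodEq (x - y) y
  rw [sub_add_cancel, SModEq.sub_mem] at map_sub_add
  rw [SModEq.sub_mem, SModEq.sub_mem, ← h.mem_range_iff,
    ← (LinearMap.range ϖ).add_mem_iff_right (y := E (x - y)) map_sub_add, ← sub_sub,
    sub_right_comm, sub_add_cancel]

theorem symm (h : IsTwist π ϖ E) : IsTwist ϖ π E.symm where
  map_apply u := by rw [E.symm_apply_eq, h.map_apply, E.apply_symm_apply]
  map_add_of_ker {u v} hu hv := by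
    obtain ⟨x, rfl⟩ := E.surjective u
    obtain ⟨y, rfl⟩ := E.surjective v
    rw [← h.map_apply, h.map_eq_zero_iff] at hu hv
    rw [← h.map_add_of_ker hu hv]
    simp only [E.symm_apply_apply]
  map_add_smodEq u v := by
    rw [← h.smodEq_iff, E.apply_symm_apply]
    simpa using (h.map_add_smodEq (E.symm u) (E.symm v)).symm

theorem trans (h : IsTwist π ϖ E) {E' : B ≃ C} (h' : IsTwist ϖ ρ E') :
    IsTwist π ρ (E.trans E') where
  map_apply x := (congrArg E' (h.map_apply x)).trans (h'.map_apply _)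
  map_add_of_ker {x y} hx hy := (congrArg E' (h.map_add_of_ker hx hy)).trans <|
    h'.map_add_of_ker (by rw [← h.map_apply, hx, h.map_zero])
      (by rw [← h.map_apply, hy, h.map_zero])
  map_add_smodEq x y := (h'.smodEq_iff.2 (h.map_add_smodEq x y)).trans (h'.map_add_smodEq _ _)

end IsTwist

end IsTwist

namespace IsDigitBasis

variable {J : Type*} [Fintype J] {p c c' : ℕ} {lam : J → ℕ}
variable {R A : Type*} [Ring R] [AddCommGroup A] [Module R A] {π : Module.End R A} {a : J → A}
variable {S B : Type*} [Ring S] [AddCommGroup B] [Module S B] {ϖ : Module.End S B} {b : J → B}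

theorem mkQ_range_apply (x : B) : (LinearMap.range ϖ).mkQ (ϖ x) = 0 :=
  (Submodule.Quotient.mk_eq_zero _).2 (LinearMap.mem_range_self ϖ x)

/-- Modulo `range ϖ` no carries occur. -/
theorem map_add_smodEq_of_digitSum (h : IsDigitBasis p c lam π a) (h' : IsDigitBasis p c' lam ϖ b)
    (hp : 0 < p) {E : A → B}
    (hE : ∀ d ∈ digitArrays p lam, E (digitSum lam π a d) = digitSum lam ϖ b d) (x y : A) :
    E (x + y) ≡ E x + E y [SMOD LinearMap.range ϖ] := by
  let q := (LinearMap.range ϖ).mkQ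
  have map_digitSum_q (d : J → ℕ → ℕ) :
      q (digitSum lam ϖ b d) = digitSum lam (0 : Module.End S (B ⧸ LinearMap.range ϖ)) (q ∘ b) d :=
    map_digitSum (f := q.toAddMonoidHom) mkQ_range_apply d
  obtain ⟨F, hF⟩ := h.exists_addMonoidHom (B := B ⧸ LinearMap.range ϖ) (ϖ := (0 : Module.End S _))
    (b := q ∘ b) hp
    (by
      intro x
      obtain ⟨x, rfl⟩ := (LinearMap.range ϖ).mkQ_surjective x
      refine (map_nsmul q p x).symm.trans ?_
      rw [h'.nsmul_eq, map_nsmul, mkQ_range_apply, smul_zero, LinearMap.zero_apply, smul_zero])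
    (fun j => by
      have := map_pow_apply_of_semiconj (π := ϖ) (ϖ := (0 : Module.End S _))
        (f := q.toAddMonoidHom) mkQ_range_apply (lam j) (b j)
      rw [h'.pow_apply_eq_zero, map_zero] at this
      exact this.symm)
  have mk_E (x : A) : q (E x) = F x := by
    obtain ⟨d, hd, rfl⟩ := h.exists_digitSum_eq x
    rw [hE d hd, hF, map_digitSum_q]
  change q (E (x + y)) = q (E x + E y)
  rw [map_add, mk_E, mk_E, mk_E, map_add]

theorem map_add_of_digitSum (h : IsDigitBasis p c lam π a) (h' : IsDigitBasis p c' lam ϖ b)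
    (hp : 0 < p) {E : A → B}
    (hE : ∀ d ∈ digitArrays p lam, E (digitSum lam π a d) = digitSum lam ϖ b d) {x y : A}
    (hx : π x = 0) (hy : π y = 0) : E (x + y) = E x + E y := by
  obtain ⟨d, hd, rfl⟩ := h.exists_digitSum_eq x
  obtain ⟨e, he, rfl⟩ := h.exists_digitSum_eq y
  have digit_add (j : J) (i : ℕ) (hi : i + 1 ≠ lam j) : (d + e) j i = 0 := by
    simp [h.digit_eq_zero hp hd hx hi, h.digit_eq_zero hp he hy hi]
  rw [hE d hd, hE e he, ← map_add, ← map_add, ← h.digitSum_mod digit_add,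
    ← h'.digitSum_mod digit_add]
  refine hE _ ⟨fun j i => Nat.mod_lt _ hp, fun j i hi => ?_⟩
  simp only [digit_add j i (by omega), Nat.zero_mod]

theorem exists_isTwist (h : IsDigitBasis p c lam π a) (h' : IsDigitBasis p c' lam ϖ b)
    (hp : 0 < p) : ∃ E : A ≃ B, IsTwist π ϖ E := by
  choose dig dig_mem digitSum_dig using h.exists_digitSum_eq
  let E (x : A) : B := digitSum lam ϖ b (dig x)
  have E_digitSum (d) (hd : d ∈ digitArrays p lam) :
      E (digitSum lam π a d) = digitSum lam ϖ b d := by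
    dsimp only [E]
    rw [h.bijOn.injOn (dig_mem _) hd (digitSum_dig _)]
  have bijective : Function.Bijective E := by
    refine ⟨fun x y hxy => ?_, fun y => ?_⟩
    · rw [← digitSum_dig x, ← digitSum_dig y, h'.bijOn.injOn (dig_mem x) (dig_mem y) hxy]
    · obtain ⟨d, hd, rfl⟩ := h'.exists_digitSum_eq y
      exact ⟨_, E_digitSum d hd⟩
  refine ⟨.ofBijective E bijective, ?_, h.map_add_of_digitSum h' hp E_digitSum,
    h.map_add_smodEq_of_digitSum h' hp E_digitSum⟩
  intro x
  obtain ⟨d, hd, rfl⟩ := h.exists_digitSum_eq x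
  rw [Equiv.ofBijective_apply, Equiv.ofBijective_apply, ← digitSum_shiftDigits h.pow_apply_eq_zero,
    E_digitSum _ (shiftDigits_mem_digitArrays hp hd), E_digitSum d hd,
    digitSum_shiftDigits h'.pow_apply_eq_zero]

theorem map_eq_of_isTwist (h : IsDigitBasis p c lam π a) (hp : 0 < p) {g : A ≃ B}
    (hg : IsTwist π ϖ g) {F : A →+ B}
    (hF : ∀ j, ∀ i < lam j, F ((π ^ i) (a j)) = g ((π ^ i) (a j))) {x : A} (hx : π x = 0) :
    F x = g x := by
  obtain ⟨d, hd, rfl⟩ := h.exists_digitSum_eq x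
  let N : AddSubmonoid A :=
    { carrier := {x | π x = 0 ∧ F x = g x}
      zero_mem' := ⟨map_zero π, by rw [map_zero, hg.map_zero]⟩
      add_mem' := fun hx hy => ⟨by rw [map_add, hx.1, hy.1, add_zero],
        by rw [map_add, hx.2, hy.2, hg.map_add_of_ker hx.1 hy.1]⟩ }
  have mem_N (j : J) (i : ℕ) (hi : i ∈ range (lam j)) : d j i • (π ^ i) (a j) ∈ N := by
    by_cases htop : i + 1 = lam j
    · refine nsmul_mem (show _ ∈ N from ⟨?_, hF j i (mem_range.1 hi)⟩) _
      rw [← Module.End.mul_apply, ← pow_succ', htop, h.pow_apply_eq_zero]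
    · rw [h.digit_eq_zero hp hd hx htop, zero_nsmul]
      exact zero_mem _
  exact (sum_mem fun j _ => sum_mem (mem_N j) : digitSum lam π a d ∈ N).2

theorem exists_addMonoidHom_of_isTwist (h : IsDigitBasis p c lam π a) (hp : 0 < p)
    (hϖ : ∀ x, p • x = c • ϖ x) {g : A ≃ B} (hg : IsTwist π ϖ g) :
    ∃ F : A →+ B, (∀ x, F (π x) = ϖ (F x)) ∧ (∀ x, F x ≡ g x [SMOD LinearMap.range ϖ]) ∧
      ∀ x, π x = 0 → F x = g x := by
  have ann (j : J) : (ϖ ^ lam j) (g (a j)) = 0 := by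
    rw [← hg.map_pow_apply, h.pow_apply_eq_zero, hg.map_zero]
  obtain ⟨F, hF⟩ := h.exists_addMonoidHom hp hϖ ann
  refine ⟨F, fun x => ?_, fun x => ?_, fun x => h.map_eq_of_isTwist hp hg fun j i hi => ?_⟩
  · obtain ⟨d, rfl⟩ := h.digitSum_surjective x
    rw [← digitSum_shiftDigits h.pow_apply_eq_zero, hF, hF, digitSum_shiftDigits ann]
  · let q := (LinearMap.range ϖ).mkQ
    let G : A →+ B ⧸ LinearMap.range ϖ := .mk' (fun x => q (g x)) fun x y =>
      (hg.map_add_smodEq x y).trans (map_add q _ _)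
    obtain ⟨d, rfl⟩ := h.digitSum_surjective x
    rw [hF]
    change q.toAddMonoidHom _ = G _
    rw [map_digitSum (ϖ := (0 : Module.End S (B ⧸ LinearMap.range ϖ))) mkQ_range_apply,
      map_digitSum (ϖ := (0 : Module.End S (B ⧸ LinearMap.range ϖ))) fun x =>
        (congrArg q (hg.map_apply x)).trans (mkQ_range_apply _)]
    rfl
  · classical
    rw [← one_nsmul ((π ^ i) (a j)), ← digitSum_single hi, hF, digitSum_single hi,
      digitSum_single hi, one_nsmul, one_nsmul, hg.map_pow_apply]

theorem exists_addEquiv_of_isTwist [Finite A] (h : IsDigitBasis p c lam π a) (hp : 0 < p)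
    (hϖ : ∀ x, p • x = c • ϖ x) {g : A ≃ B} (hg : IsTwist π ϖ g) :
    ∃ F : A ≃+ B, (∀ x, F (π x) = ϖ (F x)) ∧ (∀ x, F x ≡ g x [SMOD LinearMap.range ϖ]) ∧
      ∀ x, π x = 0 → F x = g x := by
  obtain ⟨F, F_apply, F_smodEq, F_ker⟩ := h.exists_addMonoidHom_of_isTwist hp hϖ hg
  have eq_zero (k : ℕ) {x : A} (hx : (π ^ k) x = 0) (hFx : F x = 0) : x = 0 := by
    induction k with
    | zero => exact hx
    | succ k ih =>
      rw [pow_succ', Module.End.mul_apply] at hx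
      refine ih (hg.map_eq_zero_iff.1 ?_)
      rw [← F_ker _ hx, map_pow_apply_of_semiconj F_apply, hFx, map_zero]
  have injective : Function.Injective F := (injective_iff_map_eq_zero F).2 fun x =>
    eq_zero _ (h.pow_apply_eq_zero_of_sum_le x)
  exact ⟨.ofBijective F ⟨injective,
    (Finite.injective_iff_surjective_of_equiv g).1 injective⟩, F_apply, F_smodEq, F_ker⟩

end IsDigitBasis

section IsCentral

variable {R A : Type*} [Ring R] [LieRing A] [Module R A] {π : Module.End R A}

variable (π) in
/-- The image of `π` is central and `π` kills all brackets, that is, `π ⁅x, y⁆ = ⁅π x, y⁆ = 0`. -/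
structure IsCentral : Prop where
  lie_eq_zero (x y : A) : ⁅π x, y⁆ = 0
  map_lie_eq_zero (x y : A) : π ⁅x, y⁆ = 0

theorem isCentral_natCast_iff {p : ℕ} :
    IsCentral (p : Module.End ℤ A) ↔ ∀ x y : A, p • ⁅x, y⁆ = 0 := by
  refine ⟨fun h x y => ?_, fun h => ⟨fun x y => ?_, fun x y => ?_⟩⟩
  · simpa using h.map_lie_eq_zero x y
  · rw [Module.End.natCast_apply, nsmul_lie, h]
  · rw [Module.End.natCast_apply, h]

theorem IsCentral.lie_congr (hπ : IsCentral π) {x x' y y' : A}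
    (hx : x ≡ x' [SMOD LinearMap.range π]) (hy : y ≡ y' [SMOD LinearMap.range π]) :
    ⁅x, y⁆ = ⁅x', y'⁆ := by
  obtain ⟨u, hu⟩ := SModEq.sub_mem.1 hx
  obtain ⟨v, hv⟩ := SModEq.sub_mem.1 hy
  rw [← sub_add_cancel x x', ← sub_add_cancel y y', ← hu, ← hv, add_lie, hπ.lie_eq_zero, zero_add,
    lie_add, ← lie_skew, hπ.lie_eq_zero, neg_zero, zero_add]

end IsCentral

theorem isNilpotent_of_equiv {A B : Type*} [LieRing A] [LieRing B] [LieRing.IsNilpotent A]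
    (E : A ≃ B) (map_lie : ∀ x y, E ⁅x, y⁆ = ⁅E x, E y⁆) : LieRing.IsNilpotent B := by
  have map_zero : E 0 = 0 := by simpa using map_lie 0 0
  have map_mem_ucs (k : ℕ) (x : A) :
      E x ∈ (⊥ : LieSubmodule ℤ B B).ucs k ↔ x ∈ (⊥ : LieSubmodule ℤ A A).ucs k := by
    induction k generalizing x with
    | zero =>
      rw [LieSubmodule.ucs_zero, LieSubmodule.ucs_zero, LieSubmodule.mem_bot,
        LieSubmodule.mem_bot, ← map_zero, E.injective.eq_iff]
    | succ k ih =>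
      rw [LieSubmodule.ucs_succ, LieSubmodule.ucs_succ, LieSubmodule.mem_normalizer,
        LieSubmodule.mem_normalizer, E.surjective.forall]
      simp only [← map_lie, ih]
  obtain ⟨k, hk⟩ := (LieModule.isNilpotent_iff_exists_ucs_eq_top ℤ (M := A)).1 ‹_›
  refine (LieModule.isNilpotent_iff_exists_ucs_eq_top ℤ (M := B)).2 ⟨k, eq_top_iff.2 fun y _ => ?_⟩
  rw [← E.apply_symm_apply y, map_mem_ucs, hk]
  exact LieSubmodule.mem_top _

section lieRing

variable {R A : Type*} [Ring R] [LieRing A] [Module R A] {π : Module.End R A}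
variable {S B : Type*} [Ring S] [AddCommGroup B] [Module S B] {ϖ : Module.End S B} {E : A ≃ B}

/-- The Lie ring structure with bracket `E ⁅E⁻¹ u, E⁻¹ v⁆` obtained by transport along a twist. -/
abbrev IsTwist.lieRing (h : IsTwist π ϖ E) (hπ : IsCentral π) : LieRing B where
  bracket u v := E ⁅E.symm u, E.symm v⁆
  add_lie u v w := by
    change E ⁅E.symm (u + v), E.symm w⁆ = E ⁅E.symm u, E.symm w⁆ + E ⁅E.symm v, E.symm w⁆
    rw [hπ.lie_congr (h.symm.map_add_smodEq u v) SModEq.rfl, add_lie,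
      h.map_add_of_ker (hπ.map_lie_eq_zero _ _) (hπ.map_lie_eq_zero _ _)]
  lie_add u v w := by
    change E ⁅E.symm u, E.symm (v + w)⁆ = E ⁅E.symm u, E.symm v⁆ + E ⁅E.symm u, E.symm w⁆
    rw [hπ.lie_congr SModEq.rfl (h.symm.map_add_smodEq v w), lie_add,
      h.map_add_of_ker (hπ.map_lie_eq_zero _ _) (hπ.map_lie_eq_zero _ _)]
  lie_self u := by
    change E ⁅E.symm u, E.symm u⁆ = 0
    rw [lie_self, h.map_zero]
  leibniz_lie u v w := by
    change E ⁅E.symm u, E.symm (E ⁅E.symm v, E.symm w⁆)⁆ =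
      E ⁅E.symm (E ⁅E.symm u, E.symm v⁆), E.symm w⁆ + E ⁅E.symm v, E.symm (E ⁅E.symm u, E.symm w⁆)⁆
    rw [← h.map_add_of_ker (hπ.map_lie_eq_zero _ _) (hπ.map_lie_eq_zero _ _)]
    simp only [E.symm_apply_apply]
    rw [leibniz_lie]

end lieRing

variable {R A : Type*} [Ring R] [LieRing A] [Module R A] {π : Module.End R A}
variable {S B : Type*} [Ring S] [LieRing B] [Module S B] {ϖ : Module.End S B}
variable {T C : Type*} [Ring T] [LieRing C] [Module T C] {ρ : Module.End T C}

variable (π ϖ) in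
/-- A twist preserving Lie brackets. Multiplication by `p` on the Lie ring of a `p`-group
corresponds along such a bijection to the endomorphism `σ` of a Lie algebra over `ℤ/p`. -/
structure IsLieTwist (E : A ≃ B) : Prop extends IsTwist π ϖ E where
  map_lie (x y : A) : E ⁅x, y⁆ = ⁅E x, E y⁆

theorem IsTwist.isLieTwist {B : Type*} [AddCommGroup B] [Module S B] {ϖ : Module.End S B}
    {E : A ≃ B} (h : IsTwist π ϖ E) (hπ : IsCentral π) :
    let _ := h.lieRing hπ
    IsLieTwist π ϖ E :=
  let _ := h.lieRing hπ
  { h with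
    map_lie := fun x y => by
      change E ⁅x, y⁆ = E ⁅E.symm (E x), E.symm (E y)⁆
      rw [E.symm_apply_apply, E.symm_apply_apply] }

namespace IsLieTwist

variable {E : A ≃ B}

theorem of_addEquiv (f : A ≃+ B) (hf : ∀ x, f (π x) = ϖ (f x))
    (map_lie : ∀ x y, f ⁅x, y⁆ = ⁅f x, f y⁆) : IsLieTwist π ϖ f.toEquiv :=
  ⟨.of_addEquiv f hf, map_lie⟩

theorem symm (h : IsLieTwist π ϖ E) : IsLieTwist ϖ π E.symm where
  toIsTwist := h.toIsTwist.symm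
  map_lie u v := by
    rw [E.symm_apply_eq, h.map_lie, E.apply_symm_apply, E.apply_symm_apply]

theorem trans (h : IsLieTwist π ϖ E) {E' : B ≃ C} (h' : IsLieTwist ϖ ρ E') :
    IsLieTwist π ρ (E.trans E') where
  toIsTwist := h.toIsTwist.trans h'.toIsTwist
  map_lie x y := (congrArg E' (h.map_lie x y)).trans (h'.map_lie _ _)

theorem isCentral (h : IsLieTwist π ϖ E) (hπ : IsCentral π) : IsCentral ϖ where
  lie_eq_zero := by
    simp only [E.surjective.forall, ← h.map_apply, ← h.map_lie, hπ.lie_eq_zero, h.map_zero,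
      implies_true]
  map_lie_eq_zero := by
    simp only [E.surjective.forall, ← h.map_apply, ← h.map_lie, hπ.map_lie_eq_zero, h.map_zero,
      implies_true]

theorem exists_addEquiv {J : Type*} [Fintype J] {p c : ℕ} {lam : J → ℕ} {a : J → A} [Finite A]
    {g : A ≃ B} (hg : IsLieTwist π ϖ g) (h : IsDigitBasis p c lam π a) (hp : 0 < p)
    (hϖ : ∀ x, p • x = c • ϖ x) (hπ : IsCentral π) :
    ∃ F : A ≃+ B, (∀ x, F (π x) = ϖ (F x)) ∧ ∀ x y, F ⁅x, y⁆ = ⁅F x, F y⁆ := by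
  obtain ⟨F, F_apply, F_smodEq, F_ker⟩ := h.exists_addEquiv_of_isTwist hp hϖ hg.toIsTwist
  refine ⟨F, F_apply, fun x y => ?_⟩
  rw [F_ker _ (hπ.map_lie_eq_zero x y), hg.map_lie]
  exact (hg.isCentral hπ).lie_congr (F_smodEq x).symm (F_smodEq y).symm

end IsLieTwist

end LazardCorrespondence

section ZMod

variable {p : ℕ}

theorem natCard_eq_pow_finrank [Fact p.Prime] (K : Type*) [AddCommGroup K] [Module (ZMod p) K]
    [Module.Finite (ZMod p) K] :
    Nat.card K = p ^ Module.finrank (ZMod p) K := by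
  rw [Module.natCard_eq_pow_finrank (K := ZMod p), Nat.card_zmod]

theorem nsmul_eq_zero_of_zmod {K : Type*} [AddCommGroup K] [Module (ZMod p) K] (x : K) :
    p • x = 0 := by
  rw [← Nat.cast_smul_eq_nsmul (ZMod p), CharP.cast_eq_zero, zero_smul]

end ZMod

section Models

variable {J : Type*} [Fintype J] {p : ℕ} {lam : J → ℕ}

theorem pow_apply_mem_mrange_digitSum_of_pow_apply_eq_zero {R A : Type*} [Ring R]
    [AddCommGroup A] [Module R A] {π : Module.End R A} {a : J → A}
    (ha : ∀ j, (π ^ lam j) (a j) = 0) (j : J) (i : ℕ) :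
    (π ^ i) (a j) ∈ AddMonoidHom.mrange (digitSum lam π a) := by
  rcases lt_or_ge i (lam j) with hi | hi
  · exact pow_apply_mem_mrange_digitSum hi
  · rw [Module.End.pow_map_zero_of_le hi (ha j)]
    exact zero_mem _

open scoped Classical in
theorem isDigitBasis_pi_zmod [NeZero p] (lam : J → ℕ) :
    IsDigitBasis p 1 lam (p : Module.End ℤ (∀ j, ZMod (p ^ lam j))) fun j => Pi.single j 1 := by
  have pow_apply (i : ℕ) (x : ∀ j, ZMod (p ^ lam j)) :
      ((p : Module.End ℤ (∀ j, ZMod (p ^ lam j))) ^ i) x = p ^ i • x := by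
    rw [← Nat.cast_pow, Module.End.natCast_apply]
  have pow_lam_apply (j : J) :
      ((p : Module.End ℤ (∀ j, ZMod (p ^ lam j))) ^ lam j) (Pi.single j 1) = 0 := by
    rw [pow_apply, ← Pi.single_smul, nsmul_one, ZMod.natCast_self, Pi.single_zero]
  refine .of_surjective (NeZero.pos p) (fun x => by rw [one_smul, Module.End.natCast_apply])
    pow_lam_apply (by simp [prod_pow_eq_pow_sum]) fun x => ?_
  rw [← AddMonoidHom.mem_mrange, ← univ_sum_single x]
  refine sum_mem fun j _ => ?_
  rw [← ZMod.natCast_zmod_val (x j), ← nsmul_one (x j).val, Pi.single_smul]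
  exact nsmul_mem (pow_apply_mem_mrange_digitSum_of_pow_apply_eq_zero pow_lam_apply j 0) _

open Polynomial

open scoped Classical in
theorem isDigitBasis_pi_adjoinRoot_X_pow [Fact p.Prime] (lam : J → ℕ) :
    IsDigitBasis p 0 lam
      (LinearMap.mulLeft (ZMod p) fun j => AdjoinRoot.root (X ^ lam j : (ZMod p)[X]))
      fun j => Pi.single j 1 := by
  let r (j : J) := AdjoinRoot.root (X ^ lam j : (ZMod p)[X])
  have pow_apply (j : J) (i : ℕ) :
      (LinearMap.mulLeft (ZMod p) r ^ i) (Pi.single j 1) = Pi.single j (r j ^ i) := by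
    rw [LinearMap.pow_mulLeft, LinearMap.mulLeft_apply]
    ext k
    rcases eq_or_ne k j with rfl | hk <;> simp [*]
  have pow_lam_apply (j : J) : (LinearMap.mulLeft (ZMod p) r ^ lam j) (Pi.single j 1) = 0 := by
    rw [pow_apply, show r j = _ from AdjoinRoot.mk_X.symm, ← map_pow, AdjoinRoot.mk_self,
      Pi.single_zero]
  have card_adjoinRoot (j : J) :
      Nat.card (AdjoinRoot (X ^ lam j : (ZMod p)[X])) = p ^ lam j := by
    have monic : (X ^ lam j : (ZMod p)[X]).Monic := monic_X_pow _
    have := monic.finite_adjoinRoot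
    rw [natCard_eq_pow_finrank (p := p),
      (AdjoinRoot.powerBasis' monic).finrank, AdjoinRoot.powerBasis'_dim, natDegree_X_pow]
  refine .of_surjective (Fact.out : p.Prime).pos
    (fun x => by rw [zero_smul, nsmul_eq_zero_of_zmod])
    pow_lam_apply (by simp_rw [Nat.card_pi, card_adjoinRoot, prod_pow_eq_pow_sum]) fun x => ?_
  rw [← AddMonoidHom.mem_mrange, ← univ_sum_single x]
  refine sum_mem fun j _ => ?_
  generalize x j = y
  obtain ⟨f, rfl⟩ := AdjoinRoot.mk_surjective y
  induction f using Polynomial.induction_on' with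
  | add f g hf hg =>
    rw [map_add, Pi.single_add]
    exact add_mem hf hg
  | monomial i c =>
    rw [← C_mul_X_pow_eq_monomial, map_mul, map_pow, AdjoinRoot.mk_X, ← ZMod.natCast_zmod_val c,
      map_natCast, map_natCast, ← nsmul_eq_mul, Pi.single_smul, ← pow_apply]
    exact nsmul_mem (pow_apply_mem_mrange_digitSum_of_pow_apply_eq_zero pow_lam_apply j i) _

end Models

/-! ### Groups and Lie algebras with a central endomorphism -/

section ModelTwists

variable {J : Type} [Fintype J] {p c : ℕ} {lam : J → ℕ}
variable {R A : Type*} [Ring R] [LieRing A] [Module R A] {π : Module.End R A} {a : J → A}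

theorem IsDigitBasis.exists_isLieTwist_natCast [NeZero p] (h : IsDigitBasis p c lam π a)
    (hπ : IsCentral π) :
    ∃ (L : Type) (_ : LieRing L) (E : A ≃ L), IsLieTwist π (p : Module.End ℤ L) E := by
  obtain ⟨E, hE⟩ := h.exists_isTwist (isDigitBasis_pi_zmod lam) (NeZero.pos p)
  exact ⟨_, hE.lieRing hπ, E, hE.isLieTwist hπ⟩

theorem IsDigitBasis.exists_isLieTwist_lieAlgebra [Fact p.Prime] (h : IsDigitBasis p c lam π a)
    (hπ : IsCentral π) :
    ∃ (K : Type) (_ : LieRing K) (_ : LieAlgebra (ZMod p) K) (σ : Module.End (ZMod p) K)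
      (E : A ≃ K), IsLieTwist π σ E := by
  obtain ⟨E, hE⟩ := h.exists_isTwist (isDigitBasis_pi_adjoinRoot_X_pow lam) (NeZero.pos p)
  let _ := hE.lieRing hπ
  exact ⟨_, hE.lieRing hπ,
    { lie_smul := fun r x y => ZMod.map_smul (LieAlgebra.ad ℤ _ x) r y }, _, E, hE.isLieTwist hπ⟩

end ModelTwists

section Typed

open scoped commutatorElement

variable {t : ℕ} {p : ℕ} {lam : Fin t → ℕ}

variable (p lam) in
/-- `G` has order `p ^ n`, type `lam`, and all its commutators have order dividing `p`; this is
the property bundled in `TypedGroup`. -/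
def IsTyped (n : ℕ) (G : Type*) [Group G] : Prop :=
  Nat.card G = p ^ n ∧
    (∀ i : ℕ, Nat.card {x : G // x ^ p ^ i = 1} = p ^ (∑ j, min (lam j) i)) ∧
    ∀ x y : G, ⁅x, y⁆ ^ p = 1

variable [Fact p.Prime] {n : ℕ}

theorem natCard_pow_eq_one_of_mulEquiv {G L : Type*} [Group G] [LieRing L] [IsLazard p n L]
    (e : G ≃* LazardGroup p n L) (i : ℕ) :
    Nat.card {x : G // x ^ p ^ i = 1} =
      Nat.card (LinearMap.ker ((p : Module.End ℤ L) ^ i)) := by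
  refine Nat.card_congr ((e.toEquiv.trans LazardGroup.expEquiv.symm).subtypeEquiv fun x => ?_)
  rw [← map_eq_one_iff e e.injective, map_pow, LazardGroup.ext_iff, LazardGroup.log_pow,
    LazardGroup.log_one, LinearMap.mem_ker, ← Nat.cast_pow, Module.End.natCast_apply]
  rfl

theorem commutator_pow_eq_one_iff_of_mulEquiv {G L : Type*} [Group G] [LieRing L] [IsLazard p n L]
    (e : G ≃* LazardGroup p n L) :
    (∀ x y : G, ⁅x, y⁆ ^ p = 1) ↔ IsCentral (p : Module.End ℤ L) := by
  rw [isCentral_natCast_iff, ← LazardGroup.commutator_pow_eq_one_iff (N := n), e.surjective.forall]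
  simp_rw [e.surjective.forall, ← map_commutatorElement, ← map_pow, map_eq_one_iff e e.injective]

theorem exists_isDigitBasis_natCast {L : Type*} [AddCommGroup L] (hn : ∀ x : L, p ^ n • x = 0)
    (h : ∀ i, Nat.card (LinearMap.ker ((p : Module.End ℤ L) ^ i)) = p ^ ∑ j, min (lam j) i) :
    ∃ a, IsDigitBasis p 1 lam (p : Module.End ℤ L) a :=
  exists_isDigitBasis (n := n) (fun x => by rw [one_smul, Module.End.natCast_apply])
    (fun x => by rw [← Nat.cast_pow, Module.End.natCast_apply, hn]) h

end Typed

theorem IsLieTwist.nonempty_lieEquiv_int {J L L' : Type*} [Fintype J] [LieRing L] [Finite L]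
    [LieRing L'] {p : ℕ} [NeZero p] {lam : J → ℕ} {g : L ≃ L'} {a : J → L}
    (hg : IsLieTwist (p : Module.End ℤ L) (p : Module.End ℤ L') g)
    (ha : IsDigitBasis p 1 lam (p : Module.End ℤ L) a) (hL : IsCentral (p : Module.End ℤ L)) :
    Nonempty (L ≃ₗ⁅ℤ⁆ L') := by
  obtain ⟨f, -, f_lie⟩ := hg.exists_addEquiv ha (NeZero.pos p)
    (fun x => by rw [one_smul, Module.End.natCast_apply]) hL
  exact ⟨{ f with map_smul' := map_zsmul f, map_lie' := f_lie _ _ }⟩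

section CSet

variable {p n t : ℕ} [Fact p.Prime] {lam : Fin t → ℕ}
variable {K : Type} [LieRing K] [LieAlgebra (ZMod p) K] {σ : Module.End (ZMod p) K}

theorem isCentral_of_mem_cSet (hσ : σ ∈ CSet p n t lam K) : IsCentral σ :=
  ⟨hσ.2.1, fun x y => (hσ.2.2.1 x y).trans (hσ.2.1 x y)⟩

variable [Module.Finite (ZMod p) K]

theorem exists_isDigitBasis_of_mem_cSet (hσ : σ ∈ CSet p n t lam K) :
    ∃ a, IsDigitBasis p 0 lam σ a :=
  exists_isDigitBasis (n := n)
    (fun x => by rw [zero_smul, nsmul_eq_zero_of_zmod])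
    (fun x => by rw [hσ.1, LinearMap.zero_apply])
    (fun i => by rw [natCard_eq_pow_finrank (p := p), hσ.2.2.2])

theorem IsLieTwist.exists_lieEquiv_of_mem_cSet {K' : Type*} [LieRing K'] [LieAlgebra (ZMod p) K']
    {τ : Module.End (ZMod p) K'} {g : K ≃ K'} (hg : IsLieTwist σ τ g)
    (hσ : σ ∈ CSet p n t lam K) : ∃ F : K ≃ₗ⁅ZMod p⁆ K', ∀ x, F (σ x) = τ (F x) := by
  have := Module.finite_of_finite (ZMod p) (M := K)
  obtain ⟨a, ha⟩ := exists_isDigitBasis_of_mem_cSet hσ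
  obtain ⟨F, F_apply, F_lie⟩ := hg.exists_addEquiv ha (Fact.out : p.Prime).pos
    (fun x => by rw [zero_smul, nsmul_eq_zero_of_zmod]) (isCentral_of_mem_cSet hσ)
  exact ⟨{ F with map_smul' := ZMod.map_smul F, map_lie' := F_lie _ _ }, F_apply⟩

end CSet

/-- The correspondence between groups and pairs `(K, σ)`: the Lie ring `L` of `G` under the Lazard
correspondence is twisted into `K`, turning multiplication by `p` into `σ`. -/
def Corresponds (p n : ℕ) [Fact p.Prime] (G : Type*) [Group G] {K : Type*} [LieRing K]
    [Module (ZMod p) K] (σ : Module.End (ZMod p) K) : Prop :=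
  ∃ (L : Type) (_ : LieRing L) (_ : IsLazard p n L) (_ : G ≃* LazardGroup p n L) (E : L ≃ K),
    IsLieTwist (p : Module.End ℤ L) σ E ∧ IsCentral σ

namespace Corresponds

variable {p n t : ℕ} [Fact p.Prime] {lam : Fin t → ℕ} {G G' : Type*} [Group G] [Group G']

section LieRing

variable {K K' : Type*} [LieRing K] [LieAlgebra (ZMod p) K] [LieRing K'] [LieAlgebra (ZMod p) K']
  {σ : Module.End (ZMod p) K} {τ : Module.End (ZMod p) K'}

theorem congr (h : Corresponds p n G σ) (F : K ≃ₗ⁅ZMod p⁆ K') (hF : ∀ x, F (σ x) = τ (F x)) :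
    Corresponds p n G τ := by
  obtain ⟨L, _, _, e, E, hE, hσ⟩ := h
  have hF := IsLieTwist.of_addEquiv F.toLinearEquiv.toAddEquiv hF fun _ _ => F.map_lie _ _
  exact ⟨L, _, _, e, _, hE.trans hF, hF.isCentral hσ⟩

theorem natCard_eq (h : Corresponds p n G σ) : Nat.card G = Nat.card K := by
  obtain ⟨L, _, _, e, E, -⟩ := h
  exact Nat.card_congr ((e.toEquiv.trans LazardGroup.expEquiv.symm).trans E)

theorem natCard_pow_eq_one (h : Corresponds p n G σ) (i : ℕ) :
    Nat.card {x : G // x ^ p ^ i = 1} = Nat.card (LinearMap.ker (σ ^ i)) := by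
  obtain ⟨L, _, _, e, E, hE, -⟩ := h
  rw [natCard_pow_eq_one_of_mulEquiv e, hE.natCard_ker_pow]

end LieRing

variable {K K' : Type} [LieRing K] [LieAlgebra (ZMod p) K] [LieRing K'] [LieAlgebra (ZMod p) K']
  [Module.Finite (ZMod p) K] {σ : Module.End (ZMod p) K} {τ : Module.End (ZMod p) K'}

theorem pow_eq_zero (h : Corresponds p n G σ) (hK : Module.finrank (ZMod p) K = n) :
    σ ^ n = 0 := by
  have card_K : Nat.card K = p ^ n := by rw [natCard_eq_pow_finrank (p := p), hK]
  obtain ⟨L, _, _, -, E, hE, -⟩ := h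
  ext x
  rw [← E.apply_symm_apply x, ← hE.map_pow_apply, ← Nat.cast_pow, Module.End.natCast_apply,
    ← card_K, ← Nat.card_congr E, card_nsmul_eq_zero', hE.map_zero, LinearMap.zero_apply]

theorem isTyped_iff_mem_cSet (h : Corresponds p n G σ) (hK : Module.finrank (ZMod p) K = n) :
    IsTyped p lam n G ↔ σ ∈ CSet p n t lam K := by
  have natCard_iff (i : ℕ) : Nat.card {x : G // x ^ p ^ i = 1} = p ^ (∑ j, min (lam j) i) ↔
      Module.finrank (ZMod p) (LinearMap.ker (σ ^ i)) = ∑ j, min (lam j) i := by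
    rw [h.natCard_pow_eq_one, natCard_eq_pow_finrank (p := p),
      Nat.pow_right_inj (Fact.out : p.Prime).two_le]
  refine ⟨fun hG => ?_, fun hσ => ⟨?_, fun i => (natCard_iff i).2 (hσ.2.2.2 i), ?_⟩⟩
  · have pow_eq_zero := h.pow_eq_zero hK
    obtain ⟨-, -, -, -, -, -, hσ⟩ := h
    exact ⟨pow_eq_zero, hσ.lie_eq_zero,
      fun x y => (hσ.map_lie_eq_zero x y).trans (hσ.lie_eq_zero x y).symm,
      fun i => (natCard_iff i).1 (hG.2.1 i)⟩
  · rw [h.natCard_eq, natCard_eq_pow_finrank (p := p), hK]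
  · obtain ⟨L, _, _, e, E, hE, hσ⟩ := h
    exact (commutator_pow_eq_one_iff_of_mulEquiv e).2 (hE.symm.isCentral hσ)

theorem nonempty_mulEquiv_iff (h : Corresponds p n G σ) (h' : Corresponds p n G' τ)
    [Module.Finite (ZMod p) K'] (hσ : σ ∈ CSet p n t lam K) :
    Nonempty (G ≃* G') ↔ ∃ F : K ≃ₗ⁅ZMod p⁆ K', ∀ x, F (σ x) = τ (F x) := by
  obtain ⟨L, _, _, e, E, hE, -⟩ := h
  obtain ⟨L', _, _, e', E', hE', -⟩ := h'
  have := Module.finite_of_finite (ZMod p) (M := K)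
  have := Module.finite_of_finite (ZMod p) (M := K')
  have : Finite L := .of_equiv K E.symm
  have : Finite L' := .of_equiv K' E'.symm
  have mulEquiv_iff : Nonempty (G ≃* G') ↔ Nonempty (LazardGroup p n L ≃* LazardGroup p n L') :=
    ⟨fun ⟨f⟩ => ⟨(e.symm.trans f).trans e'⟩, fun ⟨f⟩ => ⟨(e.trans f).trans e'.symm⟩⟩
  rw [mulEquiv_iff, LazardGroup.nonempty_mulEquiv_iff]
  constructor
  · rintro ⟨f⟩
    have hf : IsLieTwist (p : Module.End ℤ L) (p : Module.End ℤ L') _ :=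
      .of_addEquiv f.toLinearEquiv.toAddEquiv (fun x => map_nsmul f p x) fun _ _ => f.map_lie _ _
    exact ((hE.symm.trans hf).trans hE').exists_lieEquiv_of_mem_cSet hσ
  · rintro ⟨F, hF⟩
    have hF := IsLieTwist.of_addEquiv F.toLinearEquiv.toAddEquiv hF fun _ _ => F.map_lie _ _
    obtain ⟨a, ha⟩ := exists_isDigitBasis_natCast (L := L) (p := p) (n := n) (lam := lam)
      (fun x => by
        rw [← hE.map_eq_zero_iff, ← Module.End.natCast_apply (R := ℤ), Nat.cast_pow,
          hE.map_pow_apply, hσ.1, LinearMap.zero_apply])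
      (fun i => by rw [hE.natCard_ker_pow, natCard_eq_pow_finrank (p := p), hσ.2.2.2])
    exact ((hE.trans hF).trans hE'.symm).nonempty_lieEquiv_int ha
      (hE.symm.isCentral (isCentral_of_mem_cSet hσ))

end Corresponds

section Existence

variable {p n t : ℕ} [Fact p.Prime] {lam : Fin t → ℕ}

theorem exists_corresponds_of_isTyped (hnp : n ≤ p) {G : Type*} [Group G]
    (hG : IsTyped p lam n G) :
    ∃ (K : Type) (_ : LieRing K) (_ : LieAlgebra (ZMod p) K) (σ : Module.End (ZMod p) K),
      Module.Finite (ZMod p) K ∧ Module.finrank (ZMod p) K = n ∧ LieRing.IsNilpotent K ∧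
        Corresponds p n G σ := by
  obtain ⟨L, _, _, ⟨e⟩⟩ := exists_mulEquiv_lazardGroup p n hnp le_rfl hG.1
  have card_L : Nat.card L = p ^ n :=
    (Nat.card_congr (e.toEquiv.trans LazardGroup.expEquiv.symm)).symm.trans hG.1
  have : Finite L := Nat.finite_of_card_ne_zero (by simp [card_L, (Fact.out : p.Prime).ne_zero])
  have hL := (commutator_pow_eq_one_iff_of_mulEquiv e).1 hG.2.2
  obtain ⟨a, ha⟩ := exists_isDigitBasis_natCast (L := L)
    (fun x => by rw [← card_L, card_nsmul_eq_zero'])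
    (fun i => by rw [← natCard_pow_eq_one_of_mulEquiv e, hG.2.1])
  obtain ⟨K, _, _, σ, E, hE⟩ := ha.exists_isLieTwist_lieAlgebra hL
  have : Finite K := .of_equiv L E
  have := IsLazard.isNilpotent (L := L) p n
  refine ⟨K, _, _, σ, .of_finite, ?_, isNilpotent_of_equiv E hE.map_lie, L, _, _, e, E, hE,
    hE.isCentral hL⟩
  rw [← Nat.pow_right_inj (Fact.out : p.Prime).two_le, ← natCard_eq_pow_finrank,
    ← Nat.card_congr E, card_L]

theorem exists_corresponds_of_mem_cSet (hnp : n ≤ p) {K : Type} [LieRing K]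
    [LieAlgebra (ZMod p) K] [Module.Finite (ZMod p) K] (hK : Module.finrank (ZMod p) K = n)
    [LieRing.IsNilpotent K] {σ : Module.End (ZMod p) K} (hσ : σ ∈ CSet p n t lam K) :
    ∃ (G : Type) (_ : Group G), Corresponds p n G σ := by
  obtain ⟨a, ha⟩ := exists_isDigitBasis_of_mem_cSet hσ
  obtain ⟨L, _, E, hE⟩ := ha.exists_isLieTwist_natCast (isCentral_of_mem_cSet hσ)
  have := isNilpotent_of_equiv E hE.map_lie
  have : IsLazard p n L := isLazard_of_card_eq
    (by rw [← Nat.card_congr E, natCard_eq_pow_finrank (p := p), hK]) hnp le_rfl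
  exact ⟨LazardGroup p n L, inferInstance, L, _, _, .refl _, E.symm, hE.symm,
    isCentral_of_mem_cSet hσ⟩

end Existence

/-! ### Counting isomorphism classes -/

section Counting

theorem natCard_eq_sum_inv_natCard_fiber {X Y : Type*} [Fintype X] {f : X → Y}
    (hf : Function.Surjective f) : (Nat.card Y : ℚ) = ∑ x, (1 : ℚ) / Nat.card {y // f x = f y} := by
  classical
  have : Finite Y := .of_surjective f hf
  let _ := Fintype.ofFinite Y
  rw [← sum_fiberwise univ f, Nat.card_eq_fintype_card, Fintype.card_eq_sum_ones, Nat.cast_sum]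
  refine sum_congr rfl fun y _ => ?_
  have sum_fiber : ∑ x with f x = y, (1 : ℚ) / Nat.card {x' // f x = f x'} =
      ∑ x with f x = y, (1 : ℚ) / #{x | f x = y} := sum_congr rfl fun x hx => by
    rw [(mem_filter.1 hx).2, Nat.card_eq_fintype_card, Fintype.card_subtype]
    simp_rw [eq_comm]
  obtain ⟨x, hx⟩ := hf y
  have card_ne_zero : (#{x | f x = y} : ℚ) ≠ 0 :=
    Nat.cast_ne_zero.2 (card_ne_zero_of_mem (mem_filter.2 ⟨mem_univ x, hx⟩))
  rw [sum_fiber, sum_const, nsmul_eq_mul, mul_one_div_cancel card_ne_zero, Nat.cast_one]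

end Counting

section Conjugacy

variable {p n t : ℕ} {lam : Fin t → ℕ}

theorem mem_lieAutOrbit_iff {K : Type} [LieRing K] [LieAlgebra (ZMod p) K]
    {σ τ : Module.End (ZMod p) K} :
    τ ∈ lieAutOrbit p K σ ↔ ∃ α : K ≃ₗ⁅ZMod p⁆ K, ∀ x, α (σ x) = τ (α x) :=
  exists_congr fun α =>
    ⟨fun h x => by rw [h, LieEquiv.symm_apply_apply], fun h x => by
      rw [h, LieEquiv.apply_symm_apply]⟩

theorem mem_cSet_of_lieEquiv [Fact p.Prime] {K K' : Type} [LieRing K] [LieAlgebra (ZMod p) K]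
    [Module.Finite (ZMod p) K] [LieRing K'] [LieAlgebra (ZMod p) K'] [Module.Finite (ZMod p) K']
    {σ : Module.End (ZMod p) K} {τ : Module.End (ZMod p) K'} (hσ : σ ∈ CSet p n t lam K)
    (F : K ≃ₗ⁅ZMod p⁆ K') (hF : ∀ x, F (σ x) = τ (F x)) : τ ∈ CSet p n t lam K' := by
  have hF : IsLieTwist σ τ F.toLinearEquiv.toAddEquiv.toEquiv :=
    .of_addEquiv _ hF fun _ _ => F.map_lie _ _
  have hτ := hF.isCentral (isCentral_of_mem_cSet hσ)
  refine ⟨?_, hτ.lie_eq_zero, fun x y => (hτ.map_lie_eq_zero x y).trans (hτ.lie_eq_zero x y).symm,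
    fun i => ?_⟩
  · ext y
    obtain ⟨x, rfl⟩ := F.surjective y
    exact (hF.map_pow_apply n x).symm.trans (by rw [hσ.1, LinearMap.zero_apply, hF.map_zero]; rfl)
  · rw [← Nat.pow_right_inj (Fact.out : p.Prime).two_le, ← natCard_eq_pow_finrank,
      ← hF.natCard_ker_pow, natCard_eq_pow_finrank (p := p), hσ.2.2.2]

end Conjugacy

theorem equivalence_typedGroupIsoRel (p n t : ℕ) (lam : Fin t → ℕ) :
    Equivalence (typedGroupIsoRel p n t lam) where
  refl q := ⟨@MulEquiv.refl _ q.1.2.toMul⟩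
  symm {q q'} := fun ⟨e⟩ => let _ := q.1.2; let _ := q'.1.2; ⟨e.symm⟩
  trans {q q' q''} := fun ⟨e⟩ ⟨e'⟩ =>
    let _ := q.1.2; let _ := q'.1.2; let _ := q''.1.2; ⟨e.trans e'⟩

section Transversal

variable {p n t : ℕ} [Fact p.Prime] {lam : Fin t → ℕ} {ι : Type*} {K : ι → Type}
  [∀ i, LieRing (K i)] [∀ i, LieAlgebra (ZMod p) (K i)] [∀ i, Module.Finite (ZMod p) (K i)]

theorem natCard_isoClass_eq_natCard_lieAutOrbit
    (htransv : ∀ i j, Nonempty (K i ≃ₗ⁅ZMod p⁆ K j) → i = j)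
    (i : ι) (σ : CSet p n t lam (K i)) :
    Nat.card {y : Σ i, CSet p n t lam (K i) //
        ∃ F : K i ≃ₗ⁅ZMod p⁆ K y.1, ∀ z, F (σ.1 z) = y.2.1 (F z)} =
      Nat.card (lieAutOrbit p (K i) σ.1) := by
  have mem_cSet (τ : lieAutOrbit p (K i) σ.1) : τ.1 ∈ CSet p n t lam (K i) := by
    obtain ⟨α, hα⟩ := mem_lieAutOrbit_iff.1 τ.2
    exact mem_cSet_of_lieEquiv σ.2 α hα
  refine (Nat.card_eq_of_bijective
    (fun τ => ⟨⟨i, τ.1, mem_cSet τ⟩, mem_lieAutOrbit_iff.1 τ.2⟩) ⟨fun τ τ' h => ?_, ?_⟩).symm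
  · simpa [Subtype.ext_iff] using h
  · rintro ⟨⟨j, τ⟩, F, hF⟩
    obtain rfl := htransv i j ⟨F⟩
    exact ⟨⟨τ.1, mem_lieAutOrbit_iff.2 ⟨F, hF⟩⟩, rfl⟩

theorem exists_surjective_quot_typedGroupIsoRel (hnp : n ≤ p)
    (hdim : ∀ i, Module.finrank (ZMod p) (K i) = n) (hnilp : ∀ i, LieRing.IsNilpotent (K i))
    (hcomplete : ∀ (M : Type) (_ : LieRing M) (_ : LieAlgebra (ZMod p) M),
      Module.Finite (ZMod p) M → Module.finrank (ZMod p) M = n →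
      LieRing.IsNilpotent M → ∃ i : ι, Nonempty (M ≃ₗ⁅ZMod p⁆ K i)) :
    ∃ f : (Σ i, CSet p n t lam (K i)) → Quot (typedGroupIsoRel p n t lam),
      Function.Surjective f ∧
        ∀ x y, f x = f y ↔ ∃ F : K x.1 ≃ₗ⁅ZMod p⁆ K y.1, ∀ z, F (x.2.1 z) = y.2.1 (F z) := by
  have exists_group (x : Σ i, CSet p n t lam (K i)) :
      ∃ q : TypedGroup p n t lam, let _ := q.1.2; Corresponds p n q.1.1 x.2.1 := by
    obtain ⟨G, _, hG⟩ := exists_corresponds_of_mem_cSet hnp (hdim x.1) x.2.2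
    exact ⟨⟨⟨G, _⟩, (hG.isTyped_iff_mem_cSet (hdim x.1)).2 x.2.2⟩, hG⟩
  choose q hq using exists_group
  refine ⟨fun x => Quot.mk _ (q x), fun y => ?_, fun x y => ?_⟩
  · obtain ⟨⟨⟨G, _⟩, hG⟩, rfl⟩ := Quot.exists_rep y
    obtain ⟨M, _, _, σ, hM, hM_dim, hM_nilp, hGσ⟩ := exists_corresponds_of_isTyped hnp hG
    obtain ⟨i, ⟨e⟩⟩ := hcomplete M _ _ hM hM_dim hM_nilp
    have hGτ := hGσ.congr (τ := e.toLinearEquiv.conj σ) e fun x =>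
      congrArg (e ∘ σ) (e.symm_apply_apply x).symm
    have hτ := (hGτ.isTyped_iff_mem_cSet (hdim i)).1 hG
    refine ⟨⟨i, _, hτ⟩, Quot.sound ?_⟩
    let _ := (q ⟨i, _, hτ⟩).1.2
    exact ((hq ⟨i, _, hτ⟩).nonempty_mulEquiv_iff hGτ hτ).2 ⟨.refl, fun _ => rfl⟩
  · let _ := (q x).1.2
    let _ := (q y).1.2
    rw [(equivalence_typedGroupIsoRel p n t lam).quot_mk_eq_iff]
    exact (hq x).nonempty_mulEquiv_iff (hq y) x.2.2

end Transversal

end Lazard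

/-- Let `p ≥ n` with `p` prime, `λ` a partition of `n`, and `K : ι → Type` a transversal for the
isomorphism classes of nilpotent `n`-dimensional `ℤ/pℤ`-Lie algebras.  Then the number of
isomorphism classes of groups of order `p ^ n` of type `λ` in which `⁅x, y⁆ ^ p = 1` equals
`∑_{K} ∑_{σ ∈ C(K, λ)} 1 / |σ^{Aut_Lie(K)}|`. -/
theorem count_formula_typed (p n t : ℕ) (hp : p.Prime) (hn : 1 ≤ n) (hpn : n ≤ p)
    (lam : Fin t → ℕ) (hmono : Antitone lam) (hpos : ∀ j, 1 ≤ lam j)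
    (hsum : ∑ j, lam j = n)
    (ι : Type) [Fintype ι] (K : ι → Type)
    [∀ i, LieRing (K i)] [∀ i, LieAlgebra (ZMod p) (K i)]
    [∀ i, Module.Finite (ZMod p) (K i)]
    (hdim : ∀ i, Module.finrank (ZMod p) (K i) = n)
    (hnilp : ∀ i, LieRing.IsNilpotent (K i))
    (htransv : ∀ i j : ι, Nonempty (K i ≃ₗ⁅ZMod p⁆ K j) → i = j)
    (hcomplete : ∀ (M : Type) (_ : LieRing M) (_ : LieAlgebra (ZMod p) M),
      Module.Finite (ZMod p) M → Module.finrank (ZMod p) M = n →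
      LieRing.IsNilpotent M → ∃ i : ι, Nonempty (M ≃ₗ⁅ZMod p⁆ K i)) :
    (Nat.card (Quot (typedGroupIsoRel p n t lam)) : ℚ) =
      ∑ i : ι, ∑ᶠ σ ∈ CSet p n t lam (K i), (1 : ℚ) / (Nat.card (lieAutOrbit p (K i) σ)) := by
  have : Fact p.Prime := ⟨hp⟩
  have (i : ι) : Finite (K i) := Module.finite_of_finite (ZMod p)
  have (i : ι) : Finite (Module.End (ZMod p) (K i)) := .of_injective _ DFunLike.coe_injective
  have (i : ι) := Fintype.ofFinite (CSet p n t lam (K i))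
  obtain ⟨f, hf, hf_eq⟩ :=
    Lazard.exists_surjective_quot_typedGroupIsoRel (lam := lam) hpn hdim hnilp hcomplete
  rw [Lazard.natCard_eq_sum_inv_natCard_fiber hf, Fintype.sum_sigma]
  refine Finset.sum_congr rfl fun i _ => ?_
  rw [← finsum_set_coe_eq_finsum_mem, finsum_eq_sum_of_fintype]
  refine Finset.sum_congr rfl fun σ _ => ?_
  simp_rw [hf_eq]
  rw [Lazard.natCard_isoClass_eq_natCard_lieAutOrbit htransv i σ]
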